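/- arXiv:0907.2730 — 3 statements merged into one kernel-verified Lean document; each statement's English description precedes it below -/
import Mathlib

section
/- Let k ≥ 3 be an integer. The 2-strand braid group of the star graph Y_k, i.e., the fundamental group of the unordered configuration space UC²(Y_k) at any basepoint, is isomorphic to the free group on (k−1)(k−2)/2 generators, FreeGroup (Fin ((k−1)(k−2)/2)). -/
/-- The ordered configuration space of `n` points on `X`. -/
abbrev Conf (n : ℕ) (X : Type*) [TopologicalSpace X] : Type _ :=
  {f : Fin n → X // Function.Injective f}

/-- Two configurations are equivalent iff they differ by a permutation of coordinates. -/
def confSetoid (n : ℕ) (X : Type*) [TopologicalSpace X] : Setoid (Conf n X) where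
  r f g := ∃ σ : Equiv.Perm (Fin n), (f : Fin n → X) = (g : Fin n → X) ∘ σ
  iseqv := by
    refine ⟨fun f => ⟨Equiv.refl _, rfl⟩, ?_, ?_⟩
    · rintro f g ⟨σ, h⟩
      exact ⟨σ.symm, funext fun x => by simp [h, Function.comp]⟩
    · rintro f g h ⟨σ, hfg⟩ ⟨τ, hgh⟩
      exact ⟨σ.trans τ, funext fun x => by simp [hfg, hgh, Function.comp]⟩

/-- The unordered configuration space of `n` points on `X`, with the quotient topology. -/
abbrev UConf (n : ℕ) (X : Type*) [TopologicalSpace X] : Type _ :=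
  Quotient (confSetoid n X)

/-- The star graph `Y_k`: the union of the `k` straight segments in `ℂ` joining `0`
to the `k`-th roots of unity. -/
def starGraph (k : ℕ) : Set ℂ :=
  ⋃ j : Fin k, segment ℝ 0 (Complex.exp (2 * Real.pi * Complex.I * (j : ℕ) / (k : ℕ)))

/-- An open cover by simply connected sets with path connected pairwise intersections and
empty triple intersections. -/
structure NerveCover (X : Type*) [TopologicalSpace X] (ι : Type*) where
  U : ι → Set X
  isOpen : ∀ i, IsOpen (U i)
  idx : X → ι
  mem_idx : ∀ x, x ∈ U (idx x)
  sc : ∀ i, SimplyConnectedSpace (U i)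
  pc : ∀ i j, i ≠ j → IsPathConnected (U i ∩ U j)
  tri : ∀ i j l x, x ∈ U i → x ∈ U j → x ∈ U l → i = j ∨ j = l ∨ i = l

namespace NerveCover

open CategoryTheory

universe u v

variable {X : Type u} [TopologicalSpace X] {ι : Type*} (N : NerveCover X ι)

section cover

variable {F : Type v} [Group F] [TopologicalSpace F] [DiscreteTopology F]

/-- The bundle given by a locally constant cocycle. -/
def core (c : ι → ι → F) (h1 : ∀ i, c i i = 1) (h2 : ∀ i j, c j i * c i j = 1) :
    FiberBundleCore ι X F where
  baseSet := N.U
  isOpen_baseSet := N.isOpen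
  indexAt := N.idx
  mem_baseSet_at := N.mem_idx
  coordChange i j _ f := c i j * f
  coordChange_self i _ _ v := by simp [h1]
  continuousOn_coordChange i j :=
    ((continuous_of_discreteTopology (f := fun f : F => c i j * f)).comp
      continuous_snd).continuousOn
  coordChange_comp i j l x hx v := by
    rw [← mul_assoc]
    congr 1
    rcases N.tri i j l x hx.1.1 hx.1.2 hx.2 with h | h | h
    · subst h; simp [h1]
    · subst h; simp [h1]
    · subst h; simp [h1, h2]

theorem exists_cover (c : ι → ι → F) (h1 : ∀ i, c i i = 1) (h2 : ∀ i j, c j i * c i j = 1) :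
    ∃ (E : Type (max u v)) (_ : TopologicalSpace E) (p : E → X) (cov : IsCoveringMap p)
      (s : ∀ i x, x ∈ N.U i → F → p ⁻¹' {x}),
      (∀ i x hx, Function.Injective (s i x hx)) ∧
      (∀ i j x hi hj f, s i x hi f = s j x hj (c i j * f)) ∧
      (∀ i x y hx hy (γ : Path x y), (∀ t, γ t ∈ N.U i) → ∀ f,
        cov.monodromy (.mk γ) (s i x hx f) = s i y hy f) := by
  let Z := N.core c h1 h2
  have cov : IsCoveringMap Z.proj := FiberBundle.isCoveringMap
  refine ⟨Z.TotalSpace, inferInstance, Z.proj, cov,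
    fun i x hx f => ⟨(Z.localTriv i).toOpenPartialHomeomorph.symm (x, f), ?_⟩, ?_, ?_, ?_⟩
  · rfl
  · intro i x hx f g h
    have h' := congrArg Subtype.val h
    have := (Z.localTriv i).toOpenPartialHomeomorph.symm.injOn (x₁ := (x, f)) (x₂ := (x, g))
      ((Z.mem_localTriv_target i _).2 hx) ((Z.mem_localTriv_target i _).2 hx) h'
    simpa using this
  · intro i j x hi hj f
    apply Subtype.ext
    refine congrArg (fun v : F => (⟨x, v⟩ : Z.TotalSpace)) ?_
    exact (Z.coordChange_comp i j (Z.indexAt x) x ⟨⟨hi, hj⟩, Z.mem_baseSet_at x⟩ f).symm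
  · intro i x y hx hy γ hγ f
    have hc : Continuous fun t => (Z.localTriv i).toOpenPartialHomeomorph.symm (γ t, f) := by
      refine (Z.localTriv i).toOpenPartialHomeomorph.continuousOn_symm.comp_continuous
        (by fun_prop) fun t => ?_
      exact (Z.mem_localTriv_target i _).2 (hγ t)
    refine cov.monodromy_eq_of_map_eq
      (ex := ⟨(Z.localTriv i).toOpenPartialHomeomorph.symm (x, f), rfl⟩)
      (ey := ⟨(Z.localTriv i).toOpenPartialHomeomorph.symm (y, f), rfl⟩)
      (.mk ⟨⟨_, hc⟩, by simp, by simp⟩) ?_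
    refine congrArg Path.Homotopic.Quotient.mk ?_
    ext t
    rfl

end cover

/-- A path in `U i` between two points. -/
noncomputable def loc (i : ι) {x y : X} (hx : x ∈ N.U i) (hy : y ∈ N.U i) :
    FundamentalGroupoid.mk x ⟶ FundamentalGroupoid.mk y :=
  haveI := N.sc i
  Path.Homotopic.Quotient.mk ((PathConnectedSpace.somePath (⟨x, hx⟩ : N.U i) ⟨y, hy⟩).map
    continuous_subtype_val)

theorem loc_eq (i : ι) {x y : X} (hx : x ∈ N.U i) (hy : y ∈ N.U i) (γ : Path x y)
    (hγ : ∀ t, γ t ∈ N.U i) : N.loc i hx hy = Path.Homotopic.Quotient.mk γ := by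
  have := N.sc i
  let γ' : Path (⟨x, hx⟩ : N.U i) ⟨y, hy⟩ :=
    ⟨⟨fun t => ⟨γ t, hγ t⟩, by fun_prop⟩, by simp, by simp⟩
  have h := (SimplyConnectedSpace.paths_homotopic
    (PathConnectedSpace.somePath (⟨x, hx⟩ : N.U i) ⟨y, hy⟩) γ').map ⟨_, continuous_subtype_val⟩
  exact Path.Homotopic.Quotient.eq.2 h

theorem exists_path (i : ι) {x y : X} (hx : x ∈ N.U i) (hy : y ∈ N.U i) :
    ∃ γ : Path x y, ∀ t, γ t ∈ N.U i := by
  have := N.sc i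
  exact ⟨(PathConnectedSpace.somePath (⟨x, hx⟩ : N.U i) ⟨y, hy⟩).map
    continuous_subtype_val, fun t => Subtype.coe_prop _⟩

@[simp] theorem loc_self (i : ι) {x : X} (hx : x ∈ N.U i) : N.loc i hx hx = 𝟙 _ :=
  N.loc_eq i hx hx (Path.refl x) fun _ => hx

theorem loc_comp (i : ι) {x y z : X} (hx : x ∈ N.U i) (hy : y ∈ N.U i) (hz : z ∈ N.U i) :
    N.loc i hx hy ≫ N.loc i hy hz = N.loc i hx hz := by
  obtain ⟨γ, hγ⟩ := N.exists_path i hx hy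
  obtain ⟨γ', hγ'⟩ := N.exists_path i hy hz
  rw [N.loc_eq i hx hy γ hγ, N.loc_eq i hy hz γ' hγ', N.loc_eq i hx hz (γ.trans γ')]
  · rfl
  · intro t
    have : γ.trans γ' t ∈ Set.range (γ.trans γ') := ⟨t, rfl⟩
    rw [Path.trans_range] at this
    rcases this with ⟨s, hs⟩ | ⟨s, hs⟩
    · rw [← hs]; exact hγ s
    · rw [← hs]; exact hγ' s

theorem loc_eq_loc {i j : ι} (hij : i ≠ j) {x y : X} (hxi : x ∈ N.U i) (hyi : y ∈ N.U i)
    (hxj : x ∈ N.U j) (hyj : y ∈ N.U j) : N.loc i hxi hyi = N.loc j hxj hyj := by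
  obtain ⟨γ, hγ⟩ := (N.pc i j hij).joinedIn x ⟨hxi, hxj⟩ y ⟨hyi, hyj⟩
  rw [N.loc_eq i hxi hyi γ fun t => (hγ t).1, N.loc_eq j hxj hyj γ fun t => (hγ t).2]

theorem exists_base (i : ι) : ∃ x, x ∈ N.U i := by
  have := N.sc i
  obtain ⟨x⟩ : Nonempty (N.U i) := inferInstance
  exact ⟨x, x.2⟩

/-- basepoint -/
noncomputable def b (i : ι) : X := (N.exists_base i).choose
theorem hb (i : ι) : N.b i ∈ N.U i := (N.exists_base i).choose_spec

theorem exists_q (i j : ι) : ∃ x, x ∈ N.U i ∧ x ∈ N.U j := by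
  by_cases h : i = j
  · subst h; exact ⟨_, N.hb i, N.hb i⟩
  · exact (N.pc i j h).nonempty

/-- intersection point -/
noncomputable def q (i j : ι) : X := (N.exists_q i j).choose
theorem hq1 (i j : ι) : N.q i j ∈ N.U i := (N.exists_q i j).choose_spec.1
theorem hq2 (i j : ι) : N.q i j ∈ N.U j := (N.exists_q i j).choose_spec.2

variable (o : ι)

/-- Path from the base point to `x ∈ U i` -/
noncomputable def h (i : ι) {x : X} (hx : x ∈ N.U i) :
    FundamentalGroupoid.mk (N.b o) ⟶ FundamentalGroupoid.mk x :=
  N.loc o (N.hb o) (N.hq1 o i) ≫ N.loc i (N.hq2 o i) hx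

theorem h_loc (i : ι) {x y : X} (hx : x ∈ N.U i) (hy : y ∈ N.U i) :
    N.h o i hx ≫ N.loc i hx hy = N.h o i hy := by
  simp [h, N.loc_comp]

theorem h_o {x : X} (hx : x ∈ N.U o) : N.h o o hx = N.loc o (N.hb o) hx := by
  simp [h, N.loc_comp]

/-- transition loop -/
noncomputable def g (i j : ι) {x : X} (hi : x ∈ N.U i) (hj : x ∈ N.U j) :
    FundamentalGroup X (N.b o) :=
  N.h o i hi ≫ Groupoid.inv (N.h o j hj)

theorem g_eq (i j : ι) {x y : X} (hi : x ∈ N.U i) (hj : x ∈ N.U j)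
    (hi' : y ∈ N.U i) (hj' : y ∈ N.U j) : N.g o i j hi hj = N.g o i j hi' hj' := by
  by_cases hij : i = j
  · subst hij; simp [g]
  · simp only [g]
    rw [← N.h_loc o i hi hi', ← N.h_loc o j hj hj', N.loc_eq_loc hij hi hi' hj hj']
    simp

theorem g_self (i : ι) {x : X} (hi : x ∈ N.U i) : N.g o i i hi hi = 1 := by
  simp [g]

theorem g_o (j : ι) {x : X} (hi : x ∈ N.U o) (hj : x ∈ N.U j) : N.g o o j hi hj = 1 := by
  rw [N.g_eq o o j hi hj (N.hq1 o j) (N.hq2 o j), g, h_o, h]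
  simp

theorem g_symm (i j : ι) {x : X} (hi : x ∈ N.U i) (hj : x ∈ N.U j) :
    N.g o i j hi hj = (N.g o j i hj hi)⁻¹ := by
  rw [eq_inv_iff_mul_eq_one]
  change (N.h o j hj ≫ Groupoid.inv (N.h o i hi)) ≫ (N.h o i hi ≫ Groupoid.inv (N.h o j hj)) = 𝟙 _
  simp

theorem mem_of_eq_aux {G : Type*} [Group G] (H : Subgroup G) {a b : G} (e : a = b) (h : b ∈ H) :
    a ∈ H := e ▸ h

/-- All paths are products of transition loops. -/
theorem path_mem (H : Subgroup (FundamentalGroup X (N.b o)))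
    (hH : ∀ i j x (hi : x ∈ N.U i) (hj : x ∈ N.U j), N.g o i j hi hj ∈ H)
    {x y : X} (γ : Path x y) (i j : ι) (hi : x ∈ N.U i) (hj : y ∈ N.U j) :
    (N.h o i hi ≫ (Path.Homotopic.Quotient.mk γ : FundamentalGroupoid.mk x ⟶ .mk y) ≫
      Groupoid.inv (N.h o j hj) : FundamentalGroup X (N.b o)) ∈ H := by
  obtain ⟨t, t0, tm, ⟨n, hn⟩, ht⟩ := exists_monotone_Icc_subset_open_cover_unitInterval
    (c := fun i => γ ⁻¹' (N.U i)) (fun i => (N.isOpen i).preimage γ.continuous)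
    (fun s _ => Set.mem_iUnion.2 ⟨N.idx (γ s), N.mem_idx _⟩)
  have key : ∀ m (i j : ι) (hi : γ 0 ∈ N.U i) (hj : γ (t m) ∈ N.U j),
      (N.h o i hi ≫ (Path.Homotopic.Quotient.mk (γ.subpath 0 (t m)) :
        FundamentalGroupoid.mk _ ⟶ .mk _) ≫
        Groupoid.inv (N.h o j hj) : FundamentalGroup X (N.b o)) ∈ H := by
    intro m
    induction m with
    | zero =>
      rw [t0]
      intro i j hi hj
      rw [Path.subpath_self]
      have := hH i j _ hi hj
      refine mem_of_eq_aux H ?_ this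
      change _ ≫ 𝟙 _ ≫ _ = _ ≫ _
      simp
    | succ m ih =>
      intro i j hi hj
      obtain ⟨l, hl⟩ := ht m
      have hm : γ (t m) ∈ N.U l := hl ⟨le_rfl, tm m.le_succ⟩
      have hm' : γ (t (m+1)) ∈ N.U l := hl ⟨tm m.le_succ, le_rfl⟩
      have e1 : (Path.Homotopic.Quotient.mk (γ.subpath 0 (t (m+1))) :
          FundamentalGroupoid.mk _ ⟶ .mk _) =
          (Path.Homotopic.Quotient.mk (γ.subpath 0 (t m)) :
            FundamentalGroupoid.mk _ ⟶ .mk _) ≫ N.loc l hm hm' := by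
        rw [N.loc_eq l hm hm' (γ.subpath (t m) (t (m+1)))]
        · exact (Path.Homotopic.Quotient.eq.2 ⟨Path.Homotopy.subpathTransSubpath γ _ _ _⟩).symm
        · intro s
          have hs : γ.subpath (t m) (t (m+1)) s ∈ Set.range (γ.subpath (t m) (t (m+1))) := ⟨s, rfl⟩
          rw [Path.range_subpath_of_le _ _ _ (tm m.le_succ)] at hs
          obtain ⟨r, hr, e⟩ := hs
          rw [← e]; exact hl hr
      have := H.mul_mem (hH l j _ hm' hj) (ih i l hi hm)
      refine mem_of_eq_aux H ?_ this
      change _ = (_ ≫ _) ≫ (_ ≫ _)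
      rw [e1, ← N.h_loc o l hm hm']
      simp
  have k := key n
  rw [hn n le_rfl] at k
  have k2 := k i j (by simpa using hi) (by simpa using hj)
  rw [Path.subpath_zero_one] at k2
  revert k2
  generalize_proofs p1 p2 p3 p4
  revert p1 p2 p3 p4
  generalize hu : γ 0 = u
  generalize hv : γ 1 = v
  have hu' : u = x := by rw [← hu]; simp
  have hv' : v = y := by rw [← hv]; simp
  subst hu' hv'
  intro p1 p2 p3 p4 k2
  exact k2

section main

variable [LinearOrder ι]

/-- index set of generators -/
abbrev Gen (o : ι) : Type _ := {p : ι × ι // o < p.1 ∧ p.1 < p.2}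

open Classical in
/-- The tautological cocycle. -/
noncomputable def coc (o i j : ι) : FreeGroup (Gen o) :=
  if h : o < i ∧ i < j then FreeGroup.of ⟨(i, j), h⟩
  else if h : o < j ∧ j < i then (FreeGroup.of ⟨(j, i), h⟩)⁻¹
  else 1

theorem coc_self (i : ι) : coc o i i = 1 := by simp [coc]

theorem coc_of (a : Gen o) : coc o a.1.1 a.1.2 = FreeGroup.of a := by
  rw [coc, dif_pos a.2]

theorem coc_mul (i j : ι) : coc o j i * coc o i j = 1 := by
  unfold coc
  by_cases h : o < i ∧ i < j
  · rw [dif_pos h, dif_neg (fun h' => lt_asymm h.2 h'.2), dif_pos h]; simp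
  · by_cases h' : o < j ∧ j < i
    · rw [dif_pos h', dif_neg h, dif_pos h']; simp
    · rw [dif_neg h, dif_neg h', dif_neg h', dif_neg h]; simp

theorem coc_o (ho : ∀ i, o ≤ i) (j : ι) : coc o o j = 1 := by
  unfold coc
  rw [dif_neg (by simp), dif_neg (fun h => absurd h.2 (ho j).not_gt)]

/-- The comparison homomorphism. -/
noncomputable def psi : FreeGroup (Gen o) →* FundamentalGroup X (N.b o) :=
  FreeGroup.lift fun a => N.g o a.1.1 a.1.2 (N.hq1 _ _) (N.hq2 a.1.1 a.1.2)

theorem psi_of (a : Gen o) : N.psi o (FreeGroup.of a) =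
    N.g o a.1.1 a.1.2 (N.hq1 _ _) (N.hq2 a.1.1 a.1.2) := by
  simp [psi]

theorem g_mem (ho : ∀ i, o ≤ i) (i j : ι) (x : X) (hi : x ∈ N.U i) (hj : x ∈ N.U j) :
    N.g o i j hi hj ∈ (N.psi o).range := by
  have key : ∀ i j x (hi : x ∈ N.U i) (hj : x ∈ N.U j), i < j →
      N.g o i j hi hj ∈ (N.psi o).range := by
    intro i j x hi hj hij
    rcases (ho i).eq_or_lt with h | h
    · subst h; rw [g_o]; exact one_mem _
    · exact ⟨FreeGroup.of ⟨(i, j), h, hij⟩, by rw [psi_of]; exact N.g_eq ..⟩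
  rcases lt_trichotomy i j with h | h | h
  · exact key _ _ _ _ _ h
  · subst h; rw [g_self]; exact one_mem _
  · rw [g_symm]; exact inv_mem (key _ _ _ _ _ h)

theorem psi_surjective (ho : ∀ i, o ≤ i) : Function.Surjective (N.psi o) := by
  intro a
  obtain ⟨γ, rfl⟩ := Path.Homotopic.Quotient.mk_surjective a
  have := N.path_mem o (N.psi o).range (N.g_mem o ho) γ o o (N.hb o) (N.hb o)
  rw [h_o, loc_self] at this
  obtain ⟨w, hw⟩ := this
  refine ⟨w, hw.trans ?_⟩
  change 𝟙 _ ≫ _ ≫ Groupoid.inv (𝟙 _) = _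
  simp

theorem psi_injective (ho : ∀ i, o ≤ i) : Function.Injective (N.psi o) := by
  let _ : TopologicalSpace (FreeGroup (Gen o)) := ⊥
  have : DiscreteTopology (FreeGroup (Gen o)) := ⟨rfl⟩
  obtain ⟨E, _, p, cov, s, s1, s2, s3⟩ := N.exists_cover (coc o) (coc_self o) (coc_mul o)
  have mloc : ∀ i {x y : X} (hx : x ∈ N.U i) (hy : y ∈ N.U i) f,
      cov.monodromy (N.loc i hx hy) (s i x hx f) = s i y hy f := by
    intro i x y hx hy f
    obtain ⟨γ, hγ⟩ := N.exists_path i hx hy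
    rw [N.loc_eq i hx hy γ hγ]
    exact s3 i x y hx hy γ hγ f
  have mh : ∀ i {x : X} (hx : x ∈ N.U i) f,
      cov.monodromy (N.h o i hx) (s o _ (N.hb o) f) = s i x hx f := by
    intro i x hx f
    refine (cov.monodromy_trans_apply (N.loc o (N.hb o) (N.hq1 o i))
      (N.loc i (N.hq2 o i) hx) _).trans ?_
    rw [mloc, s2 o i _ (N.hq1 o i) (N.hq2 o i), mloc, coc_o o ho, one_mul]
  have mg : ∀ i j {x : X} (hi : x ∈ N.U i) (hj : x ∈ N.U j) f,
      cov.monodromy (N.g o i j hi hj) (s o _ (N.hb o) f) = s o _ (N.hb o) (coc o i j * f) := by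
    intro i j x hi hj f
    refine (cov.monodromy_trans_apply (N.h o i hi) (Groupoid.inv (N.h o j hj)) _).trans ?_
    apply (cov.monodromy_bijective (N.h o j hj)).1
    rw [mh, ← cov.monodromy_trans_apply, mh, s2 i j x hi hj]
    have : Path.Homotopic.Quotient.trans (Groupoid.inv (N.h o j hj)) (N.h o j hj) = .refl _ :=
      Groupoid.inv_comp (N.h o j hj)
    rw [this, cov.monodromy_refl]
    rfl
  have mp : ∀ w f, cov.monodromyPerm _ (N.psi o w) (s o _ (N.hb o) f) =
      s o _ (N.hb o) (w * f) := by
    intro w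
    induction w using FreeGroup.induction_on with
    | C1 => intro f; rw [map_one, map_one, one_mul]; rfl
    | of a =>
      intro f
      rw [psi_of, ← coc_of]
      exact mg _ _ _ _ _
    | inv_of a ih =>
      intro f
      rw [map_inv, map_inv, Equiv.Perm.inv_eq_iff_eq, ih]
      simp
    | mul a b iha ihb =>
      intro f
      rw [map_mul, map_mul, Equiv.Perm.mul_apply, ihb, iha, mul_assoc]
  rw [injective_iff_map_eq_one]
  intro w hw
  have := mp w 1
  rw [hw, map_one] at this
  simpa using (s1 _ _ _ this).symm

theorem pathConnectedSpace (N : NerveCover X ι) (o : ι) : PathConnectedSpace X := by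
  have key : ∀ x, Joined x (N.b o) := by
    intro x
    have := Path.Homotopic.Quotient.mk_surjective (N.h o _ (N.mem_idx x))
    exact ⟨this.choose.symm⟩
  exact ⟨⟨N.b o⟩, fun x y => (key x).trans (key y).symm⟩

theorem nonempty_mulEquiv (N : NerveCover X ι) (o : ι) (ho : ∀ i, o ≤ i) (x : X) :
    Nonempty (FundamentalGroup X x ≃* FreeGroup (Gen o)) := by
  have := N.pathConnectedSpace o
  exact ⟨(FundamentalGroup.fundamentalGroupMulEquivOfPathConnected x (N.b o)).trans
    (MulEquiv.ofBijective (N.psi o) ⟨N.psi_injective o ho, N.psi_surjective o ho⟩).symm⟩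

end main

end NerveCover

namespace StarBraid

/-- End points of the legs. -/
noncomputable def om (k : ℕ) (j : Fin k) : ℂ :=
  Complex.exp (2 * Real.pi * Complex.I * (j : ℕ) / (k : ℕ))

theorem norm_om (k : ℕ) (j : Fin k) : ‖om k j‖ = 1 := by
  have : om k j = Complex.exp (((2 * Real.pi * (j : ℕ) / (k : ℕ) : ℝ) : ℂ) * Complex.I) := by
    unfold om; congr 1; push_cast; ring
  rw [this, Complex.norm_exp_ofReal_mul_I]

theorem om_injective (k : ℕ) : Function.Injective (om k) := by
  intro i j h
  have hk : k ≠ 0 := by have := i.2; omega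
  have hprim := Complex.isPrimitiveRoot_exp k hk
  have e : ∀ j : Fin k, om k j = Complex.exp (2 * Real.pi * Complex.I / k) ^ (j : ℕ) := by
    intro j; rw [← Complex.exp_nat_mul]; unfold om; congr 1; ring
  rw [e, e] at h
  exact Fin.ext (hprim.pow_inj i.2 j.2 h)

theorem mem_star {k : ℕ} {z : ℂ} :
    z ∈ starGraph k ↔ ∃ (j : Fin k) (s : ℝ), 0 ≤ s ∧ s ≤ 1 ∧ z = s * om k j := by
  simp only [starGraph, Set.mem_iUnion, segment_eq_image, Set.mem_image, Set.mem_Icc]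
  constructor
  · rintro ⟨j, s, ⟨h0, h1⟩, rfl⟩
    exact ⟨j, s, h0, h1, by simp [om]⟩
  · rintro ⟨j, s, h0, h1, rfl⟩
    exact ⟨j, s, ⟨h0, h1⟩, by simp [om]⟩

theorem exists_height (k : ℕ) (i : Fin k) : ∃ h : ℂ → ℝ, Continuous h ∧
    (∀ s : ℝ, 0 ≤ s → ∀ z, h (s * z) = s * h z) ∧ h (om k i) = 1 ∧
    ∀ j, j ≠ i → h (om k j) ≤ 0 := by
  have hlt : ∀ j, j ≠ i → (om k j * (starRingEnd ℂ) (om k i)).re < 1 := by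
    intro j hj
    have hn : ‖om k j * (starRingEnd ℂ) (om k i)‖ = 1 := by simp [norm_om]
    have h1 := Complex.re_le_norm (om k j * (starRingEnd ℂ) (om k i))
    refine lt_of_le_of_ne (hn ▸ h1) fun h => hj (om_injective k ?_)
    have h2 : om k j * (starRingEnd ℂ) (om k i) = 1 := by
      have h3 := Complex.sq_norm (om k j * (starRingEnd ℂ) (om k i))
      rw [hn, Complex.normSq_apply, h] at h3
      apply Complex.ext
      · simpa using h
      · simp only [Complex.one_im]; nlinarith
    have h4 : (starRingEnd ℂ) (om k i) * om k i = 1 := by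
      rw [mul_comm, Complex.mul_conj, Complex.normSq_eq_norm_sq, norm_om]; simp
    calc om k j = om k j * ((starRingEnd ℂ) (om k i) * om k i) := by rw [h4, mul_one]
      _ = om k i := by rw [← mul_assoc, h2, one_mul]
  obtain ⟨c, hc1, hc⟩ : ∃ c : ℝ, c < 1 ∧
      ∀ j, j ≠ i → (om k j * (starRingEnd ℂ) (om k i)).re ≤ c := by
    by_cases hne : (Finset.univ.erase i).Nonempty
    · obtain ⟨m, hm, hmax⟩ := Finset.exists_max_image (Finset.univ.erase i)
        (fun j => (om k j * (starRingEnd ℂ) (om k i)).re) hne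
      exact ⟨_, hlt m (Finset.ne_of_mem_erase hm), fun j hj => hmax j (by simp [hj])⟩
    · refine ⟨0, one_pos, fun j hj => (hne ⟨j, by simp [hj]⟩).elim⟩
  refine ⟨fun z => ((z * (starRingEnd ℂ) (om k i)).re - c * ‖z‖) / (1 - c), ?_, ?_, ?_, ?_⟩
  · have := Complex.continuous_re
    fun_prop
  · intro s hs z
    simp only [norm_mul, Complex.norm_real, Real.norm_eq_abs, abs_of_nonneg hs, mul_assoc,
      Complex.re_ofReal_mul]
    ring
  · have : (om k i * (starRingEnd ℂ) (om k i)).re = 1 := by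
      rw [Complex.mul_conj, Complex.normSq_eq_norm_sq, norm_om]; simp
    simp only [this, norm_om]
    rw [mul_one, div_self]; linarith
  · intro j hj
    simp only [norm_om]
    exact div_nonpos_of_nonpos_of_nonneg (by linarith [hc j hj]) (by linarith)

/-- Height function of leg `i`. -/
noncomputable def ht (k : ℕ) (i : Fin k) : ℂ → ℝ := (exists_height k i).choose

section
variable {k : ℕ} (i : Fin k)

theorem ht_cont : Continuous (ht k i) := (exists_height k i).choose_spec.1

theorem ht_mul {s : ℝ} (hs : 0 ≤ s) (z : ℂ) : ht k i (s * z) = s * ht k i z :=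
  (exists_height k i).choose_spec.2.1 s hs z

theorem ht_self {s : ℝ} (hs : 0 ≤ s) : ht k i (s * om k i) = s := by
  rw [ht_mul i hs, ht, (exists_height k i).choose_spec.2.2.1, mul_one]

theorem ht_other {j : Fin k} (hj : j ≠ i) {s : ℝ} (hs : 0 ≤ s) : ht k i (s * om k j) ≤ 0 := by
  rw [ht_mul i hs]
  exact mul_nonpos_of_nonneg_of_nonpos hs ((exists_height k i).choose_spec.2.2.2 j hj)

theorem ht_pos {z : ℂ} (hz : z ∈ starGraph k) (h : 0 < ht k i z) :
    ht k i z ≤ 1 ∧ z = ht k i z * om k i := by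
  obtain ⟨j, s, h0, h1, rfl⟩ := mem_star.1 hz
  by_cases hj : j = i
  · subst hj; rw [ht_self _ h0]; exact ⟨h1, rfl⟩
  · exact absurd h (ht_other i hj h0).not_gt

theorem ht_pos_unique {j : Fin k} {z : ℂ} (hz : z ∈ starGraph k) (h : 0 < ht k i z)
    (h' : 0 < ht k j z) : i = j := by
  by_contra hne
  have e := (ht_pos i hz h).2
  rw [e] at h'
  exact absurd h' (ht_other j hne h.le).not_gt

theorem exists_ht_pos {z : ℂ} (hz : z ∈ starGraph k) (h0 : z ≠ 0) : ∃ i, 0 < ht k i z := by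
  obtain ⟨j, s, hs, h1, rfl⟩ := mem_star.1 hz
  refine ⟨j, ?_⟩
  rw [ht_self j hs]
  refine lt_of_le_of_ne hs fun h => h0 ?_
  rw [← h]; simp

theorem smul_mem_star {z : ℂ} (hz : z ∈ starGraph k) {r : ℝ} (h0 : 0 ≤ r) (h1 : r ≤ 1) :
    (r : ℂ) * z ∈ starGraph k := by
  obtain ⟨j, s, hs, hs1, rfl⟩ := mem_star.1 hz
  exact mem_star.2 ⟨j, r * s, by positivity, by nlinarith, by push_cast; ring⟩

theorem cev (n : Fin 2) : Continuous fun f : Conf 2 (starGraph k) => f.1 n :=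
  (continuous_apply n).comp continuous_subtype_val

/-- Ordered configurations with the outermost point of leg `i` first. -/
def W : Set (Conf 2 (starGraph k)) :=
  {f | 0 < ht k i (f.1 0) ∧ ht k i (f.1 1) < ht k i (f.1 0)}

theorem isOpen_W : IsOpen (W i) := by
  have h := ht_cont i
  have c0 : Continuous fun f : Conf 2 (starGraph k) => ht k i (f.1 0) :=
    h.comp (continuous_subtype_val.comp (cev 0))
  have c1 : Continuous fun f : Conf 2 (starGraph k) => ht k i (f.1 1) :=
    h.comp (continuous_subtype_val.comp (cev 1))
  exact (isOpen_lt continuous_const c0).inter (isOpen_lt c1 c0)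

/-- Model of `W i` in `ℂ × ℂ`. -/
def S : Set (ℂ × ℂ) :=
  {p | p.1 ∈ starGraph k ∧ p.2 ∈ starGraph k ∧ 0 < ht k i p.1 ∧ ht k i p.2 < ht k i p.1}

theorem om_mem : om k i ∈ starGraph k := mem_star.2 ⟨i, 1, by simp, by simp, by simp⟩
theorem zero_mem_star (i : Fin k) : (0 : ℂ) ∈ starGraph k := mem_star.2 ⟨i, 0, by simp, by simp, by simp⟩
theorem ht_zero : ht k i 0 = 0 := by simpa using ht_mul i le_rfl 0
theorem ht_om : ht k i (om k i) = 1 := by simpa using ht_self i zero_le_one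

theorem base_mem_S : (om k i, (0 : ℂ)) ∈ S i :=
  ⟨om_mem i, zero_mem_star i, by simp [ht_om], by simp [ht_om, ht_zero]⟩

theorem starConvex_S : StarConvex ℝ (om k i, (0 : ℂ)) (S i) := by
  rintro ⟨a, b⟩ ⟨ha, hb, h1, h2⟩ r t hr ht' hrt
  simp only at ha hb h1 h2
  obtain ⟨h3, h4⟩ := ht_pos i ha h1
  set s := ht k i a
  have e1 : r • om k i + t • a = ((r + t * s : ℝ) : ℂ) * om k i := by
    rw [h4]; simp; ring
  have e2 : r • (0 : ℂ) + t • b = (t : ℂ) * b := by simp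
  have hp : 0 < r + t * s := by
    rcases hr.eq_or_lt with h | h
    · have : t = 1 := by linarith
      subst this; linarith
    · positivity
  change (r • om k i + t • a, r • (0 : ℂ) + t • b) ∈ S i
  rw [e1, e2]
  refine ⟨smul_mem_star (om_mem i) hp.le (by nlinarith), smul_mem_star hb ht' (by linarith), ?_, ?_⟩
  · simp only; rw [ht_self i hp.le]; exact hp
  · simp only; rw [ht_self i hp.le, ht_mul i ht']
    rcases ht'.eq_or_lt with h | h
    · subst h; linarith
    · nlinarith

/-- `W i` is homeomorphic to its model. -/
def homeoWS : S i ≃ₜ W i where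
  toFun p := ⟨⟨![⟨p.1.1, p.2.1⟩, ⟨p.1.2, p.2.2.1⟩], by
    intro a b hab
    have h := p.2.2.2.2
    fin_cases a <;> fin_cases b <;> simp at hab ⊢
    · rw [hab] at h; exact lt_irrefl _ h
    · rw [hab] at h; exact lt_irrefl _ h⟩, p.2.2.2⟩
  invFun f := ⟨(f.1.1 0, f.1.1 1), (f.1.1 0).2, (f.1.1 1).2, f.2⟩
  left_inv p := rfl
  right_inv f := by
    apply Subtype.ext; apply Subtype.ext; funext a
    fin_cases a <;> rfl
  continuous_toFun := by
    refine Continuous.subtype_mk (Continuous.subtype_mk (continuous_pi fun a => ?_) _) _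
    fin_cases a
    · exact Continuous.subtype_mk (by fun_prop) _
    · exact Continuous.subtype_mk (by fun_prop) _
  continuous_invFun := Continuous.subtype_mk
    ((continuous_subtype_val.comp ((cev 0).comp continuous_subtype_val)).prodMk
      (continuous_subtype_val.comp ((cev 1).comp continuous_subtype_val))) _

theorem contractible_W : ContractibleSpace (W i) := by
  have : ContractibleSpace (S i) := (starConvex_S i).contractibleSpace ⟨_, base_mem_S i⟩
  exact (homeoWS i).symm.contractibleSpace

end

section
variable {k : ℕ}

/-- The quotient map. -/
noncomputable def mk (f : Conf 2 (starGraph k)) : UConf 2 (starGraph k) := Quotient.mk _ f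

theorem mk_eq {f g : Conf 2 (starGraph k)} :
    mk f = mk g ↔ ∃ σ : Equiv.Perm (Fin 2), f.1 = g.1 ∘ σ := Quotient.eq

theorem mk_cont : Continuous (mk (k := k)) := continuous_quotient_mk'

/-- Permuting. -/
def perm (σ : Equiv.Perm (Fin 2)) (f : Conf 2 (starGraph k)) : Conf 2 (starGraph k) :=
  ⟨f.1 ∘ σ, f.2.comp σ.injective⟩

theorem mk_perm (σ : Equiv.Perm (Fin 2)) (f : Conf 2 (starGraph k)) : mk (perm σ f) = mk f :=
  mk_eq.2 ⟨σ, rfl⟩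

theorem mk_open : IsOpenMap (mk (k := k)) := by
  intro V hV
  have : mk (k := k) ⁻¹' (mk '' V) = ⋃ σ : Equiv.Perm (Fin 2), perm σ ⁻¹' V := by
    ext f
    simp only [Set.mem_preimage, Set.mem_image, Set.mem_iUnion]
    constructor
    · rintro ⟨g, hg, e⟩
      obtain ⟨σ, h⟩ := mk_eq.1 e
      exact ⟨σ, by rwa [show perm σ f = g from Subtype.ext h.symm]⟩
    · rintro ⟨σ, h⟩
      exact ⟨_, h, mk_perm σ f⟩
  refine isOpen_coinduced.2 ?_
  change IsOpen (mk (k := k) ⁻¹' (mk '' V))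
  rw [this]
  refine isOpen_iUnion fun σ => hV.preimage ?_
  unfold perm
  refine Continuous.subtype_mk (continuous_pi fun a => ?_) _
  exact cev (σ a)

theorem perm_fin_two (σ : Equiv.Perm (Fin 2)) : σ = 1 ∨ (σ 0 = 1 ∧ σ 1 = 0) := by
  revert σ; decide

theorem embed (i : Fin k) : Topology.IsOpenEmbedding (fun f : W i => mk f.1) := by
  refine .of_continuous_injective_isOpenMap (mk_cont.comp continuous_subtype_val) ?_
    (mk_open.comp (isOpen_W i).isOpenMap_subtype_val)
  rintro ⟨f, hf⟩ ⟨g, hg⟩ h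
  obtain ⟨σ, e⟩ := mk_eq.1 h
  apply Subtype.ext; apply Subtype.ext
  rcases perm_fin_two σ with rfl | ⟨h0, h1⟩
  · exact e
  · exfalso
    have e0 : f.1 0 = g.1 1 := by rw [e]; simp [h0]
    have e1 : f.1 1 = g.1 0 := by rw [e]; simp [h1]
    have := hf.2
    rw [e0, e1] at this
    exact lt_asymm this hg.2

/-- The cover. -/
def U (i : Fin k) : Set (UConf 2 (starGraph k)) := Set.range (fun f : W i => mk f.1)

theorem mem_U (i : Fin k) (f : Conf 2 (starGraph k)) :
    mk f ∈ U i ↔ ∃ n, 0 < ht k i (f.1 n) := by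
  constructor
  · rintro ⟨⟨g, hg⟩, e⟩
    obtain ⟨σ, h⟩ := mk_eq.1 e
    refine ⟨σ 0, ?_⟩
    have := hg.1
    rw [h] at this
    exact this
  · rintro ⟨n, hn⟩
    obtain ⟨n', hn', hs⟩ : ∃ n', n' ≠ n ∧ ∃ σ : Equiv.Perm (Fin 2), σ 0 = n ∧ σ 1 = n' := by
      have : ∀ n : Fin 2, ∃ n', n' ≠ n ∧ ∃ σ : Equiv.Perm (Fin 2), σ 0 = n ∧ σ 1 = n' := by
        decide
      exact this n
    obtain ⟨σ, s0, s1⟩ := hs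
    rcases lt_trichotomy (ht k i (f.1 n')) (ht k i (f.1 n)) with h | h | h
    · refine ⟨⟨perm σ f, ?_⟩, mk_perm σ f⟩
      change 0 < ht k i (f.1 (σ 0)) ∧ ht k i (f.1 (σ 1)) < ht k i (f.1 (σ 0))
      rw [s0, s1]; exact ⟨hn, h⟩
    · exfalso
      apply hn'
      apply f.2
      apply Subtype.ext
      rw [(ht_pos i (f.1 n).2 hn).2, (ht_pos i (f.1 n').2 (h ▸ hn)).2, h]
    · refine ⟨⟨perm (σ * Equiv.swap 0 1) f, ?_⟩, mk_perm _ f⟩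
      change 0 < ht k i (f.1 ((σ * Equiv.swap 0 1 : Equiv.Perm (Fin 2)) 0)) ∧
        ht k i (f.1 ((σ * Equiv.swap 0 1 : Equiv.Perm (Fin 2)) 1)) < ht k i (f.1 ((σ * Equiv.swap 0 1 : Equiv.Perm (Fin 2)) 0))
      simp only [Equiv.Perm.mul_apply, Equiv.swap_apply_left, Equiv.swap_apply_right]
      rw [s0, s1]; exact ⟨hn.trans h, h⟩

theorem exists_mem_U (x : UConf 2 (starGraph k)) : ∃ i, x ∈ U i := by
  obtain ⟨f, rfl⟩ : ∃ f, mk f = x := Quotient.exists_rep x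
  have : ∃ n, (f.1 n : ℂ) ≠ 0 := by
    by_contra! h
    have : f.1 0 = f.1 1 := Subtype.ext ((h 0).trans (h 1).symm)
    exact absurd (f.2 this) (by decide)
  obtain ⟨n, hn⟩ := this
  obtain ⟨i, hi⟩ := exists_ht_pos (f.1 n).2 hn
  exact ⟨i, (mem_U i f).2 ⟨n, hi⟩⟩

theorem tri_U (i j l : Fin k) (x : UConf 2 (starGraph k)) (hi : x ∈ U i) (hj : x ∈ U j)
    (hl : x ∈ U l) : i = j ∨ j = l ∨ i = l := by
  obtain ⟨f, rfl⟩ : ∃ f, mk f = x := Quotient.exists_rep x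
  rw [mem_U] at hi hj hl
  obtain ⟨a, ha⟩ := hi
  obtain ⟨b, hb⟩ := hj
  obtain ⟨c, hc⟩ := hl
  have : a = b ∨ b = c ∨ a = c := by omega
  rcases this with rfl | rfl | rfl
  · exact .inl (ht_pos_unique _ (f.1 a).2 ha hb)
  · exact .inr (.inl (ht_pos_unique _ (f.1 _).2 hb hc))
  · exact .inr (.inr (ht_pos_unique _ (f.1 _).2 ha hc))

theorem pc_U (i j : Fin k) (hij : i ≠ j) : IsPathConnected (U i ∩ U j) := by
  let P : Set (ℝ × ℝ) := Set.Ioc 0 1 ×ˢ Set.Ioc 0 1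
  have hP : PathConnectedSpace P := isPathConnected_iff_pathConnectedSpace.1
    (((convex_Ioc 0 1).prod (convex_Ioc 0 1)).isPathConnected ⟨(1, 1), ⟨by norm_num, by norm_num⟩, ⟨by norm_num, by norm_num⟩⟩)
  let F : P → Conf 2 (starGraph k) := fun p =>
    ⟨![⟨(p.1.1 : ℂ) * om k i, smul_mem_star (om_mem i) p.2.1.1.le p.2.1.2⟩,
      ⟨(p.1.2 : ℂ) * om k j, smul_mem_star (om_mem j) p.2.2.1.le p.2.2.2⟩], by
      have key : (p.1.1 : ℂ) * om k i ≠ (p.1.2 : ℂ) * om k j := by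
        intro h
        have h1 := ht_self i p.2.1.1.le
        have h2 := ht_other i hij.symm p.2.2.1.le
        rw [← h, h1] at h2
        exact absurd p.2.1.1 h2.not_gt
      intro a b hab
      fin_cases a <;> fin_cases b <;> simp at hab ⊢
      · exact key hab
      · exact key hab.symm⟩
  have hF : Continuous F := by
    refine Continuous.subtype_mk (continuous_pi fun a => ?_) _
    fin_cases a
    · exact Continuous.subtype_mk (by fun_prop) _
    · exact Continuous.subtype_mk (by fun_prop) _
  have : U i ∩ U j = Set.range (mk ∘ F) := by
    ext x
    constructor
    · obtain ⟨f, rfl⟩ : ∃ f, mk f = x := Quotient.exists_rep x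
      rintro ⟨hi, hj⟩
      rw [mem_U] at hi hj
      obtain ⟨a, ha⟩ := hi
      obtain ⟨b, hb⟩ := hj
      have hab : a ≠ b := by
        rintro rfl
        exact hij (ht_pos_unique _ (f.1 a).2 ha hb)
      obtain ⟨σ, s0, s1⟩ : ∃ σ : Equiv.Perm (Fin 2), σ 0 = a ∧ σ 1 = b := by
        have : ∀ a b : Fin 2, a ≠ b → ∃ σ : Equiv.Perm (Fin 2), σ 0 = a ∧ σ 1 = b := by
          decide
        exact this a b hab
      have ea := ht_pos i (f.1 a).2 ha
      have eb := ht_pos j (f.1 b).2 hb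
      refine ⟨⟨(ht k i (f.1 a), ht k j (f.1 b)), ⟨ha, ea.1⟩, ⟨hb, eb.1⟩⟩, ?_⟩
      refine mk_eq.2 ⟨σ, ?_⟩
      funext n
      apply Subtype.ext
      fin_cases n
      · change _ = (f.1 (σ 0) : ℂ)
        rw [s0]; exact ea.2.symm
      · change _ = (f.1 (σ 1) : ℂ)
        rw [s1]; exact eb.2.symm
    · rintro ⟨p, rfl⟩
      refine ⟨(mem_U i _).2 ⟨0, ?_⟩, (mem_U j _).2 ⟨1, ?_⟩⟩
      · exact (ht_self i p.2.1.1.le).symm ▸ p.2.1.1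
      · exact (ht_self j p.2.2.1.le).symm ▸ p.2.2.1
  rw [this]
  exact isPathConnected_range (mk_cont.comp hF)

/-- The cover of the configuration space. -/
noncomputable def cover (k : ℕ) : NerveCover (UConf 2 (starGraph k)) (Fin k) where
  U := U
  isOpen i := (embed i).isOpen_range
  idx x := (exists_mem_U x).choose
  mem_idx x := (exists_mem_U x).choose_spec
  sc i := by
    have := contractible_W i
    have : ContractibleSpace (U i) := (embed i).isEmbedding.toHomeomorph.symm.contractibleSpace
    infer_instance
  pc := pc_U
  tri := tri_U

theorem card_gen (n : ℕ) : Fintype.card (NerveCover.Gen (0 : Fin (n + 1))) = n * (n - 1) / 2 := by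
  let e : NerveCover.Gen (0 : Fin (n + 1)) ≃ Σ j : Fin (n + 1), Finset.Ioo 0 j :=
    { toFun := fun p => ⟨p.1.2, p.1.1, Finset.mem_Ioo.2 p.2⟩
      invFun := fun p => ⟨(p.2.1, p.1), Finset.mem_Ioo.1 p.2.2⟩
      left_inv := fun _ => rfl
      right_inv := fun _ => rfl }
  rw [Fintype.card_congr e, Fintype.card_sigma]
  simp only [Fintype.card_coe, Fin.card_Ioo]
  rw [Fin.sum_univ_succ, ← Finset.sum_range_id, Finset.sum_range]
  simp

end

end StarBraid

/-- The 2-strand braid group of the star graph `Y_k` (`k ≥ 3`) is free of rank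
`(k-1)(k-2)/2`. -/
theorem braid_group_star_graph_free (k : ℕ) (hk : 3 ≤ k)
    (x : UConf 2 (starGraph k)) :
    Nonempty (FundamentalGroup (UConf 2 (starGraph k)) x ≃*
      FreeGroup (Fin ((k - 1) * (k - 2) / 2))) := by
  obtain ⟨n, rfl⟩ : ∃ n, k = n + 1 := ⟨k - 1, by omega⟩
  obtain ⟨e⟩ := (StarBraid.cover (n + 1)).nonempty_mulEquiv 0 (fun i => Fin.zero_le i) x
  have hc : Fintype.card (NerveCover.Gen (0 : Fin (n + 1))) = (n + 1 - 1) * (n + 1 - 2) / 2 :=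
    StarBraid.card_gen n
  exact ⟨e.trans (FreeGroup.freeGroupCongr (Fintype.equivFinOfCardEq hc))⟩
end

section
/- Let k ≥ 3 be an integer. The unordered configuration space UC²(Y_k) of 2 points on the star graph Y_k is homotopy equivalent to the 1-skeleton of the (k−1)-simplex, i.e., to the subset of ℝ^{Fin k} given by the union, over all pairs i < j in Fin k, of the straight segments joining the standard basis vectors e_i and e_j (with the subspace topology). -/
/-- The 1-skeleton of the `(k-1)`-simplex: the union of the straight segments in
`ℝ^{Fin k}` joining distinct standard basis vectors. -/
def simplexOneSkeleton (k : ℕ) : Set (Fin k → ℝ) :=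
  ⋃ (i : Fin k) (j : Fin k) (_ : i < j),
    segment ℝ (Pi.single i (1 : ℝ)) (Pi.single j (1 : ℝ))

open Topology

namespace StarConf

/-- Coordinate model of the star graph. -/
def S (k : ℕ) : Set (Fin k → ℝ) :=
  {x | (∀ i, 0 ≤ x i ∧ x i ≤ 1) ∧ ∀ i j, i ≠ j → x i = 0 ∨ x j = 0}

lemma S_single {k : ℕ} (i : Fin k) (t : ℝ) (h0 : 0 ≤ t) (h1 : t ≤ 1) :
    (Pi.single i t : Fin k → ℝ) ∈ S k := by
  refine ⟨fun l => ?_, fun a b hab => ?_⟩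
  · by_cases h : l = i
    · subst h; simp [h0, h1]
    · simp [h]
  · by_cases h : a = i
    · subst h; right; simp [hab.symm]
    · left; simp [h]

lemma S_eq_single {k : ℕ} (hk : 3 ≤ k) {x : Fin k → ℝ} (hx : x ∈ S k) :
    ∃ i, ∀ l, l ≠ i → x l = 0 := by
  by_cases h : ∃ i, x i ≠ 0
  · obtain ⟨i, hi⟩ := h
    exact ⟨i, fun l hl => (hx.2 l i hl).resolve_right hi⟩
  · push Not at h
    exact ⟨⟨0, by omega⟩, fun l _ => h l⟩

lemma S_compact (k : ℕ) : IsCompact (S k) := by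
  have hsub : S k ⊆ Set.Icc (0 : Fin k → ℝ) 1 := fun x hx =>
    ⟨fun i => (hx.1 i).1, fun i => (hx.1 i).2⟩
  refine IsCompact.of_isClosed_subset isCompact_Icc ?_ hsub
  have : S k = {x | (∀ i, 0 ≤ x i ∧ x i ≤ 1) ∧ ∀ i j, i ≠ j → x i * x j = 0} := by
    ext x; simp [S]
  rw [this]
  simp only [Set.ofPred_and, Set.ofPred_forall]
  refine IsClosed.inter (isClosed_iInter fun i => IsClosed.inter ?_ ?_)
    (isClosed_iInter fun i => isClosed_iInter fun j => isClosed_iInter fun _ => ?_)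
  · exact isClosed_le continuous_const (continuous_apply i)
  · exact isClosed_le (continuous_apply i) continuous_const
  · exact isClosed_eq ((continuous_apply i).mul (continuous_apply j)) continuous_const

/-- The root of unity. -/
noncomputable def om (k : ℕ) (j : Fin k) : ℂ :=
  Complex.exp (2 * Real.pi * Complex.I * (j : ℕ) / (k : ℕ))

lemma om_eq {k : ℕ} (j : Fin k) :
    om k j = Complex.exp (2 * Real.pi * Complex.I / (k : ℕ)) ^ (j : ℕ) := by
  rw [om, ← Complex.exp_nat_mul]; congr 1; ring

lemma om_norm {k : ℕ} (hk : 3 ≤ k) (j : Fin k) : ‖om k j‖ = 1 := by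
  have h := Complex.isPrimitiveRoot_exp k (by omega)
  rw [om_eq, norm_pow, h.norm'_eq_one (by omega), one_pow]

lemma om_inj {k : ℕ} (hk : 3 ≤ k) {i j : Fin k} (h : om k i = om k j) : i = j := by
  have hp := Complex.isPrimitiveRoot_exp k (by omega)
  rw [om_eq, om_eq] at h
  exact Fin.ext (hp.pow_inj i.2 j.2 h)

lemma sum_single_om {k : ℕ} (x : Fin k → ℝ) (i : Fin k) (hi : ∀ l, l ≠ i → x l = 0) :
    ∑ j, (x j : ℂ) * om k j = x i * om k i := by
  rw [Finset.sum_eq_single i]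
  · intro b _ hb; simp [hi b hb]
  · simp

lemma star_mem {k : ℕ} (z : ℂ) :
    z ∈ starGraph k ↔ ∃ (j : Fin k) (t : ℝ), 0 ≤ t ∧ t ≤ 1 ∧ z = t * om k j := by
  simp only [starGraph, Set.mem_iUnion]
  refine exists_congr fun j => ?_
  constructor
  · rintro ⟨a, b, ha, hb, hab, rfl⟩
    exact ⟨b, hb, by linarith, by simp [om]⟩
  · rintro ⟨t, h0, h1, rfl⟩
    exact ⟨1 - t, t, by linarith, h0, by ring, by simp [om]⟩

/-- The comparison map from the model to the star graph. -/
noncomputable def toStar {k : ℕ} (hk : 3 ≤ k) (x : S k) : starGraph k :=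
  ⟨∑ j, (x.1 j : ℂ) * om k j, by
    obtain ⟨i, hi⟩ := S_eq_single hk x.2
    rw [sum_single_om _ i hi, star_mem]
    exact ⟨i, x.1 i, (x.2.1 i).1, (x.2.1 i).2, rfl⟩⟩

lemma toStar_cont {k : ℕ} (hk : 3 ≤ k) : Continuous (toStar hk) := by
  unfold toStar
  refine Continuous.subtype_mk ?_ _
  refine continuous_finsetSum _ fun j _ => ?_
  refine Continuous.mul ?_ continuous_const
  exact Complex.continuous_ofReal.comp ((continuous_apply j).comp continuous_subtype_val)

lemma toStar_bij {k : ℕ} (hk : 3 ≤ k) : Function.Bijective (toStar hk) := by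
  constructor
  · intro x y h
    obtain ⟨i, hi⟩ := S_eq_single hk x.2
    obtain ⟨j, hj⟩ := S_eq_single hk y.2
    have h' : (x.1 i : ℂ) * om k i = y.1 j * om k j := by
      rw [← sum_single_om _ i hi, ← sum_single_om _ j hj]; exact congrArg Subtype.val h
    have hn : x.1 i = y.1 j := by
      have := congrArg norm h'
      rw [norm_mul, norm_mul, om_norm hk, om_norm hk, Complex.norm_real, Complex.norm_real,
        mul_one, mul_one, Real.norm_of_nonneg (x.2.1 i).1, Real.norm_of_nonneg (y.2.1 j).1] at this
      exact this
    apply Subtype.ext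
    by_cases h0 : x.1 i = 0
    · funext l
      have hx : x.1 l = 0 := by
        by_cases hl : l = i
        · rw [hl, h0]
        · exact hi l hl
      have hy : y.1 l = 0 := by
        by_cases hl : l = j
        · rw [hl, ← hn, h0]
        · exact hj l hl
      rw [hx, hy]
    · rw [← hn] at h'
      have hij : i = j := om_inj hk (mul_left_cancel₀ (by exact_mod_cast h0) h')
      subst hij
      funext l
      by_cases hl : l = i
      · rw [hl, hn]
      · rw [hi l hl, hj l hl]
  · rintro ⟨z, hz⟩
    obtain ⟨j, t, h0, h1, rfl⟩ := (star_mem z).1 hz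
    refine ⟨⟨Pi.single j t, S_single j t h0 h1⟩, Subtype.ext ?_⟩
    show ∑ l, ((Pi.single j t : Fin k → ℝ) l : ℂ) * om k l = _
    rw [sum_single_om _ j (fun l hl => by simp [hl])]
    simp

noncomputable def starHomeo {k : ℕ} (hk : 3 ≤ k) : S k ≃ₜ starGraph k :=
  haveI : CompactSpace (S k) := isCompact_iff_compactSpace.1 (S_compact k)
  Continuous.homeoOfEquivCompactToT2 (f := Equiv.ofBijective _ (toStar_bij hk)) (toStar_cont hk)

/-- Functoriality of unordered configurations. -/
def uconfMap {X Y : Type*} [TopologicalSpace X] [TopologicalSpace Y] (e : X ≃ₜ Y) (n : ℕ) :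
    UConf n X → UConf n Y :=
  Quotient.map (fun f => ⟨e ∘ f.1, e.injective.comp f.2⟩) (by
    rintro f g ⟨σ, h⟩
    refine ⟨σ, ?_⟩
    show e ∘ f.1 = (e ∘ g.1) ∘ σ
    rw [h]; rfl)

lemma uconfMap_cont {X Y : Type*} [TopologicalSpace X] [TopologicalSpace Y] (e : X ≃ₜ Y) (n : ℕ) :
    Continuous (uconfMap e n) := by
  unfold uconfMap
  refine Continuous.quotient_lift ?_ _
  refine continuous_quotient_mk'.comp ?_
  refine Continuous.subtype_mk ?_ _
  exact continuous_pi fun i =>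
    e.continuous.comp ((continuous_apply i).comp continuous_subtype_val)

def uconfHomeo {X Y : Type*} [TopologicalSpace X] [TopologicalSpace Y] (e : X ≃ₜ Y) (n : ℕ) :
    UConf n X ≃ₜ UConf n Y where
  toFun := uconfMap e n
  invFun := uconfMap e.symm n
  left_inv := by
    rintro ⟨f⟩
    refine congrArg (Quotient.mk _) (Subtype.ext (funext fun i => ?_))
    simp
  right_inv := by
    rintro ⟨f⟩
    refine congrArg (Quotient.mk _) (Subtype.ext (funext fun i => ?_))
    simp
  continuous_toFun := uconfMap_cont e n
  continuous_invFun := uconfMap_cont e.symm n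

lemma perm_two : ∀ σ : Equiv.Perm (Fin 2), σ = 1 ∨ σ = Equiv.swap 0 1 := by decide

lemma perm_add (σ : Equiv.Perm (Fin 2)) : ∀ i, σ (i + 1) = σ i + 1 := by
  revert σ; decide

/-- The one-norm of the difference. -/
noncomputable def N {k : ℕ} (f : Fin 2 → S k) (i : Fin 2) : ℝ :=
  ∑ l, |(f i).1 l - (f (i + 1)).1 l|

lemma N_one {k : ℕ} (f : Fin 2 → S k) (i : Fin 2) : N f i = N f 0 := by
  fin_cases i
  · rfl
  · exact Finset.sum_congr rfl fun l _ => abs_sub_comm _ _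

lemma N_pos {k : ℕ} (f : Conf 2 (S k)) (i : Fin 2) : 0 < N f.1 i := by
  rw [N_one]
  have hne : f.1 0 ≠ f.1 1 := fun h => by simpa using f.2 h
  have : ∃ l, (f.1 0).1 l ≠ (f.1 1).1 l := by
    by_contra! h
    exact hne (Subtype.ext (funext h))
  obtain ⟨l, hl⟩ := this
  exact Finset.sum_pos' (fun _ _ => abs_nonneg _) ⟨l, Finset.mem_univ _, abs_pos.2 (sub_ne_zero.2 hl)⟩

lemma coord_cont {k : ℕ} (i : Fin 2) (l : Fin k) :
    Continuous fun f : Conf 2 (S k) => (f.1 i).1 l :=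
  (continuous_apply l).comp (continuous_subtype_val.comp
    ((continuous_apply i).comp continuous_subtype_val))

lemma N_cont {k : ℕ} (i : Fin 2) : Continuous fun f : Conf 2 (S k) => N f.1 i :=
  continuous_finsetSum _ fun l _ => ((coord_cont i l).sub (coord_cont (i + 1) l)).abs

lemma skel_of {k : ℕ} {p : Fin k → ℝ} {i j : Fin k} (hij : i ≠ j) (h0 : ∀ l, 0 ≤ p l)
    (hs : ∑ l, p l = 1) (hz : ∀ l, l ≠ i → l ≠ j → p l = 0) : p ∈ simplexOneSkeleton k := by
  wlog h : i < j generalizing i j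
  · exact this hij.symm (fun l a b => hz l b a) (lt_of_le_of_ne (not_lt.1 h) hij.symm)
  simp only [simplexOneSkeleton, Set.mem_iUnion]
  refine ⟨i, j, h, p i, p j, h0 i, h0 j, ?_, ?_⟩
  · rw [← hs]
    exact (Finset.sum_eq_add (s := Finset.univ) i j hij (fun c _ hc => hz c hc.1 hc.2)
      (by simp) (by simp)).symm
  · funext l
    by_cases h1 : l = i
    · subst h1; simp [hij]
    · by_cases h2 : l = j
      · subst h2; simp [h1]
      · simp [h1, h2, hz l h1 h2]

lemma exists_pair {k : ℕ} (hk : 3 ≤ k) (x y : S k) :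
    ∃ i j : Fin k, i ≠ j ∧ ∀ l, l ≠ i → l ≠ j → x.1 l = 0 ∧ y.1 l = 0 := by
  obtain ⟨i, hi⟩ := S_eq_single hk x.2
  obtain ⟨j, hj⟩ := S_eq_single hk y.2
  by_cases h : i = j
  · subst h
    have : Nontrivial (Fin k) := Fin.nontrivial_iff_two_le.2 (by omega)
    obtain ⟨m, hm⟩ := exists_ne i
    exact ⟨i, m, hm.symm, fun l h1 _ => ⟨hi l h1, hj l h1⟩⟩
  · exact ⟨i, j, h, fun l h1 h2 => ⟨hi l h1, hj l h2⟩⟩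

noncomputable def F0 {k : ℕ} (hk : 3 ≤ k) (f : Conf 2 (S k)) : simplexOneSkeleton k :=
  ⟨fun l => |(f.1 0).1 l - (f.1 1).1 l| / N f.1 0, by
    obtain ⟨i, j, hij, h⟩ := exists_pair hk (f.1 0) (f.1 1)
    refine skel_of hij (fun l => div_nonneg (abs_nonneg _) (N_pos f 0).le) ?_ ?_
    · rw [← Finset.sum_div]
      exact div_self (N_pos f 0).ne'
    · intro l h1 h2
      simp [(h l h1 h2).1, (h l h1 h2).2]⟩

lemma F0_cont {k : ℕ} (hk : 3 ≤ k) : Continuous (F0 hk) := by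
  refine Continuous.subtype_mk (continuous_pi fun l => ?_) _
  exact ((coord_cont 0 l).sub (coord_cont 1 l)).abs.div (N_cont 0) fun f => (N_pos f 0).ne'

lemma F0_inv {k : ℕ} (hk : 3 ≤ k) (f g : Conf 2 (S k))
    (h : (confSetoid 2 (S k)).r f g) : F0 hk f = F0 hk g := by
  obtain ⟨σ, h⟩ := h
  have hN : N f.1 0 = N g.1 0 := by
    have : N f.1 0 = N g.1 (σ 0) := by
      unfold N; rw [h]; simp only [Function.comp, perm_add]
    rw [this, N_one]
  apply Subtype.ext
  funext l
  show |_| / _ = |_| / _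
  rw [hN]
  congr 1
  rw [h]
  rcases perm_two σ with rfl | rfl
  · simp
  · simp [abs_sub_comm]

noncomputable def F {k : ℕ} (hk : 3 ≤ k) : C(UConf 2 (S k), simplexOneSkeleton k) where
  toFun := Quotient.lift (F0 hk) (F0_inv hk)
  continuous_toFun := (F0_cont hk).quotient_lift _

/-- Disjointly supported decompositions are unique up to swapping. -/
lemma split_unique {k : ℕ} (f g : Conf 2 (S k))
    (hf : ∀ l, (f.1 0).1 l = 0 ∨ (f.1 1).1 l = 0) (hg : ∀ l, (g.1 0).1 l = 0 ∨ (g.1 1).1 l = 0)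
    (h : ∀ l, (f.1 0).1 l + (f.1 1).1 l = (g.1 0).1 l + (g.1 1).1 l) :
    (Quotient.mk _ f : UConf 2 (S k)) = Quotient.mk _ g := by
  apply Quotient.sound
  by_cases hx : ∀ l, (f.1 0).1 l = (g.1 0).1 l
  · refine ⟨1, funext fun i => ?_⟩
    fin_cases i
    · exact Subtype.ext (funext hx)
    · exact Subtype.ext (funext fun l => by
        have := h l; rw [hx l] at this; exact add_left_cancel this)
  · push Not at hx
    obtain ⟨l, hl⟩ := hx
    have key : ∀ m, (f.1 0).1 m = (g.1 1).1 m ∧ (f.1 1).1 m = (g.1 0).1 m := by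
      intro m
      have a1 := (f.1 0).2.2 m l
      have a2 := (f.1 1).2.2 m l
      have a3 := (g.1 0).2.2 m l
      have a4 := (g.1 1).2.2 m l
      have b1 := hf l
      have b2 := hg l
      have b3 := h l
      have b4 := h m
      have b5 := hf m
      have b6 := hg m
      by_cases hm : m = l
      · subst hm; grind
      · grind
    refine ⟨Equiv.swap 0 1, funext fun i => ?_⟩
    fin_cases i
    · exact Subtype.ext (funext fun m => by simpa using (key m).1)
    · exact Subtype.ext (funext fun m => by simpa using (key m).2)

lemma edge_facts {k : ℕ} {i j : Fin k} (hij : i ≠ j) {p : Fin k → ℝ}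
    (hp : p ∈ segment ℝ (Pi.single i (1 : ℝ)) (Pi.single j (1 : ℝ))) :
    0 ≤ p i ∧ 0 ≤ p j ∧ p i + p j = 1 ∧ ∀ l, l ≠ i → l ≠ j → p l = 0 := by
  obtain ⟨a, b, ha, hb, hab, rfl⟩ := hp
  refine ⟨?_, ?_, ?_, ?_⟩
  · simp [hij, ha]
  · simp [hij.symm, hb]
  · simp [hij, hij.symm, hab]
  · intro l h1 h2; simp [h1, h2]

/-- The configuration attached to a point of an edge. -/
noncomputable def edgeConf {k : ℕ} {i j : Fin k} (hij : i ≠ j) (p : Fin k → ℝ)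
    (hp : p ∈ segment ℝ (Pi.single i (1 : ℝ)) (Pi.single j (1 : ℝ))) : Conf 2 (S k) :=
  ⟨![⟨Pi.single i (p i), S_single i _ (edge_facts hij hp).1
        (by have := edge_facts hij hp; linarith)⟩,
     ⟨Pi.single j (p j), S_single j _ (edge_facts hij hp).2.1
        (by have := edge_facts hij hp; linarith)⟩], by
    have hf := edge_facts hij hp
    have hne : (Pi.single i (p i) : Fin k → ℝ) ≠ Pi.single j (p j) := by
      intro h
      have h1 := congrFun h i
      have h2 := congrFun h j
      simp [hij, hij.symm] at h1 h2
      linarith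
    intro a b hab
    fin_cases a <;> fin_cases b
    · rfl
    · exact absurd (congrArg Subtype.val hab) hne
    · exact absurd (congrArg Subtype.val hab).symm hne
    · rfl⟩

lemma edgeConf_disj {k : ℕ} {i j : Fin k} (hij : i ≠ j) (p : Fin k → ℝ)
    (hp : p ∈ segment ℝ (Pi.single i (1 : ℝ)) (Pi.single j (1 : ℝ))) (l : Fin k) :
    ((edgeConf hij p hp).1 0).1 l = 0 ∨ ((edgeConf hij p hp).1 1).1 l = 0 := by
  show (Pi.single i (p i) : Fin k → ℝ) l = 0 ∨ (Pi.single j (p j) : Fin k → ℝ) l = 0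
  by_cases h : l = i
  · subst h; right; simp [hij]
  · left; simp [h]

lemma edgeConf_sum {k : ℕ} {i j : Fin k} (hij : i ≠ j) (p : Fin k → ℝ)
    (hp : p ∈ segment ℝ (Pi.single i (1 : ℝ)) (Pi.single j (1 : ℝ))) (l : Fin k) :
    ((edgeConf hij p hp).1 0).1 l + ((edgeConf hij p hp).1 1).1 l = p l := by
  show (Pi.single i (p i) : Fin k → ℝ) l + (Pi.single j (p j) : Fin k → ℝ) l = p l
  by_cases h : l = i
  · subst h; simp [hij]
  · by_cases h2 : l = j
    · subst h2; simp [h]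
    · simp [h, h2, (edge_facts hij hp).2.2.2 l h h2]

lemma skel_ex {k : ℕ} (p : simplexOneSkeleton k) :
    ∃ q : Fin k × Fin k, q.1 ≠ q.2 ∧
      p.1 ∈ segment ℝ (Pi.single q.1 (1 : ℝ)) (Pi.single q.2 (1 : ℝ)) := by
  obtain ⟨p, hp⟩ := p
  simp only [simplexOneSkeleton, Set.mem_iUnion] at hp
  obtain ⟨i, j, hij, h⟩ := hp
  exact ⟨(i, j), hij.ne, h⟩

noncomputable def G0 {k : ℕ} (p : simplexOneSkeleton k) : UConf 2 (S k) :=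
  Quotient.mk _ (edgeConf (skel_ex p).choose_spec.1 p.1 (skel_ex p).choose_spec.2)

lemma G0_eq {k : ℕ} (p : simplexOneSkeleton k) (f : Conf 2 (S k))
    (hf : ∀ l, (f.1 0).1 l = 0 ∨ (f.1 1).1 l = 0)
    (h : ∀ l, (f.1 0).1 l + (f.1 1).1 l = p.1 l) : G0 p = Quotient.mk _ f := by
  refine split_unique _ _ (edgeConf_disj _ _ _) hf fun l => ?_
  rw [edgeConf_sum, h]

lemma G0_cont {k : ℕ} : Continuous (G0 (k := k)) := by
  let c : {q : Fin k × Fin k // q.1 ≠ q.2} → Set (simplexOneSkeleton k) := fun q =>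
    {p | p.1 ∈ segment ℝ (Pi.single q.1.1 (1 : ℝ)) (Pi.single q.1.2 (1 : ℝ))}
  refine LocallyFinite.continuous (f := c) (locallyFinite_of_finite c) ?_ ?_ ?_
  · refine Set.eq_univ_of_forall fun p => ?_
    obtain ⟨q, h1, h2⟩ := skel_ex p
    exact Set.mem_iUnion.2 ⟨⟨q, h1⟩, h2⟩
  · intro q
    refine IsClosed.preimage continuous_subtype_val ?_
    rw [segment_eq_image]
    exact (isCompact_Icc.image (by fun_prop)).isClosed
  · rintro ⟨⟨i, j⟩, hij⟩
    rw [continuousOn_iff_continuous_domRestrict]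
    have : (c ⟨⟨i, j⟩, hij⟩).domRestrict G0 = fun p =>
        (Quotient.mk _ (edgeConf hij p.1.1 p.2) : UConf 2 (S k)) := by
      funext p
      exact G0_eq _ _ (edgeConf_disj _ _ _) (edgeConf_sum _ _ _)
    rw [this]
    refine continuous_quotient_mk'.comp ?_
    refine Continuous.subtype_mk (continuous_pi fun a => ?_) _
    have hc : ∀ m : Fin k, Continuous fun p : c ⟨⟨i, j⟩, hij⟩ => p.1.1 m := fun m =>
      (continuous_apply m).comp (continuous_subtype_val.comp continuous_subtype_val)
    fin_cases a
    · exact Continuous.subtype_mk ((continuous_single i).comp (hc i)) _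
    · exact Continuous.subtype_mk ((continuous_single j).comp (hc j)) _

noncomputable def G (k : ℕ) : C(simplexOneSkeleton k, UConf 2 (S k)) := ⟨G0, G0_cont⟩

lemma FG {k : ℕ} (hk : 3 ≤ k) : (F hk).comp (G k) = ContinuousMap.id _ := by
  ext1 p
  obtain ⟨⟨i, j⟩, hij, hp⟩ := skel_ex p
  have hG : G k p = Quotient.mk _ (edgeConf hij p.1 hp) :=
    G0_eq _ _ (edgeConf_disj _ _ _) (edgeConf_sum _ _ _)
  show F hk (G k p) = p
  rw [hG]
  show F0 hk _ = p
  apply Subtype.ext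
  set f := edgeConf hij p.1 hp with hf
  have habs : ∀ l, |(f.1 0).1 l - (f.1 1).1 l| = p.1 l := by
    intro l
    rw [← edgeConf_sum hij p.1 hp l, ← hf]
    have a1 := ((f.1 0).2.1 l).1
    have a2 := ((f.1 1).2.1 l).1
    rcases edgeConf_disj hij p.1 hp l with h | h <;> rw [← hf] at h
    · rw [h, zero_sub, abs_neg, abs_of_nonneg a2, zero_add]
    · rw [h, sub_zero, abs_of_nonneg a1, add_zero]
  have hN : N f.1 0 = 1 := by
    have : N f.1 0 = ∑ l, p.1 l := Finset.sum_congr rfl fun l _ => habs l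
    rw [this]
    have e := edge_facts hij hp
    rw [← e.2.2.1]
    exact Finset.sum_eq_add (s := Finset.univ) i j hij (fun c _ hc => e.2.2.2 c hc.1 hc.2)
      (by simp) (by simp)
  funext l
  show |_| / _ = _
  rw [hN, habs, div_one]

/-- The homotopy in coordinates. -/
noncomputable def Hc {k : ℕ} (s : ℝ) (f : Fin 2 → S k) (i : Fin 2) (l : Fin k) : ℝ :=
  (1 - s) * (f i).1 l + s * (max ((f i).1 l - (f (i + 1)).1 l) 0 / N f i)

lemma Hc_mem {k : ℕ} (s : unitInterval) (f : Conf 2 (S k)) (i : Fin 2) :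
    Hc s f.1 i ∈ S k := by
  have hs0 := s.2.1
  have hs1 := s.2.2
  refine ⟨fun l => ?_, fun a b hab => ?_⟩
  · have h1 : 0 ≤ max ((f.1 i).1 l - (f.1 (i + 1)).1 l) 0 / N f.1 i :=
      div_nonneg (le_max_right _ _) (N_pos f i).le
    have h2 : max ((f.1 i).1 l - (f.1 (i + 1)).1 l) 0 / N f.1 i ≤ 1 := by
      rw [div_le_one (N_pos f i)]
      refine (max_le (le_abs_self _) (abs_nonneg _)).trans ?_
      exact Finset.single_le_sum (f := fun l => |(f.1 i).1 l - (f.1 (i + 1)).1 l|)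
        (fun _ _ => abs_nonneg _) (Finset.mem_univ l)
    have h3 := (f.1 i).2.1 l
    unfold Hc
    constructor
    · have := mul_nonneg hs0 h1
      have := mul_nonneg (sub_nonneg.2 hs1) h3.1
      linarith
    · have := mul_le_mul_of_nonneg_left h2 hs0
      have := mul_le_mul_of_nonneg_left h3.2 (sub_nonneg.2 hs1)
      linarith
  · have hz : ∀ l, (f.1 i).1 l = 0 → Hc s f.1 i l = 0 := by
      intro l h
      have := ((f.1 (i + 1)).2.1 l).1
      unfold Hc
      rw [h, max_eq_right (by linarith)]
      simp
    exact ((f.1 i).2.2 a b hab).imp (hz a) (hz b)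

lemma Hc_sub {k : ℕ} (s : ℝ) (f : Conf 2 (S k)) (l : Fin k) :
    Hc s f.1 0 l - Hc s f.1 1 l =
      ((1 - s) + s / N f.1 0) * ((f.1 0).1 l - (f.1 1).1 l) := by
  unfold Hc
  rw [N_one f.1 1]
  show (1 - s) * (f.1 0).1 l + s * (max ((f.1 0).1 l - (f.1 1).1 l) 0 / N f.1 0) -
    ((1 - s) * (f.1 1).1 l + s * (max ((f.1 1).1 l - (f.1 0).1 l) 0 / N f.1 0)) = _
  rcases le_total ((f.1 0).1 l) ((f.1 1).1 l) with h | h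
  · rw [max_eq_right (by linarith), max_eq_left (by linarith)]; ring
  · rw [max_eq_left (by linarith), max_eq_right (by linarith)]; ring

lemma Hc_ne {k : ℕ} (s : unitInterval) (f : Conf 2 (S k)) : Hc s f.1 0 ≠ Hc s f.1 1 := by
  intro h
  have hne : f.1 0 ≠ f.1 1 := fun h => by simpa using f.2 h
  apply hne
  apply Subtype.ext
  funext l
  have h1 := Hc_sub s f l
  rw [h, sub_self] at h1
  have hpos : 0 < (1 - (s : ℝ)) + s / N f.1 0 := by
    have hN := N_pos f 0
    rcases s.2.1.eq_or_lt with h0 | h0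
    · rw [← h0]; simp
    · have := div_pos h0 hN
      have := s.2.2
      linarith
  rcases mul_eq_zero.1 h1.symm with h2 | h2
  · exact absurd h2 hpos.ne'
  · linarith

noncomputable def H {k : ℕ} (q : Conf 2 (S k) × unitInterval) : Conf 2 (S k) :=
  ⟨fun i => ⟨Hc q.2 q.1.1 i, Hc_mem q.2 q.1 i⟩, by
    intro a b hab
    have hab := congrArg Subtype.val hab
    have hne := Hc_ne q.2 q.1
    fin_cases a <;> fin_cases b
    · rfl
    · exact absurd hab hne
    · exact absurd hab.symm hne
    · rfl⟩

lemma H_cont {k : ℕ} : Continuous (H (k := k)) := by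
  refine Continuous.subtype_mk (continuous_pi fun i =>
    Continuous.subtype_mk (continuous_pi fun l => ?_) _) _
  have c1 : ∀ i, Continuous fun q : Conf 2 (S k) × unitInterval => (q.1.1 i).1 l := fun i =>
    (coord_cont i l).comp continuous_fst
  have c2 : Continuous fun q : Conf 2 (S k) × unitInterval => N q.1.1 i :=
    (N_cont i).comp continuous_fst
  have c3 : Continuous fun q : Conf 2 (S k) × unitInterval => (q.2 : ℝ) :=
    continuous_subtype_val.comp continuous_snd
  exact ((continuous_const.sub c3).mul (c1 i)).add
    (c3.mul ((((c1 i).sub (c1 (i + 1))).max continuous_const).div c2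
      fun q => (N_pos q.1 i).ne'))

lemma H_equiv {k : ℕ} (s : unitInterval) (f g : Conf 2 (S k))
    (h : (confSetoid 2 (S k)).r f g) :
    (Quotient.mk _ (H (f, s)) : UConf 2 (S k)) = Quotient.mk _ (H (g, s)) := by
  obtain ⟨σ, h⟩ := h
  refine Quotient.sound ⟨σ, funext fun i => Subtype.ext (funext fun l => ?_)⟩
  show Hc s f.1 i l = Hc s g.1 (σ i) l
  unfold Hc N
  rw [h]
  simp only [Function.comp, perm_add]

noncomputable def Hcurry (k : ℕ) : C(Conf 2 (S k), C(unitInterval, UConf 2 (S k))) :=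
  ContinuousMap.curry ⟨fun q => Quotient.mk _ (H q), continuous_quotient_mk'.comp H_cont⟩

noncomputable def Hlift (k : ℕ) : C(UConf 2 (S k), C(unitInterval, UConf 2 (S k))) where
  toFun := Quotient.lift (Hcurry k) (fun f g h => by
    ext s
    exact H_equiv s f g h)
  continuous_toFun := (Hcurry k).continuous.quotient_lift _

lemma GF {k : ℕ} (hk : 3 ≤ k) :
    ContinuousMap.Homotopic (ContinuousMap.id _) ((G k).comp (F hk)) := by
  refine ⟨⟨⟨fun q => Hlift k q.2 q.1, ?_⟩, ?_, ?_⟩⟩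
  · exact (ContinuousMap.uncurry (Hlift k)).continuous.comp continuous_swap
  · rintro ⟨f⟩
    refine congrArg (Quotient.mk _) (Subtype.ext (funext fun i =>
      Subtype.ext (funext fun l => ?_)))
    show Hc ((0 : unitInterval) : ℝ) f.1 i l = _
    simp [Hc]
  · rintro ⟨f⟩
    symm
    show G0 (F0 hk f) = Quotient.mk _ (H (f, 1))
    have h0 : ((H (f, 1)).1 0).1 = fun l => max ((f.1 0).1 l - (f.1 1).1 l) 0 / N f.1 0 := by
      funext l
      show Hc ((1 : unitInterval) : ℝ) f.1 0 l = _
      simp [Hc]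
    have h1 : ((H (f, 1)).1 1).1 = fun l => max ((f.1 1).1 l - (f.1 0).1 l) 0 / N f.1 0 := by
      funext l
      show Hc ((1 : unitInterval) : ℝ) f.1 1 l = _
      simp [Hc, N_one f.1 1]
    apply G0_eq
    · intro l
      rw [h0, h1]
      rcases le_total ((f.1 0).1 l) ((f.1 1).1 l) with h | h
      · left; simp [max_eq_right (sub_nonpos.2 h)]
      · right; simp [max_eq_right (sub_nonpos.2 h)]
    · intro l
      rw [h0, h1]
      show _ = |(f.1 0).1 l - (f.1 1).1 l| / N f.1 0
      rw [← add_div]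
      congr 1
      rcases le_total ((f.1 0).1 l) ((f.1 1).1 l) with h | h
      · rw [max_eq_right (by linarith), max_eq_left (by linarith), abs_of_nonpos (by linarith)]
        ring
      · rw [max_eq_left (by linarith), max_eq_right (by linarith), abs_of_nonneg (by linarith)]
        ring

end StarConf

/-- The unordered configuration space of 2 points on the star graph `Y_k` (`k ≥ 3`)
is homotopy equivalent to the 1-skeleton of the `(k-1)`-simplex. -/
theorem uconf_two_star_graph_homotopyEquiv_simplex_one_skeleton (k : ℕ) (hk : 3 ≤ k) :
    Nonempty (ContinuousMap.HomotopyEquiv (UConf 2 (starGraph k))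
      (simplexOneSkeleton k)) := by
  refine ⟨((StarConf.uconfHomeo (StarConf.starHomeo hk) 2).symm.toHomotopyEquiv).trans
    ⟨StarConf.F hk, StarConf.G k, (StarConf.GF hk).symm, ?_⟩⟩
  rw [StarConf.FG hk]
end

section
/- Let G be a finite connected simple graph on vertex set Fin k with at least one edge, and suppose there is a vertex v₀ of G lying on every simple loop of G, i.e., for every vertex u and every closed walk c from u to u in G that is a cycle, v₀ belongs to the support of c. Then the 2-strand graph braid group B₂(|G|) = π₁(UC²(|G|)) (at any basepoint) is a free group. -/
/-- The geometric realization of a simple graph on `Fin k`: the union, over the edges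
`{i, j}` of `G`, of the straight segments in `ℝ^{Fin k}` joining the standard basis
vectors `e_i` and `e_j`. -/
def graphRealization {k : ℕ} (G : SimpleGraph (Fin k)) : Set (Fin k → ℝ) :=
  ⋃ (i : Fin k) (j : Fin k) (_ : G.Adj i j),
    segment ℝ (Pi.single i (1 : ℝ)) (Pi.single j (1 : ℝ))

namespace GB
section all

open unitInterval
set_option linter.unusedSectionVars false



/-- bottom edge of the square -/
def e1 : C(I, I × I) := ⟨fun t => (t, 0), by fun_prop⟩
/-- right edge of the square -/
def e2 : C(I, I × I) := ⟨fun t => (1, t), by fun_prop⟩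
/-- diagonal of the square -/
def ed : C(I, I × I) := ⟨fun t => (t, t), by fun_prop⟩

/-- A (singular, nonabelian) 1-cocycle on `Y` with values in `K`. -/
structure Coc (Y : Type) [TopologicalSpace Y] (K : Type) [Group K] where
  c : C(I, Y) → K
  tri : ∀ F : C(I × I, Y), c (F.comp e1) * c (F.comp e2) = c (F.comp ed)

section seg
variable {E : Type} [NormedAddCommGroup E] [NormedSpace ℝ E]

/-- affine segment -/
def seg (p q : E) : C(I, E) := ⟨fun t => p + (t : ℝ) • (q - p), by fun_prop⟩

/-- affine triangle -/
def combo (p q r : E) : C(I × I, E) :=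
  ⟨fun x => p + (x.1 : ℝ) • (q - p) + ((min x.1 x.2 : I) : ℝ) • (r - q), by fun_prop⟩

lemma combo_e1 (p q r : E) : (combo p q r).comp e1 = seg p q := by
  ext t
  simp [combo, e1, seg, min_eq_right t.2.1]

lemma combo_e2 (p q r : E) : (combo p q r).comp e2 = seg q r := by
  ext t
  simp [combo, e2, seg, min_eq_right t.2.2]

lemma combo_ed (p q r : E) : (combo p q r).comp ed = seg p r := by
  ext t
  simp only [combo, ed, seg, ContinuousMap.comp_apply, ContinuousMap.coe_mk, min_self]
  module

lemma combo_mem {D : Set E} (hD : Convex ℝ D) {p q r : E} (hp : p ∈ D) (hq : q ∈ D) (hr : r ∈ D)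
    (x : I × I) : combo p q r x ∈ D := by
  set s : ℝ := ((x.1 : I) : ℝ)
  set u : ℝ := ((min x.1 x.2 : I) : ℝ)
  have hus : u ≤ s := by
    have : (min x.1 x.2 : I) ≤ x.1 := min_le_left _ _
    exact this
  have h0 : 0 ≤ u := (min x.1 x.2).2.1
  have h1 : s ≤ 1 := x.1.2.2
  have : combo p q r x = (1 - s) • p + (s - u) • q + u • r := by
    simp only [combo, ContinuousMap.coe_mk]
    module
  rw [this]
  have := hD.sum_mem (t := Finset.univ) (w := ![1 - s, s - u, u]) (z := ![p, q, r])
    (by intro i _; fin_cases i <;> simp <;> linarith)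
    (by simp [Fin.sum_univ_three]) (by intro i _; fin_cases i <;> simp <;> assumption)
  simpa [Fin.sum_univ_three] using this

lemma seg_mem {D : Set E} (hD : Convex ℝ D) {p q : E} (hp : p ∈ D) (hq : q ∈ D) (t : I) :
    seg p q t ∈ D := by
  have := combo_mem hD hp hq hq (t, 0)
  rw [← combo_e1 p q q]
  exact this

end seg

/-- A locally defined cocycle with respect to a cover `U`. -/
def LocTri {Y : Type} [TopologicalSpace Y] {K : Type} [Group K] {ι : Type} (U : ι → Set Y)
    (c : C(I, Y) → K) : Prop :=
  ∀ (n : ι) (F : C(I × I, Y)), (∀ x, F x ∈ U n) →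
    c (F.comp e1) * c (F.comp e2) = c (F.comp ed)

section int
variable {Y : Type} [TopologicalSpace Y] {K : Type} [Group K] {ι : Type} {U : ι → Set Y}
variable {E : Type} [NormedAddCommGroup E] [NormedSpace ℝ E]

lemma LocTri.seg_tri {c : C(I, Y) → K} (h : LocTri U c) (G : C(E, Y)) {D : Set E}
    (hD : Convex ℝ D) {n : ι} (hn : ∀ x ∈ D, G x ∈ U n) {p q r : E} (hp : p ∈ D) (hq : q ∈ D)
    (hr : r ∈ D) : c (G.comp (seg p q)) * c (G.comp (seg q r)) = c (G.comp (seg p r)) := by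
  have := h n (G.comp (combo p q r)) (fun x => hn _ (combo_mem hD hp hq hr x))
  rwa [ContinuousMap.comp_assoc, ContinuousMap.comp_assoc, ContinuousMap.comp_assoc,
    combo_e1, combo_e2, combo_ed] at this

lemma exists_leb [ProperSpace E] (hU : ∀ n, IsOpen (U n)) (hcov : ∀ y, ∃ n, y ∈ U n)
    (G : C(E, Y)) : ∃ δ > 0, ∀ p ∈ Metric.closedBall (0 : E) 1, ∃ n, ∀ x ∈ Metric.ball p δ,
      G x ∈ U n := by
  obtain ⟨δ, hδ, h⟩ := lebesgue_number_lemma_of_metric (isCompact_closedBall (0 : E) 1)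
    (c := fun n => G ⁻¹' U n) (fun n => (hU n).preimage G.continuous)
    (fun x _ => by simpa using hcov (G x))
  exact ⟨δ, hδ, fun p hp => h p hp⟩

lemma exists_int [ProperSpace E] {c : C(I, Y) → K} (h : LocTri U c)
    (hU : ∀ n, IsOpen (U n)) (hcov : ∀ y, ∃ n, y ∈ U n) (G : C(E, Y)) :
    ∃ (Φ : E → K), ∃ δ > 0, ∀ p ∈ Metric.closedBall (0 : E) 1, ∀ q ∈ Metric.closedBall (0 : E) 1,
      dist p q < δ → (Φ p)⁻¹ * Φ q = c (G.comp (seg p q)) := by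
  obtain ⟨δ, hδ, hl⟩ := exists_leb hU hcov G
  obtain ⟨N, hN⟩ := exists_nat_gt (2 / δ)
  have hN0 : (0 : ℝ) < N := lt_trans (by positivity) hN
  have hNδ : 1 / (N : ℝ) < δ / 2 := by
    rw [div_lt_iff₀ hδ] at hN
    rw [div_lt_iff₀ hN0]; linarith
  -- partial products
  let P : E → ℕ → K := fun p n => Nat.rec 1
    (fun i a => a * c (G.comp (seg (((i : ℝ) / N) • p) (((i + 1 : ℝ) / N) • p)))) n
  have P0 : ∀ p, P p 0 = 1 := fun p => rfl
  have PS : ∀ p i, P p (i + 1) =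
    P p i * c (G.comp (seg (((i : ℝ) / N) • p) (((i + 1 : ℝ) / N) • p))) := fun p i => rfl
  refine ⟨fun p => P p N, δ / 2, by positivity, fun p hp q hq hpq => ?_⟩
  have hp' : ‖p‖ ≤ 1 := by simpa using hp
  have hq' : ‖q‖ ≤ 1 := by simpa using hq
  have key : ∀ i : ℕ, i ≤ N → P p i * c (G.comp (seg (((i : ℝ) / N) • p) (((i : ℝ) / N) • q)))
      = P q i := by
    intro i
    induction i with
    | zero =>
      intro _
      obtain ⟨n, hn⟩ := hl 0 (by simp)
      have := h.seg_tri G (convex_ball (0 : E) δ) hn (p := 0) (q := 0) (r := 0) (by simpa) (by simpa)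
        (by simpa)
      simp only [P0, Nat.cast_zero, zero_div, zero_smul, one_mul]
      simpa using this
    | succ i ih =>
      intro hi
      have ih := ih (by omega)
      rw [PS, PS, ← ih]
      push_cast
      set a := ((i : ℝ) / N) • p
      set b := ((i + 1 : ℝ) / N) • p
      set a' := ((i : ℝ) / N) • q
      set b' := ((i + 1 : ℝ) / N) • q
      have hi' : ((i : ℝ) + 1) / N ≤ 1 := by
        rw [div_le_one hN0]; exact_mod_cast hi
      have hi0 : (0 : ℝ) ≤ ((i : ℝ) + 1) / N := by positivity
      have hi'' : (i : ℝ) / N ≤ 1 := by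
        rw [div_le_one hN0]; exact_mod_cast (by omega : i ≤ N)
      have hii : (0 : ℝ) ≤ (i : ℝ) / N := by positivity
      have ha : a ∈ Metric.closedBall (0 : E) 1 := by
        simp only [a, mem_closedBall_zero_iff, norm_smul, Real.norm_of_nonneg hii]
        nlinarith [norm_nonneg p]
      obtain ⟨n, hn⟩ := hl a ha
      have haa : a ∈ Metric.ball a δ := by simpa
      have e : ((i : ℝ) + 1) / N = (i : ℝ) / N + 1 / N := by ring
      have hb : dist b a < δ / 2 := by
        have : b - a = (1 / (N : ℝ)) • p := by simp only [a, b, e]; module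
        rw [dist_eq_norm, this, norm_smul, Real.norm_of_nonneg (by positivity)]
        have : (0 : ℝ) ≤ 1 / N := by positivity
        nlinarith [norm_nonneg p]
      have hdist : ‖q - p‖ < δ / 2 := by rwa [← dist_eq_norm, dist_comm]
      have ha' : dist a' a < δ / 2 := by
        have : a' - a = ((i : ℝ) / N) • (q - p) := by simp only [a, a']; module
        rw [dist_eq_norm, this, norm_smul, Real.norm_of_nonneg hii]
        nlinarith [norm_nonneg (q - p)]
      have hb' : dist b' b < δ / 2 := by
        have : b' - b = (((i : ℝ) + 1) / N) • (q - p) := by simp only [b, b']; module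
        rw [dist_eq_norm, this, norm_smul, Real.norm_of_nonneg hi0]
        nlinarith [norm_nonneg (q - p)]
      have m1 : b ∈ Metric.ball a δ := by rw [Metric.mem_ball]; linarith
      have m2 : a' ∈ Metric.ball a δ := by rw [Metric.mem_ball]; linarith
      have m3 : b' ∈ Metric.ball a δ := by
        rw [Metric.mem_ball]; linarith [dist_triangle b' b a]
      rw [mul_assoc, mul_assoc, h.seg_tri G (convex_ball a δ) hn haa m1 m3,
        h.seg_tri G (convex_ball a δ) hn haa m2 m3]
  have := key N le_rfl
  rw [div_self hN0.ne', one_smul, one_smul] at this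
  simp only
  rw [← this, inv_mul_cancel_left]

lemma int_unique {G : C(ℝ, Y)} {c : C(I, Y) → K} {Φ Ψ : ℝ → K} {δ ε : ℝ} (hδ : 0 < δ) (hε : 0 < ε)
    (h1 : ∀ p ∈ Metric.closedBall (0 : ℝ) 1, ∀ q ∈ Metric.closedBall (0 : ℝ) 1,
      dist p q < δ → (Φ p)⁻¹ * Φ q = c (G.comp (seg p q)))
    (h2 : ∀ p ∈ Metric.closedBall (0 : ℝ) 1, ∀ q ∈ Metric.closedBall (0 : ℝ) 1,
      dist p q < ε → (Ψ p)⁻¹ * Ψ q = c (G.comp (seg p q))) :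
    (Φ 0)⁻¹ * Φ 1 = (Ψ 0)⁻¹ * Ψ 1 := by
  obtain ⟨N, hN⟩ := exists_nat_gt (1 / (min δ ε))
  have hm : 0 < min δ ε := lt_min hδ hε
  have hN0 : (0 : ℝ) < N := lt_trans (by positivity) hN
  have hNδ : 1 / (N : ℝ) < min δ ε := by
    rw [div_lt_iff₀ hm] at hN
    rw [div_lt_iff₀ hN0]; linarith
  have key : ∀ i : ℕ, i ≤ N → (Φ 0)⁻¹ * Φ ((i : ℝ) / N) = (Ψ 0)⁻¹ * Ψ ((i : ℝ) / N) := by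
    intro i
    induction i with
    | zero => intro _; simp
    | succ i ih =>
      intro hi
      have ih := ih (by omega)
      push_cast
      set a := ((i : ℝ) / N)
      set b := ((i + 1 : ℝ) / N)
      have hb1 : b ≤ 1 := by
        rw [div_le_one hN0]; exact_mod_cast hi
      have hb0 : (0 : ℝ) ≤ b := by positivity
      have ha1 : a ≤ 1 := by
        rw [div_le_one hN0]; exact_mod_cast (by omega : i ≤ N)
      have ha0 : (0 : ℝ) ≤ a := by positivity
      have hd : dist a b < min δ ε := by
        rw [dist_comm, Real.dist_eq, show b - a = 1 / N by simp only [a, b]; ring,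
          abs_of_nonneg (by positivity)]
        exact hNδ
      have ma : a ∈ Metric.closedBall (0 : ℝ) 1 := by simp [abs_le]; constructor <;> linarith
      have mb : b ∈ Metric.closedBall (0 : ℝ) 1 := by simp [abs_le]; constructor <;> linarith
      have e1 := h1 a ma b mb (lt_of_lt_of_le hd (min_le_left _ _))
      have e2 := h2 a ma b mb (lt_of_lt_of_le hd (min_le_right _ _))
      have : (Φ 0)⁻¹ * Φ b = ((Φ 0)⁻¹ * Φ a) * ((Φ a)⁻¹ * Φ b) := by group
      rw [this, e1, ih, ← e2]; group
  have := key N le_rfl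
  rwa [div_self hN0.ne'] at this

/-- extension of a path to the line -/
noncomputable def ext1 (γ : C(I, Y)) : C(ℝ, Y) :=
  ⟨fun t => γ (Set.projIcc 0 1 zero_le_one t), by fun_prop⟩

/-- extension of a square to the plane -/
noncomputable def ext2 (F : C(I × I, Y)) : C(ℝ × ℝ, Y) :=
  ⟨fun t => F (Set.projIcc 0 1 zero_le_one t.1, Set.projIcc 0 1 zero_le_one t.2), by fun_prop⟩

lemma ext1_seg (γ : C(I, Y)) : (ext1 γ).comp (seg 0 1) = γ := by
  ext t
  simp [ext1, seg]

theorem glue {c : C(I, Y) → K} (h : LocTri U c)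
    (hU : ∀ n, IsOpen (U n)) (hcov : ∀ y, ∃ n, y ∈ U n) :
    ∃ d : Coc Y K, ∀ n γ, (∀ t, γ t ∈ U n) → d.c γ = c γ := by
  choose Φ δ hδ hΦ using fun γ : C(I, Y) => exists_int h hU hcov (ext1 γ)
  refine ⟨⟨fun γ => (Φ γ 0)⁻¹ * Φ γ 1, ?_⟩, ?_⟩
  · intro F
    obtain ⟨Ψ, ε, hε, hΨ⟩ := exists_int h hU hcov (ext2 F)
    have k1 := int_unique (Φ := Φ (F.comp e1)) (Ψ := fun t => Ψ (t, 0)) (hδ _) hε (hΦ (F.comp e1))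
      (by
        intro p hp q hq hpq
        simp only [Metric.mem_closedBall, dist_zero_right, Real.norm_eq_abs] at hp hq
        rw [hΨ (p, 0) (by simpa [Prod.norm_def] using hp) (q, 0)
          (by simpa [Prod.norm_def] using hq) (by simpa [Prod.dist_eq] using hpq)]
        congr 1
        ext t
        simp [ext1, ext2, seg, e1])
    have k2 := int_unique (Φ := Φ (F.comp e2)) (Ψ := fun t => Ψ (1, t)) (hδ _) hε (hΦ (F.comp e2))
      (by
        intro p hp q hq hpq
        simp only [Metric.mem_closedBall, dist_zero_right, Real.norm_eq_abs] at hp hq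
        rw [hΨ (1, p) (by simpa [Prod.norm_def] using hp) (1, q)
          (by simpa [Prod.norm_def] using hq) (by simpa [Prod.dist_eq] using hpq)]
        congr 1
        ext t
        simp [ext1, ext2, seg, e2])
    have k3 := int_unique (Φ := Φ (F.comp ed)) (Ψ := fun t => Ψ (t, t)) (hδ _) hε (hΦ (F.comp ed))
      (by
        intro p hp q hq hpq
        simp only [Metric.mem_closedBall, dist_zero_right, Real.norm_eq_abs] at hp hq
        rw [hΨ (p, p) (by simpa [Prod.norm_def] using hp) (q, q)
          (by simpa [Prod.norm_def] using hq) (by simpa [Prod.dist_eq] using hpq)]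
        congr 1)
    rw [k1, k2, k3]
    group
  · intro n γ hγ
    have := int_unique (Φ := Φ γ) (Ψ := fun t => c ((ext1 γ).comp (seg 0 t))) (hδ _) one_pos (hΦ γ)
      (by
        intro p hp q hq hpq
        rw [← h.seg_tri (ext1 γ) convex_univ (n := n) (fun x _ => hγ _) (p := 0) (q := p) (r := q)
          trivial trivial trivial, inv_mul_cancel_left])
    have h1 : c ((ext1 γ).comp (seg 0 0)) = 1 := by
      have := h.seg_tri (ext1 γ) convex_univ (n := n) (fun x _ => hγ _) (p := 0) (q := 0) (r := 0)
          trivial trivial trivial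
      simpa using this
    simp only
    rw [this, h1, ext1_seg]; simp

lemma Coc.loc (d : Coc Y K) : LocTri U d.c := fun _ F _ => d.tri F

theorem coc_unique (d d' : Coc Y K) (hU : ∀ n, IsOpen (U n)) (hcov : ∀ y, ∃ n, y ∈ U n)
    (hag : ∀ n γ, (∀ t, γ t ∈ U n) → d.c γ = d'.c γ) (γ : C(I, Y)) : d.c γ = d'.c γ := by
  obtain ⟨δ, hδ, hl⟩ := exists_leb hU hcov (ext1 γ)
  have st : ∀ (d : Coc Y K) (p q r : ℝ), d.c ((ext1 γ).comp (seg p q)) *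
      d.c ((ext1 γ).comp (seg q r)) = d.c ((ext1 γ).comp (seg p r)) := fun d p q r =>
    (d.loc (U := fun _ : Unit => Set.univ)).seg_tri (ext1 γ) convex_univ (n := ())
      (fun x _ => trivial) trivial trivial trivial
  have := int_unique (G := ext1 γ) (c := d.c) (Φ := fun t => d.c ((ext1 γ).comp (seg 0 t)))
    (Ψ := fun t => d'.c ((ext1 γ).comp (seg 0 t))) one_pos hδ
    (by
      intro p hp q hq hpq
      rw [← st d 0 p q, inv_mul_cancel_left])
    (by
      intro p hp q hq hpq
      rw [← st d' 0 p q, inv_mul_cancel_left]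
      obtain ⟨n, hn⟩ := hl p hp
      refine (hag n _ fun t => hn _ (seg_mem (convex_ball p δ) (by simpa) ?_ t)).symm
      rwa [Metric.mem_ball, dist_comm])
  have h0 : ∀ d : Coc Y K, d.c ((ext1 γ).comp (seg 0 0)) = 1 := fun d => by
    simpa using st d 0 0 0
  simpa [h0, ext1_seg] using this

end int

section acyc
variable {Y Z A B C : Type} [TopologicalSpace Y] [TopologicalSpace Z] [TopologicalSpace A]
  [TopologicalSpace B] [TopologicalSpace C] {K H : Type} [Group K] [Group H]

/-- pullback of a cocycle -/
def Coc.pull (d : Coc Y K) (g : C(Z, Y)) : Coc Z K :=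
  ⟨fun γ => d.c (g.comp γ), fun F => d.tri (g.comp F)⟩

/-- push forward along a group hom -/
def Coc.push (d : Coc Y K) (p : K →* H) : Coc Y H :=
  ⟨fun γ => p (d.c γ), fun F => by rw [← map_mul, d.tri]⟩

/-- gauge transformation -/
def Coc.gauge (d : Coc Y K) (k : Y → K) : Coc Y K :=
  ⟨fun γ => k (γ 0) * d.c γ * (k (γ 1))⁻¹, fun F => by
    rw [← d.tri]
    simp only [ContinuousMap.comp_apply, e1, e2, ed, ContinuousMap.coe_mk]
    group⟩

/-- coboundary -/
def cob (f : Y → K) : Coc Y K :=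
  ⟨fun γ => (f (γ 0))⁻¹ * f (γ 1), fun F => by
    simp only [ContinuousMap.comp_apply, e1, e2, ed, ContinuousMap.coe_mk]
    group⟩

lemma Coc.const (d : Coc Y K) (y : Y) : d.c (ContinuousMap.const I y) = 1 := by
  have := d.tri (ContinuousMap.const _ y)
  simpa using this

lemma Coc.square (d : Coc Y K) (Q : C(I × I, Y)) :
    d.c ⟨fun t => Q (t, 0), by fun_prop⟩ * d.c ⟨fun t => Q (1, t), by fun_prop⟩ =
    d.c ⟨fun t => Q (0, t), by fun_prop⟩ * d.c ⟨fun t => Q (t, 1), by fun_prop⟩ := by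
  have h1 := d.tri Q
  have h2 := d.tri (Q.comp ⟨Prod.swap, continuous_swap⟩)
  exact h1.trans h2.symm

/-- every cocycle is a coboundary -/
def Acyc (Y : Type) [TopologicalSpace Y] : Prop :=
  ∀ (K : Type) [Group K] (d : Coc Y K), ∃ f : Y → K, ∀ γ, d.c γ = (f (γ 0))⁻¹ * f (γ 1)

/-- cocycles lift along surjections -/
def Proj (Y : Type) [TopologicalSpace Y] : Prop :=
  ∀ (K H : Type) [Group K] [Group H] (p : K →* H), Function.Surjective p → ∀ d : Coc Y H,
    ∃ d' : Coc Y K, ∀ γ, p (d'.c γ) = d.c γ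

lemma Acyc.proj (h : Acyc Y) : Proj Y := by
  intro K H _ _ p hp d
  obtain ⟨f, hf⟩ := h H d
  refine ⟨cob (fun y => Function.surjInv hp (f y)), fun γ => ?_⟩
  simp [cob, Function.surjInv_eq hp, hf]

lemma Acyc.of_htpy (hZ : Acyc Z) (f : C(Y, Z)) (g : C(Z, Y)) (Φ : C(I × Y, Y))
    (h0 : ∀ y, Φ (0, y) = y) (h1 : ∀ y, Φ (1, y) = g (f y)) : Acyc Y := by
  intro K _ d
  obtain ⟨φ, hφ⟩ := hZ K (d.pull g)
  let h : Y → K := fun y => d.c ⟨fun t => Φ (t, y), by fun_prop⟩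
  refine ⟨fun y => φ (f y) * (h y)⁻¹, fun γ => ?_⟩
  have := d.square ⟨fun x => Φ (x.1, γ x.2), by fun_prop⟩
  simp only [ContinuousMap.coe_mk, h0, h1] at this
  have h2 := hφ (f.comp γ)
  simp only [Coc.pull, ContinuousMap.comp_apply] at h2
  have h3 : (g.comp (f.comp γ)) = ⟨fun t => g (f (γ t)), by fun_prop⟩ := rfl
  rw [h3] at h2
  rw [h2] at this
  have h4 : (⟨fun t => γ t, by fun_prop⟩ : C(I, Y)) = γ := rfl
  rw [h4] at this
  change h (γ 0) * _ = d.c γ * h (γ 1) at this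
  rw [← mul_inv_eq_iff_eq_mul] at this
  rw [← this]
  group

lemma Acyc.of_equiv (hZ : Acyc Z) (e : Y ≃ₜ Z) : Acyc Y :=
  hZ.of_htpy (e : C(Y, Z)) (e.symm : C(Z, Y)) ⟨fun x => x.2, by fun_prop⟩ (fun _ => rfl)
    (fun y => by simp)

lemma Acyc.punit : Acyc PUnit := by
  intro K _ d
  refine ⟨fun _ => 1, fun γ => ?_⟩
  have : γ = ContinuousMap.const I PUnit.unit := by ext
  rw [this, d.const]; simp

lemma Acyc.of_star {E : Type} [AddCommGroup E] [Module ℝ E] [TopologicalSpace E]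
    [IsTopologicalAddGroup E] [ContinuousSMul ℝ E] {D : Set E} {p : E}
    (hD : ∀ y ∈ D, ∀ t : ℝ, 0 ≤ t → t ≤ 1 → y + t • (p - y) ∈ D) : Acyc D := by
  by_cases hne : Nonempty D
  · obtain ⟨y, hy⟩ := hne
    have hp : p ∈ D := by simpa using hD y hy 1 (by norm_num) le_rfl
    exact Acyc.punit.of_htpy ⟨fun _ => PUnit.unit, by fun_prop⟩ ⟨fun _ => ⟨p, hp⟩, by fun_prop⟩
      ⟨fun x => ⟨(x.2 : E) + (x.1 : ℝ) • (p - x.2), hD _ x.2.2 _ x.1.2.1 x.1.2.2⟩, by fun_prop⟩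
      (fun y => by simp) (fun y => by simp)
  · intro K _ d
    exact ⟨fun _ => 1, fun γ => (hne ⟨γ 0⟩).elim⟩

lemma Acyc.of_fib {W : Type} (κ : Y → W) (hκ : ∀ (γ : C(I, Y)) t, κ (γ t) = κ (γ 0))
    (hf : ∀ w, Acyc {y // κ y = w}) : Acyc Y := by
  intro K _ d
  choose f hf using fun w => hf w K (d.pull ⟨Subtype.val, continuous_subtype_val⟩)
  refine ⟨fun y => f (κ y) ⟨y, rfl⟩, fun γ => ?_⟩
  have h := hf (κ (γ 0)) ⟨fun t => ⟨γ t, hκ γ t⟩, by fun_prop⟩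
  have h1 : ∀ w, (hw : κ (γ 1) = w) → f w ⟨γ 1, hw⟩ = f (κ (γ 1)) ⟨γ 1, rfl⟩ := by
    rintro w rfl; rfl
  simp only [ContinuousMap.coe_mk] at h
  rw [h1] at h
  exact h

lemma lift_emb {T : Type} [TopologicalSpace T] {i : C(A, Y)} (hi : Topology.IsEmbedding i)
    (F : C(T, Y)) (hF : ∀ x, F x ∈ Set.range i) : ∃ F' : C(T, A), i.comp F' = F := by
  choose g hg using hF
  have : i ∘ g = F := funext hg
  exact ⟨⟨g, hi.continuous_iff.2 (this ▸ F.continuous)⟩, ContinuousMap.ext hg⟩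

lemma comp_inj {T : Type} [TopologicalSpace T] {i : C(A, Y)} (hi : Function.Injective i)
    {f g : C(T, A)} (h : i.comp f = i.comp g) : f = g := by
  ext x
  exact hi (congrArg (fun F : C(T, Y) => F x) h)

/-- the two-set cover -/
def cov (i : C(A, Y)) (j : C(B, Y)) : Bool → Set Y := fun b => cond b (Set.range i) (Set.range j)

open Classical in
theorem vanKampen {i : C(A, Y)} {j : C(B, Y)} (hi : Topology.IsOpenEmbedding i)
    (hj : Topology.IsOpenEmbedding j) (hc : ∀ y, y ∈ Set.range i ∨ y ∈ Set.range j)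
    (a : Coc A K) (b : Coc B K) (hab : ∀ γA γB, i.comp γA = j.comp γB → a.c γA = b.c γB) :
    ∃ d : Coc Y K, (∀ γ, d.c (i.comp γ) = a.c γ) ∧ (∀ γ, d.c (j.comp γ) = b.c γ) := by
  let c0 : C(I, Y) → K := fun γ => if h : ∃ τ : C(I, A), i.comp τ = γ then a.c h.choose else
    if h : ∃ τ : C(I, B), j.comp τ = γ then b.c h.choose else 1
  have cA : ∀ τ, c0 (i.comp τ) = a.c τ := by
    intro τ
    have h : ∃ τ' : C(I, A), i.comp τ' = i.comp τ := ⟨τ, rfl⟩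
    simp only [c0, dif_pos h]
    rw [comp_inj hi.injective h.choose_spec]
  have cB : ∀ τ, c0 (j.comp τ) = b.c τ := by
    intro τ
    by_cases h : ∃ τ' : C(I, A), i.comp τ' = j.comp τ
    · simp only [c0, dif_pos h]
      exact hab _ _ h.choose_spec
    · have h' : ∃ τ' : C(I, B), j.comp τ' = j.comp τ := ⟨τ, rfl⟩
      simp only [c0, dif_neg h, dif_pos h']
      rw [comp_inj hj.injective h'.choose_spec]
  have hloc : LocTri (cov i j) c0 := by
    intro n F hF
    cases n
    · obtain ⟨F', rfl⟩ := lift_emb hj.isEmbedding F hF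
      rw [ContinuousMap.comp_assoc, ContinuousMap.comp_assoc, ContinuousMap.comp_assoc, cB, cB, cB,
        b.tri]
    · obtain ⟨F', rfl⟩ := lift_emb hi.isEmbedding F hF
      rw [ContinuousMap.comp_assoc, ContinuousMap.comp_assoc, ContinuousMap.comp_assoc, cA, cA, cA,
        a.tri]
  obtain ⟨d, hd⟩ := glue hloc (by rintro (_ | _); exacts [hj.isOpen_range, hi.isOpen_range])
    (fun y => (hc y).elim (fun h => ⟨true, h⟩) (fun h => ⟨false, h⟩))
  refine ⟨d, fun γ => ?_, fun γ => ?_⟩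
  · rw [hd true _ (fun t => ⟨γ t, rfl⟩), cA]
  · rw [hd false _ (fun t => ⟨γ t, rfl⟩), cB]

theorem coc_ext {i : C(A, Y)} {j : C(B, Y)} (hi : Topology.IsOpenEmbedding i)
    (hj : Topology.IsOpenEmbedding j) (hc : ∀ y, y ∈ Set.range i ∨ y ∈ Set.range j)
    (d d' : Coc Y K) (h1 : ∀ γ, d.c (i.comp γ) = d'.c (i.comp γ))
    (h2 : ∀ γ, d.c (j.comp γ) = d'.c (j.comp γ)) (γ : C(I, Y)) : d.c γ = d'.c γ := by
  refine coc_unique (U := cov i j) d d'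
    (by rintro (_ | _); exacts [hj.isOpen_range, hi.isOpen_range])
    (fun y => (hc y).elim (fun h => ⟨true, h⟩) (fun h => ⟨false, h⟩)) ?_ γ
  intro n γ hγ
  cases n
  · obtain ⟨F', rfl⟩ := lift_emb hj.isEmbedding γ hγ
    exact h2 _
  · obtain ⟨F', rfl⟩ := lift_emb hi.isEmbedding γ hγ
    exact h1 _

open Classical in
theorem proj_glue {i : C(A, Y)} {j : C(B, Y)} (hi : Topology.IsOpenEmbedding i)
    (hj : Topology.IsOpenEmbedding j) (hc : ∀ y, y ∈ Set.range i ∨ y ∈ Set.range j)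
    {l : C(C, A)} {m : C(C, B)} (hl : Topology.IsEmbedding l) (hlm : ∀ x, i (l x) = j (m x))
    (hC : ∀ x y, i x = j y → x ∈ Set.range l) (hA : Proj A) (hB : Proj B) (hCa : Acyc C) :
    Proj Y := by
  intro K H _ _ p hp d
  obtain ⟨a, ha⟩ := hA K H p hp (d.pull i)
  obtain ⟨b, hb⟩ := hB K H p hp (d.pull j)
  obtain ⟨f, hf⟩ := hCa K (a.pull l)
  obtain ⟨g, hg⟩ := hCa K (b.pull m)
  have hcomp : i.comp l = j.comp m := ContinuousMap.ext hlm
  have hp1 : ∀ γ, p (a.c (l.comp γ)) = p (b.c (m.comp γ)) := by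
    intro γ
    rw [ha, hb]
    simp only [Coc.pull, ← ContinuousMap.comp_assoc, hcomp]
  let h : C → H := fun x => p (f x) * (p (g x))⁻¹
  have hconst : ∀ γ : C(I, C), h (γ 0) = h (γ 1) := by
    intro γ
    have e := hp1 γ
    have e1 : a.c (l.comp γ) = _ := hf γ
    have e2 : b.c (m.comp γ) = _ := hg γ
    rw [e1, e2] at e
    simp only [map_mul, map_inv] at e
    simp only [h]
    have e3 : p (f (γ 1)) = p (f (γ 0)) * ((p (g (γ 0)))⁻¹ * p (g (γ 1))) := by
      rw [← e]; group
    rw [e3]; group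
  let n : C → K := fun x => Function.surjInv hp (h x)⁻¹
  have hn : ∀ x, p (n x) = (h x)⁻¹ := fun x => Function.surjInv_eq hp _
  let k0 : C → K := fun x => (g x)⁻¹ * (n x * f x)
  have hk0 : ∀ x, p (k0 x) = 1 := by
    intro x
    simp only [k0, map_mul, map_inv, hn, h]
    group
  let k : A → K := fun x => if hx : ∃ z, l z = x then k0 hx.choose else 1
  have hk : ∀ z, k (l z) = k0 z := by
    intro z
    have hx : ∃ z', l z' = l z := ⟨z, rfl⟩
    simp only [k, dif_pos hx]
    rw [hl.injective hx.choose_spec]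
  have hkp : ∀ x, p (k x) = 1 := by
    intro x
    by_cases hx : ∃ z, l z = x
    · simp only [k, dif_pos hx, hk0]
    · simp only [k, dif_neg hx, map_one]
  obtain ⟨D, hD1, hD2⟩ := vanKampen hi hj hc (a.gauge k) b (by
    intro γA γB hAB
    have hmem : ∀ t, γA t ∈ Set.range l := fun t =>
      hC _ (γB t) (congrArg (fun F : C(I, Y) => F t) hAB)
    obtain ⟨γ, rfl⟩ := lift_emb hl γA hmem
    rw [← ContinuousMap.comp_assoc, hcomp, ContinuousMap.comp_assoc] at hAB
    obtain rfl := comp_inj hj.injective hAB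
    have e1 : a.c (l.comp γ) = _ := hf γ
    have e2 : b.c (m.comp γ) = _ := hg γ
    simp only [Coc.gauge, ContinuousMap.comp_apply, hk, e1, e2, k0]
    have : n (γ 0) = n (γ 1) := by simp only [n, hconst γ]
    rw [this]
    group)
  refine ⟨D, fun γ => ?_⟩
  refine coc_ext hi hj hc (D.push p) d (fun γ => ?_) (fun γ => ?_) γ
  · change p (D.c _) = _
    rw [hD1]
    simp only [Coc.gauge, map_mul, map_inv, hkp, ha, Coc.pull]
    group
  · change p (D.c _) = _
    rw [hD2, hb]; rfl

open Classical in
theorem acyc_glue {i : C(A, Y)} {j : C(B, Y)} (hi : Topology.IsOpenEmbedding i)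
    (hj : Topology.IsOpenEmbedding j) (hc : ∀ y, y ∈ Set.range i ∨ y ∈ Set.range j)
    (hA : Acyc A) (hB : Acyc B)
    (hC : ∀ a a' b b', i a = j b → i a' = j b' → Joined b b' →
      ∃ (γA : C(I, A)) (γB : C(I, B)), i.comp γA = j.comp γB ∧ γA 0 = a ∧ γA 1 = a') :
    Acyc Y := by
  intro K _ d
  obtain ⟨f, hf⟩ := hA K (d.pull i)
  obtain ⟨g, hg⟩ := hB K (d.pull j)
  let n : B → K := fun b => if h : ∃ x : A × B, i x.1 = j x.2 ∧ Joined b x.2 then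
    f h.choose.1 * (g h.choose.2)⁻¹ else 1
  have key : ∀ a a' b b', i a = j b → i a' = j b' → Joined b b' →
      f a * (g b)⁻¹ = f a' * (g b')⁻¹ := by
    intro a a' b b' h h' hj'
    obtain ⟨γA, γB, hAB, rfl, rfl⟩ := hC a a' b b' h h' hj'
    have e0 : γB 0 = b := hj.injective ((congrArg (fun F : C(I, Y) => F 0) hAB).symm.trans h)
    have e1 : γB 1 = b' := hj.injective ((congrArg (fun F : C(I, Y) => F 1) hAB).symm.trans h')
    have hf' : d.c (i.comp γA) = _ := hf γA
    have hg' : d.c (j.comp γB) = _ := hg γB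
    rw [hAB, hg', e0, e1] at hf'
    have : f (γA 1) = f (γA 0) * ((g b)⁻¹ * g b') := by rw [hf']; group
    rw [this]; group
  have hn : ∀ a b, i a = j b → n b * g b = f a := by
    intro a b hab
    have h : ∃ x : A × B, i x.1 = j x.2 ∧ Joined b x.2 := ⟨(a, b), hab, Joined.refl b⟩
    simp only [n, dif_pos h]
    rw [← key a _ b _ hab h.choose_spec.1 h.choose_spec.2]
    group
  have hnc : ∀ b b', Joined b b' → n b = n b' := by
    intro b b' hbb
    by_cases h : ∃ x : A × B, i x.1 = j x.2 ∧ Joined b x.2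
    · have h' : ∃ x : A × B, i x.1 = j x.2 ∧ Joined b' x.2 :=
        h.imp fun x hx => ⟨hx.1, hbb.symm.trans hx.2⟩
      simp only [n, dif_pos h, dif_pos h']
      exact key _ _ _ _ h.choose_spec.1 h'.choose_spec.1
        ((h.choose_spec.2.symm.trans hbb).trans h'.choose_spec.2)
    · have h' : ¬ ∃ x : A × B, i x.1 = j x.2 ∧ Joined b' x.2 :=
        fun h' => h (h'.imp fun x hx => ⟨hx.1, hbb.trans hx.2⟩)
      simp only [n, dif_neg h, dif_neg h']
  let F : Y → K := fun y => if h : ∃ a, i a = y then f h.choose else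
    if h : ∃ b, j b = y then n h.choose * g h.choose else 1
  have FA : ∀ a, F (i a) = f a := by
    intro a
    have h : ∃ a', i a' = i a := ⟨a, rfl⟩
    simp only [F, dif_pos h]
    rw [hi.injective h.choose_spec]
  have FB : ∀ b, F (j b) = n b * g b := by
    intro b
    by_cases h : ∃ a', i a' = j b
    · simp only [F, dif_pos h]
      exact (hn _ _ h.choose_spec).symm
    · have h' : ∃ b', j b' = j b := ⟨b, rfl⟩
      simp only [F, dif_neg h, dif_pos h']
      rw [hj.injective h'.choose_spec]
  refine ⟨F, fun γ => ?_⟩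
  refine coc_ext hi hj hc d (cob F) (fun γ => ?_) (fun γ => ?_) γ
  · have hf' : d.c (i.comp γ) = _ := hf γ
    rw [hf']
    simp [cob, FA]
  · have hg' : d.c (j.comp γ) = _ := hg γ
    rw [hg']
    have : n (γ 0) = n (γ 1) := hnc _ _ ⟨⟨γ, rfl, rfl⟩⟩
    simp only [cob, FB, ContinuousMap.comp_apply, this]
    group

end acyc

section free
variable {X : Type} [TopologicalSpace X]

lemma Coc.htpy {K : Type} [Group K] (d : Coc X K) {x y : X} {p q : Path x y}
    (h : p.Homotopic q) : d.c p.toContinuousMap = d.c q.toContinuousMap := by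
  obtain ⟨F⟩ := h
  have := d.square ⟨fun z => F z, by fun_prop⟩
  simp only [ContinuousMap.coe_mk] at this
  have h1 : (⟨fun t => F (t, 0), by fun_prop⟩ : C(I, X)) = ContinuousMap.const I x := by
    ext t; simp
  have h2 : (⟨fun t => F (t, 1), by fun_prop⟩ : C(I, X)) = ContinuousMap.const I y := by
    ext t; simp
  have h3 : (⟨fun t => F (0, t), by fun_prop⟩ : C(I, X)) = p.toContinuousMap := by
    ext t; simp
  have h4 : (⟨fun t => F (1, t), by fun_prop⟩ : C(I, X)) = q.toContinuousMap := by
    ext t; simp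
  rw [h1, h2, h3, h4, d.const, d.const] at this
  simpa using this.symm

lemma Coc.trans {K : Type} [Group K] (d : Coc X K) {x y z : X} (p : Path x y) (q : Path y z) :
    d.c (p.trans q).toContinuousMap = d.c p.toContinuousMap * d.c q.toContinuousMap := by
  have := (d.loc (U := fun _ : Unit => Set.univ)).seg_tri (ext1 (p.trans q).toContinuousMap)
    convex_univ (n := ()) (p := (0 : ℝ)) (q := 1 / 2) (r := 1)
    (fun x _ => trivial) trivial trivial trivial
  rw [ext1_seg] at this
  rw [← this]
  congr 2
  · ext t
    have h1 : (t : ℝ) * 2⁻¹ ≤ 1 / 2 := by linarith [t.2.2]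
    have h0 : 0 ≤ (t : ℝ) * 2⁻¹ := by linarith [t.2.1]
    have hI : (t : ℝ) * 2⁻¹ ∈ I := ⟨h0, by linarith⟩
    simp only [ext1, seg, ContinuousMap.comp_apply, ContinuousMap.coe_mk]
    rw [show (0 : ℝ) + (t : ℝ) • (1 / 2 - 0 : ℝ) = (t : ℝ) * 2⁻¹ by simp,
      Set.projIcc_of_mem _ hI]
    simp only [Path.coe_toContinuousMap]
    rw [Path.trans_apply, dif_pos h1]
    congr 1
    ext
    simp only
    ring
  · ext t
    have hI : 1 / 2 + (t : ℝ) * 2⁻¹ ∈ I := ⟨by linarith [t.2.1], by linarith [t.2.2]⟩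
    simp only [ext1, seg, ContinuousMap.comp_apply, ContinuousMap.coe_mk]
    rw [show (1 / 2 : ℝ) + (t : ℝ) • (1 - 1 / 2 : ℝ) = 1 / 2 + (t : ℝ) * 2⁻¹ by
      simp; norm_num, Set.projIcc_of_mem _ hI]
    simp only [Path.coe_toContinuousMap]
    rw [Path.trans_apply]
    split_ifs with h
    · have ht : (t : ℝ) = 0 := by
        simp only at h
        linarith [t.2.1]
      have : t = 0 := by ext; simpa using ht
      subst this
      simp
    · congr 1
      ext
      simp; ring

/-- A map from the interval as a path. -/
def toP (γ : C(I, X)) : Path (γ 0) (γ 1) := ⟨γ, rfl, rfl⟩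

instance : ContractibleSpace (I × I) := by
  rw [contractible_iff_id_nullhomotopic]
  refine ⟨(0, 0), ⟨⟨⟨fun x => (σ x.1 * x.2.1, σ x.1 * x.2.2), by fun_prop⟩, ?_, ?_⟩⟩⟩
  · intro x; simp
  · intro x; simp

lemma tri_hom (F : C(I × I, X)) :
    ((toP (F.comp e1)).trans (toP (F.comp e2))).Homotopic (toP (F.comp ed)) := by
  let p1 : Path ((0, 0) : I × I) (1, 0) := toP e1
  let p2 : Path ((1, 0) : I × I) (1, 1) := toP e2
  let p3 : Path ((0, 0) : I × I) (1, 1) := toP ed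
  have h : (p1.trans p2).Homotopic p3 := SimplyConnectedSpace.paths_homotopic _ _
  have h := h.map F
  rw [Path.map_trans] at h
  exact h

lemma alg_trans {x y z w : X} (ty : Path.Homotopic.Quotient x y) (tz : Path.Homotopic.Quotient x z)
    (tw : Path.Homotopic.Quotient x w) (b : Path.Homotopic.Quotient y z)
    (c : Path.Homotopic.Quotient z w) :
    ((ty.trans b).trans tz.symm).trans ((tz.trans c).trans tw.symm) =
      (ty.trans (b.trans c)).trans tw.symm := by
  simp only [Path.Homotopic.Quotient.trans_assoc]
  rw [← Path.Homotopic.Quotient.trans_assoc tz.symm tz, Path.Homotopic.Quotient.symm_trans,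
    Path.Homotopic.Quotient.refl_trans]

lemma alg_inj {x y : X} (t : Path.Homotopic.Quotient y x) {a b : Path.Homotopic.Quotient x x}
    (h : (t.trans a).trans t.symm = (t.trans b).trans t.symm) : a = b := by
  have := congrArg (fun u => (t.symm.trans u).trans t) h
  simp only [Path.Homotopic.Quotient.trans_assoc, Path.Homotopic.Quotient.symm_trans,
    Path.Homotopic.Quotient.trans_refl] at this
  simpa only [← Path.Homotopic.Quotient.trans_assoc, Path.Homotopic.Quotient.symm_trans,
    Path.Homotopic.Quotient.refl_trans] using this

theorem isFree_of_proj (h : Proj X) (x : X) : IsFreeGroup (FundamentalGroup X x) := by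
  classical
  let τ : ∀ y, Joined x y → Path.Homotopic.Quotient x y := fun y hy => Path.Homotopic.Quotient.mk hy.somePath
  let c : C(I, X) → (FundamentalGroup X x)ᵐᵒᵖ := fun γ =>
    if hy : Joined x (γ 0) then
      MulOpposite.op (α := FundamentalGroup X x) ((((τ _ hy).trans (Path.Homotopic.Quotient.mk (toP γ))).trans
        (τ _ (hy.trans ⟨toP γ⟩)).symm : Path.Homotopic.Quotient x x))
    else 1
  have hc : ∀ γ (hy : Joined x (γ 0)) (hz : Joined x (γ 1)), c γ =
     MulOpposite.op (α := FundamentalGroup X x) ((((τ _ hy).trans (Path.Homotopic.Quotient.mk (toP γ))).trans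
        (τ _ hz).symm : Path.Homotopic.Quotient x x)) := fun γ hy hz => dif_pos hy
  have hc' : ∀ γ, ¬ Joined x (γ 0) → c γ = 1 := fun γ hy => dif_neg hy
  let d : Coc X (FundamentalGroup X x)ᵐᵒᵖ := ⟨c, by
    intro F
    by_cases hy : Joined x (F (0, 0))
    · have hz : Joined x (F (1, 0)) := hy.trans ⟨toP (F.comp e1)⟩
      have hw : Joined x (F (1, 1)) := hz.trans ⟨toP (F.comp e2)⟩
      rw [hc (F.comp e1) hy hz, hc (F.comp e2) hz hw, hc (F.comp ed) hy hw, ← MulOpposite.op_mul]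
      congr 1
      have e : (Path.Homotopic.Quotient.mk (toP (F.comp e1))).trans (Path.Homotopic.Quotient.mk (toP (F.comp e2))) =
        Path.Homotopic.Quotient.mk (toP (F.comp ed)) := _root_.Quotient.sound (tri_hom F)
      exact (alg_trans _ _ _ _ _).trans (by rw [← e]; rfl)
    · have hz : ¬ Joined x (F (1, 0)) := fun h => hy (h.trans (Joined.symm ⟨toP (F.comp e1)⟩))
      rw [hc' (F.comp e1) hy, hc' (F.comp e2) hz, hc' (F.comp ed) hy, one_mul]⟩
  obtain ⟨d', hd'⟩ := h (FreeGroup (FundamentalGroup X x)ᵐᵒᵖ) _ (FreeGroup.lift id)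
    (fun g => ⟨FreeGroup.of g, by simp⟩) d
  let s0 : Path.Homotopic.Quotient x x → FreeGroup (FundamentalGroup X x)ᵐᵒᵖ :=
    _root_.Quotient.lift (fun p : Path x x => (d'.c p.toContinuousMap)⁻¹)
      (fun p q hpq => by rw [d'.htpy hpq])
  let s : FundamentalGroup X x →* FreeGroup (FundamentalGroup X x)ᵐᵒᵖ := MonoidHom.mk' s0 (by
    intro a b
    rw [FundamentalGroup.mul_def]
    change s0 (Path.Homotopic.Quotient.trans b a) = s0 a * s0 b
    induction a, b using Path.Homotopic.Quotient.ind₂ with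
    | mk a b =>
    rw [← Path.Homotopic.Quotient.mk_trans]
    change (d'.c _)⁻¹ = (d'.c _)⁻¹ * (d'.c _)⁻¹
    rw [d'.trans, mul_inv_rev])
  have hs : Function.Injective s := by
    intro a b hab
    have hab : s0 a = s0 b := hab
    induction a, b using Path.Homotopic.Quotient.ind₂ with
    | mk a b =>
    have h1 : (d'.c a.toContinuousMap)⁻¹ = (d'.c b.toContinuousMap)⁻¹ := hab
    rw [inv_inj] at h1
    have h2 := congrArg (FreeGroup.lift id) h1
    rw [hd', hd'] at h2
    have hx : Joined x x := Joined.refl x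
    have h3 : ∀ a : Path x x, d.c a.toContinuousMap = MulOpposite.op (α := FundamentalGroup X x)
        (((τ _ hx).trans (Path.Homotopic.Quotient.mk a)).trans (τ _ hx).symm) := by
      intro a
      have h0 : Joined x (a.toContinuousMap 0) := by simp [hx]
      have h1 : Joined x (a.toContinuousMap 1) := by simp [hx]
      refine (hc a.toContinuousMap h0 h1).trans ?_
      congr 1
      have key : ∀ (u v : X) (hu : u = x) (hv : v = x) (h0 : Joined x u) (h1 : Joined x v),
        ((τ u h0).trans (Path.Homotopic.Quotient.mk (a.cast hu hv))).trans (τ v h1).symm =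
        ((τ _ hx).trans (Path.Homotopic.Quotient.mk a)).trans (τ _ hx).symm := by
        intro u v hu hv h0 h1
        subst hu
        subst hv
        rfl
      exact key _ _ a.source a.target h0 h1
    rw [h3, h3] at h2
    exact alg_inj _ (MulOpposite.op_injective h2)
  have := IsFreeGroup.ofMulEquiv (MonoidHom.ofInjective hs).symm
  exact this
end free

section geom
variable {k : ℕ} {G : SimpleGraph (Fin k)}

lemma mem_real {y : Fin k → ℝ} : y ∈ graphRealization G ↔ ∃ i j, G.Adj i j ∧ 0 ≤ y i ∧ 0 ≤ y j ∧
    y i + y j = 1 ∧ ∀ m, m ≠ i → m ≠ j → y m = 0 := by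
  simp only [graphRealization, Set.mem_iUnion, exists_prop]
  refine exists_congr fun i => exists_congr fun j => and_congr_right fun hij => ?_
  have hne : i ≠ j := hij.ne
  constructor
  · rintro ⟨a, b, ha, hb, hab, rfl⟩
    refine ⟨?_, ?_, ?_, ?_⟩
    · simp [hne, ha]
    · simp [hne.symm, hb]
    · simp [hne, hne.symm, hab]
    · intro m h1 h2
      simp [h1, h2]
  · rintro ⟨h1, h2, h3, h4⟩
    refine ⟨y i, y j, h1, h2, h3, ?_⟩
    ext m
    by_cases hi : m = i
    · subst hi; simp [hne]
    · by_cases hj : m = j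
      · subst hj; simp [hne.symm]
      · simp [hi, hj, h4 m hi hj]

lemma real_nonneg {y : Fin k → ℝ} (h : y ∈ graphRealization G) (m : Fin k) : 0 ≤ y m := by
  obtain ⟨i, j, hij, h1, h2, h3, h4⟩ := mem_real.1 h
  by_cases hi : m = i
  · subst hi; exact h1
  · by_cases hj : m = j
    · subst hj; exact h2
    · exact (h4 m hi hj).ge

lemma real_le_one {y : Fin k → ℝ} (h : y ∈ graphRealization G) (m : Fin k) : y m ≤ 1 := by
  obtain ⟨i, j, hij, h1, h2, h3, h4⟩ := mem_real.1 h
  by_cases hi : m = i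
  · subst hi; linarith
  · by_cases hj : m = j
    · subst hj; linarith
    · rw [h4 m hi hj]; norm_num

lemma real_edge {y : Fin k → ℝ} (h : y ∈ graphRealization G) {a b : Fin k} (hab : a ≠ b)
    (ha : y a ≠ 0) (hb : y b ≠ 0) : G.Adj a b ∧ 0 < y a ∧ 0 < y b ∧ y a + y b = 1 ∧
      ∀ m, m ≠ a → m ≠ b → y m = 0 := by
  have pa := lt_of_le_of_ne (real_nonneg h a) ha.symm
  have pb := lt_of_le_of_ne (real_nonneg h b) hb.symm
  obtain ⟨i, j, hij, h1, h2, h3, h4⟩ := mem_real.1 h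
  have ha' : a = i ∨ a = j := by
    by_contra hc; push Not at hc; exact ha (h4 a hc.1 hc.2)
  have hb' : b = i ∨ b = j := by
    by_contra hc; push Not at hc; exact hb (h4 b hc.1 hc.2)
  rcases ha' with rfl | rfl <;> rcases hb' with rfl | rfl
  · exact (hab rfl).elim
  · exact ⟨hij, pa, pb, h3, h4⟩
  · exact ⟨hij.symm, pa, pb, by linarith, fun m hm hm' => h4 m hm' hm⟩
  · exact (hab rfl).elim

/-- a point with coordinate `≠ 1` at a nonzero coordinate has another nonzero coordinate -/
lemma real_other {y : Fin k → ℝ} (h : y ∈ graphRealization G) {a : Fin k}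
    (ha1 : y a ≠ 1) : ∃ b, b ≠ a ∧ y b ≠ 0 := by
  obtain ⟨i, j, hij, h1, h2, h3, h4⟩ := mem_real.1 h
  by_contra hc
  push Not at hc
  by_cases hi : i = a
  · subst hi
    have := hc j hij.ne.symm
    apply ha1; linarith
  · have hi0 := hc i hi
    by_cases hj : j = a
    · subst hj; apply ha1; linarith
    · have := hc j hj; linarith

lemma real_nz {y : Fin k → ℝ} (h : y ∈ graphRealization G) : ∃ b, y b ≠ 0 := by
  obtain ⟨i, j, hij, h1, h2, h3, h4⟩ := mem_real.1 h
  by_contra hc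
  push Not at hc
  have := hc i; have := hc j; linarith

lemma real_one {y : Fin k → ℝ} (h : y ∈ graphRealization G) {a b : Fin k} (hab : a ≠ b)
    (ha : y a = 1) : y b = 0 := by
  by_contra hb
  obtain ⟨_, _, h1, h2, _⟩ := real_edge h hab (by rw [ha]; norm_num) hb
  linarith

/-- on an edge -/
lemma mem_of_edge {y : Fin k → ℝ} {i j : Fin k} (hij : G.Adj i j) (h1 : 0 ≤ y i) (h2 : 0 ≤ y j)
    (h3 : y i + y j = 1) (h4 : ∀ m, m ≠ i → m ≠ j → y m = 0) : y ∈ graphRealization G :=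
  mem_real.2 ⟨i, j, hij, h1, h2, h3, h4⟩

/-- realization minus the vertices in `S` -/
def GS (G : SimpleGraph (Fin k)) (S : Finset (Fin k)) : Set (Fin k → ℝ) :=
  {y | y ∈ graphRealization G ∧ ∀ s ∈ S, y s ≠ 1}

lemma stay {T : Type} [TopologicalSpace T] {U V : Set T} (hU : IsOpen U) (hV : IsOpen V)
    (hc : ∀ x, x ∈ U ∨ x ∈ V) (hd : ∀ x, x ∈ U → x ∉ V) {a b : T} (hab : Joined a b)
    (ha : a ∈ U) : b ∈ U := by
  have hclopen : IsClopen U := ⟨by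
    have : U = Vᶜ := by
      ext x; exact ⟨hd x, fun h => (hc x).resolve_right h⟩
    rw [this]; exact hV.isClosed_compl, hU⟩
  obtain ⟨p⟩ := hab
  have := (isPreconnected_range p.continuous).subset_isClopen hclopen ⟨a, ⟨0, p.source⟩, ha⟩
  exact this ⟨1, p.target⟩

lemma isOpen_ne {T : Type} [TopologicalSpace T] {f : T → ℝ} (hf : Continuous f) (c : ℝ) :
    IsOpen {x | f x ≠ c} := isOpen_compl_singleton.preimage hf

lemma isOpen_ex {T ι : Type} [TopologicalSpace T] (P : ι → Prop) {f : ι → T → ℝ}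
    (hf : ∀ i, Continuous (f i)) : IsOpen {x | ∃ i, P i ∧ f i x ≠ 0} := by
  have : {x | ∃ i, P i ∧ f i x ≠ 0} = ⋃ i, {x | P i ∧ f i x ≠ 0} := by ext; simp
  rw [this]
  exact isOpen_iUnion fun i => (isOpen_const (p := P i)).inter (isOpen_ne (hf i) 0)

/-- staying on an edge between two removed vertices -/
lemma stay_edge {T : Type} [TopologicalSpace T] {f : T → Fin k → ℝ} (hf : Continuous f)
    {i j : Fin k} (hij : i ≠ j) (hG : ∀ x, f x ∈ graphRealization G)
    (hi : ∀ x, f x i ≠ 1) (hj : ∀ x, f x j ≠ 1) {a b : T} (hab : Joined a b)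
    (ha : f a i ≠ 0 ∧ f a j ≠ 0) : f b i ≠ 0 ∧ f b j ≠ 0 := by
  have hfm : ∀ m, Continuous fun x => f x m := fun m => (continuous_apply m).comp hf
  refine stay (U := {x | f x i ≠ 0 ∧ f x j ≠ 0}) (V := {x | ∃ m, (m ≠ i ∧ m ≠ j) ∧ f x m ≠ 0})
    ((isOpen_ne (hfm i) 0).inter (isOpen_ne (hfm j) 0)) (isOpen_ex _ hfm) ?_ ?_ hab ha
  · intro x
    by_contra hc
    simp only [Set.mem_ofPred_eq, not_or, not_and_or, not_not, not_exists] at hc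
    obtain ⟨h1, h2⟩ := hc
    obtain ⟨b, hb, hb0⟩ := real_other (hG x) (hi x)
    obtain ⟨c, hc, hc0⟩ := real_other (hG x) (hj x)
    have hbj : b = j := by
      have := h2 b; tauto
    have hci : c = i := by
      have := h2 c; tauto
    subst hbj; subst hci
    tauto
  · rintro x ⟨h1, h2⟩ ⟨m, ⟨h3, h4⟩, h5⟩
    exact h5 ((real_edge (hG x) hij h1 h2).2.2.2.2 m h3 h4)

lemma supp_const {T : Type} [TopologicalSpace T] {f : T → Fin k → ℝ} (hf : Continuous f)
    (hG : ∀ x, f x ∈ GS G Finset.univ) {a b : T} (hab : Joined a b) (m : Fin k) :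
    f b m ≠ 0 ↔ f a m ≠ 0 := by
  obtain ⟨i, hi⟩ := real_nz (hG a).1
  obtain ⟨j, hji, hj⟩ := real_other (hG a).1 ((hG a).2 i (Finset.mem_univ _))
  have h := stay_edge hf hji.symm (fun x => (hG x).1) (fun x => (hG x).2 _ (Finset.mem_univ _))
    (fun x => (hG x).2 _ (Finset.mem_univ _)) hab ⟨hi, hj⟩
  have h1 := (real_edge (hG a).1 hji.symm hi hj).2.2.2.2 m
  have h2 := (real_edge (hG b).1 hji.symm h.1 h.2).2.2.2.2 m
  by_cases e1 : m = i
  · subst e1; tauto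
  · by_cases e2 : m = j
    · subst e2; tauto
    · simp [h1 e1 e2, h2 e1 e2]

lemma mem_univ_of_edge {y : Fin k → ℝ} (h : y ∈ graphRealization G) {a b : Fin k} (hab : a ≠ b)
    (ha : y a ≠ 0) (hb : y b ≠ 0) (S : Finset (Fin k)) : y ∈ GS G S := by
  refine ⟨h, fun s _ hs => ?_⟩
  by_cases e : s = a
  · subst e; exact hb (real_one h hab hs)
  · exact ha (real_one h e hs)

lemma joined_path {T : Type} [TopologicalSpace T] (γ : C(I, T)) (t : I) : Joined (γ 0) (γ t) :=
  ⟨⟨⟨fun s => γ (s * t), by fun_prop⟩, by simp, by simp⟩⟩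

lemma cc_pos {a b t : ℝ} (ha : 0 < a) (hb : 0 < b) (h0 : 0 ≤ t) (h1 : t ≤ 1) :
    0 < a + t * (b - a) := by
  rcases h1.eq_or_lt with rfl | h
  · linarith
  · nlinarith [mul_pos (sub_pos.2 h) ha, mul_nonneg h0 hb.le]

lemma cc_nonneg {a b t : ℝ} (ha : 0 ≤ a) (hb : 0 ≤ b) (h0 : 0 ≤ t) (h1 : t ≤ 1) :
    0 ≤ a + t * (b - a) := by
  nlinarith [mul_nonneg (sub_nonneg.2 h1) ha, mul_nonneg h0 hb]

lemma line_mem {y p : Fin k → ℝ} {i j : Fin k} (hij : G.Adj i j) (h1 : 0 ≤ y i) (h2 : 0 ≤ y j)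
    (h3 : y i + y j = 1) (h4 : ∀ m, m ≠ i → m ≠ j → y m = 0) (g1 : 0 ≤ p i) (g2 : 0 ≤ p j)
    (g3 : p i + p j = 1) (g4 : ∀ m, m ≠ i → m ≠ j → p m = 0) {t : ℝ} (ht0 : 0 ≤ t)
    (ht1 : t ≤ 1) : y + t • (p - y) ∈ graphRealization G := by
  refine mem_of_edge hij ?_ ?_ ?_ ?_
  · simp only [Pi.add_apply, Pi.smul_apply, Pi.sub_apply, smul_eq_mul]
    exact cc_nonneg h1 g1 ht0 ht1
  · simp only [Pi.add_apply, Pi.smul_apply, Pi.sub_apply, smul_eq_mul]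
    exact cc_nonneg h2 g2 ht0 ht1
  · simp only [Pi.add_apply, Pi.smul_apply, Pi.sub_apply, smul_eq_mul]
    linear_combination (1 - t) * h3 + t * g3
  · intro m e1 e2
    simp [h4 m e1 e2, g4 m e1 e2]

lemma Acyc.of_fib_set {T W : Type} [TopologicalSpace T] {D : Set T} (κ : T → W)
    (hκ : ∀ (γ : C(I, D)) t, κ (γ t) = κ (γ 0))
    (hf : ∀ w, Acyc {y | y ∈ D ∧ κ y = w}) : Acyc D := by
  refine Acyc.of_fib (fun y : D => κ y) hκ fun w => ?_
  refine (hf w).of_htpy ⟨fun y => ⟨y.1.1, y.1.2, y.2⟩, by fun_prop⟩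
    ⟨fun y => ⟨⟨y.1, y.2.1⟩, y.2.2⟩, by fun_prop⟩ ⟨fun x => x.2, by fun_prop⟩
    (fun _ => rfl) (fun _ => rfl)

lemma Acyc.of_empty {T : Type} [TopologicalSpace T] (h : T → False) : Acyc T := by
  intro K _ d
  exact ⟨fun _ => 1, fun γ => (h (γ 0)).elim⟩

lemma incl_open {T : Type} [TopologicalSpace T] {D D' O : Set T} (h : D ⊆ D') (hO : IsOpen O)
    (hD : D = D' ∩ O) : Topology.IsOpenEmbedding (Set.inclusion h) := by
  refine ⟨Topology.IsEmbedding.inclusion h, ?_⟩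
  rw [Set.range_inclusion]
  have : {x : D' | (x : T) ∈ D} = Subtype.val ⁻¹' O := by
    ext x
    simp only [Set.mem_ofPred_eq, Set.mem_preimage]
    rw [hD]
    exact ⟨fun h => h.2, fun h => ⟨x.2, h⟩⟩
  rw [this]
  exact hO.preimage continuous_subtype_val

lemma acyc_base : Acyc (GS G Finset.univ) := by
  refine Acyc.of_fib_set (fun y m => y m ≠ 0) ?_ ?_
  · intro γ t
    funext m
    exact propext (supp_const (f := fun x : GS G Finset.univ => (x : Fin k → ℝ))
      continuous_subtype_val (fun x => x.2) (joined_path γ t) m)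
  · intro w
    by_cases hne : ∃ p : Fin k → ℝ, p ∈ GS G Finset.univ ∧ (fun m => p m ≠ 0) = w
    · obtain ⟨p, hp, rfl⟩ := hne
      obtain ⟨i, hi⟩ := real_nz hp.1
      obtain ⟨j, hji, hj⟩ := real_other hp.1 (hp.2 i (Finset.mem_univ _))
      obtain ⟨a1, a2, a3, a4, a5⟩ := real_edge hp.1 hji.symm hi hj
      refine Acyc.of_star (p := p) ?_
      rintro y ⟨hy, hyw⟩ t ht0 ht1
      have hyi : y i ≠ 0 := (congrFun hyw i).mpr hi
      have hyj : y j ≠ 0 := (congrFun hyw j).mpr hj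
      obtain ⟨b1, b2, b3, b4, b5⟩ := real_edge hy.1 hji.symm hyi hyj
      have ci : 0 < (y + t • (p - y)) i := by
        simp only [Pi.add_apply, Pi.smul_apply, Pi.sub_apply, smul_eq_mul]
        exact cc_pos b2 a2 ht0 ht1
      have cj : 0 < (y + t • (p - y)) j := by
        simp only [Pi.add_apply, Pi.smul_apply, Pi.sub_apply, smul_eq_mul]
        exact cc_pos b3 a3 ht0 ht1
      have cm : ∀ m, m ≠ i → m ≠ j → (y + t • (p - y)) m = 0 := by
        intro m h1 h2
        simp [a5 m h1 h2, b5 m h1 h2]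
      have hmem : (y + t • (p - y)) ∈ graphRealization G := by
        refine mem_of_edge a1 ci.le cj.le ?_ cm
        simp only [Pi.add_apply, Pi.smul_apply, Pi.sub_apply, smul_eq_mul]
        linear_combination (1 - t) * b4 + t * a4
      refine ⟨mem_univ_of_edge hmem hji.symm ci.ne' cj.ne' _, ?_⟩
      funext m
      by_cases e1 : m = i
      · subst e1; simp only [eq_iff_iff]; exact ⟨fun _ => hi, fun _ => ci.ne'⟩
      · by_cases e2 : m = j
        · subst e2; simp only [eq_iff_iff]; exact ⟨fun _ => hj, fun _ => cj.ne'⟩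
        · rw [cm m e1 e2, a5 m e1 e2]
    · exact Acyc.of_empty fun y => hne ⟨y.1, y.2⟩

end geom

section forest
variable {k : ℕ} {G : SimpleGraph (Fin k)}

/-- the graph with all edges at `v₀` removed -/
def delV (G : SimpleGraph (Fin k)) (v₀ : Fin k) : SimpleGraph (Fin k) where
  Adj a b := G.Adj a b ∧ a ≠ v₀ ∧ b ≠ v₀
  symm := ⟨fun _ _ h => ⟨h.1.symm, h.2.2, h.2.1⟩⟩
  loopless := ⟨fun _ h => h.1.ne rfl⟩

lemma walk_avoid {v₀ : Fin k} {a b : Fin k} (p : (delV G v₀).Walk a b) (ha : a ≠ v₀) :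
    v₀ ∉ p.support := by
  induction p with
  | nil => simpa using ha.symm
  | cons h p ih =>
    simp only [SimpleGraph.Walk.support_cons, List.mem_cons, not_or]
    exact ⟨ha.symm, ih h.2.2⟩

lemma delV_acyclic {v₀ : Fin k}
    (hv₀ : ∀ (u : Fin k) (c : G.Walk u u), c.IsCycle → v₀ ∈ c.support) :
    (delV G v₀).IsAcyclic := by
  intro u c hc
  have hle : delV G v₀ ≤ G := fun _ _ h => h.1
  have h1 := hv₀ u (c.mapLe hle) (hc.mapLe hle)
  have hu : u ≠ v₀ := by
    cases c with
    | nil => simp at hc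
    | cons h p => exact h.2.1
  have h2 := walk_avoid c hu
  simp at h1
  exact h2 h1

lemma same_edge {v₀ v : Fin k}
    (hv₀ : ∀ (u : Fin k) (c : G.Walk u u), c.IsCycle → v₀ ∈ c.support)
    {S : Finset (Fin k)} (hS0 : v₀ ∈ S) (hSv : v ∈ S) (hv : v ≠ v₀) {a b : GS G S}
    (hab : Joined a b) {w w' : Fin k} (hw : w ≠ v) (hw' : w' ≠ v) (hav : a.1 v ≠ 0)
    (haw : a.1 w ≠ 0) (hbv : b.1 v ≠ 0) (hbw : b.1 w' ≠ 0) : w = w' := by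
  by_contra hne
  have hG : ∀ x : GS G S, x.1 ∈ graphRealization G := fun x => x.2.1
  by_cases hwS : w ∈ S
  · have := stay_edge (f := fun x : GS G S => (x : Fin k → ℝ)) continuous_subtype_val hw.symm hG
      (fun x => x.2.2 v hSv) (fun x => x.2.2 w hwS) hab ⟨hav, haw⟩
    exact hbw ((real_edge (hG b) hw.symm this.1 this.2).2.2.2.2 w' hw' (Ne.symm hne))
  by_cases hwS' : w' ∈ S
  · have := stay_edge (f := fun x : GS G S => (x : Fin k → ℝ)) continuous_subtype_val hw'.symm hG
      (fun x => x.2.2 v hSv) (fun x => x.2.2 w' hwS') hab.symm ⟨hbv, hbw⟩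
    exact haw ((real_edge (hG a) hw'.symm this.1 this.2).2.2.2.2 w hw hne)
  have hvw := (real_edge (hG a) hw.symm hav haw).1
  have hvw' := (real_edge (hG b) hw'.symm hbv hbw).1
  have n0 : ∀ m, m ∉ S → m ≠ v₀ := fun m hm h => hm (h ▸ hS0)
  have nv : ∀ m, m ∉ S → m ≠ v := fun m hm h => hm (h ▸ hSv)
  have hadj : (delV G v₀).Adj v w := ⟨hvw, hv, n0 w hwS⟩
  have hbr := (SimpleGraph.isAcyclic_iff_forall_adj_isBridge.1 (delV_acyclic hv₀)) hadj
  rw [SimpleGraph.isBridge_iff] at hbr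
  set H := (delV G v₀).deleteEdges {s(v, w)} with hH
  have hHadj : ∀ m m', (delV G v₀).Adj m m' → s(m, m') ≠ s(v, w) → H.Adj m m' := by
    intro m m' h1 h2
    rw [hH, SimpleGraph.deleteEdges_adj]
    exact ⟨h1, by simpa using h2⟩
  have hr : ¬ H.Reachable v w := by
    intro h
    exact hbr h
  apply hr
  have hfm : ∀ m, Continuous fun x : GS G S => x.1 m := fun m =>
    (continuous_apply m).comp continuous_subtype_val
  have key : b ∈ {x : GS G S | ∃ m, (m ∉ S ∧ H.Reachable w m) ∧ x.1 m ≠ 0} := by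
    refine stay (V := {x : GS G S | ∃ m, (m ∉ S ∧ ¬ H.Reachable w m) ∧ x.1 m ≠ 0} ∪
      {x : GS G S | ∃ s, s ∈ S ∧ ∃ s', s' ∈ S ∧ s ≠ s' ∧ x.1 s ≠ 0 ∧ x.1 s' ≠ 0})
      (isOpen_ex _ hfm) ((isOpen_ex _ hfm).union ?_) ?_ ?_ hab
      ⟨w, ⟨hwS, SimpleGraph.Reachable.refl _⟩, haw⟩
    · have : {x : GS G S | ∃ s, s ∈ S ∧ ∃ s', s' ∈ S ∧ s ≠ s' ∧ x.1 s ≠ 0 ∧ x.1 s' ≠ 0} =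
        ⋃ s, ⋃ s', {x : GS G S | s ∈ S ∧ s' ∈ S ∧ s ≠ s' ∧ x.1 s ≠ 0 ∧ x.1 s' ≠ 0} := by
        ext x; simp
      rw [this]
      refine isOpen_iUnion fun s => isOpen_iUnion fun s' => ?_
      exact isOpen_const.inter (isOpen_const.inter (isOpen_const.inter
        ((isOpen_ne (hfm s) 0).inter (isOpen_ne (hfm s') 0))))
    · intro x
      by_cases hx : ∃ m, m ∉ S ∧ x.1 m ≠ 0
      · obtain ⟨m, hm, hm0⟩ := hx
        by_cases hr : H.Reachable w m
        · exact Or.inl ⟨m, ⟨hm, hr⟩, hm0⟩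
        · exact Or.inr (Or.inl ⟨m, ⟨hm, hr⟩, hm0⟩)
      · push Not at hx
        obtain ⟨i, hi⟩ := real_nz (hG x)
        have hiS : i ∈ S := by
          by_contra h; exact hi (hx i h)
        obtain ⟨j, hji, hj⟩ := real_other (hG x) (x.2.2 i hiS)
        have hjS : j ∈ S := by
          by_contra h; exact hj (hx j h)
        exact Or.inr (Or.inr ⟨i, hiS, j, hjS, hji.symm, hi, hj⟩)
    · rintro x ⟨m, ⟨hm, hr⟩, hm0⟩ (⟨m', ⟨hm', hr'⟩, hm0'⟩ | ⟨s, hs, s', hs', hss, hs0, hs0'⟩)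
      · have hmm : m ≠ m' := fun h => hr' (h ▸ hr)
        have h1 := (real_edge (hG x) hmm hm0 hm0').1
        refine hr' (hr.trans (SimpleGraph.Adj.reachable (hHadj m m' ⟨h1, n0 m hm, n0 m' hm'⟩ ?_)))
        intro h
        have : v ∈ s(m, m') := by rw [h]; simp
        simp only [Sym2.mem_iff] at this
        rcases this with h | h
        · exact nv m hm h.symm
        · exact nv m' hm' h.symm
      · exact hm0 ((real_edge (hG x) hss hs0 hs0').2.2.2.2 m (fun h => hm (h ▸ hs))
          (fun h => hm (h ▸ hs')))
  obtain ⟨m, ⟨hm, hr⟩, hm0⟩ := key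
  have hmw : m = w' := by
    by_contra h
    exact hm0 ((real_edge (hG b) hw'.symm hbv hbw).2.2.2.2 m (nv m hm) h)
  subst hmw
  refine SimpleGraph.Reachable.trans (SimpleGraph.Adj.reachable (hHadj v m ⟨hvw', hv, n0 m hm⟩ ?_))
    hr.symm
  intro h
  have : m ∈ s(v, w) := by rw [← h]; simp
  simp only [Sym2.mem_iff] at this
  rcases this with h | h
  · exact hw' h
  · exact hne h.symm

lemma star_line {y : Fin k → ℝ} {v : Fin k} (h : y ∈ graphRealization G) (hv : y v ≠ 0) {t : ℝ}
    (ht0 : 0 ≤ t) (ht1 : t ≤ 1) : y + t • (Pi.single v 1 - y) ∈ graphRealization G := by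
  obtain ⟨i, j, hij, h1, h2, h3, h4⟩ := mem_real.1 h
  have hne := hij.ne
  have : v = i ∨ v = j := by
    by_contra hc; push Not at hc; exact hv (h4 v hc.1 hc.2)
  rcases this with rfl | rfl
  · refine line_mem hij h1 h2 h3 h4 ?_ ?_ ?_ ?_ ht0 ht1
    · simp
    · simp [hne.symm]
    · simp [hne.symm]
    · intro m e1 e2; simp [e1]
  · refine line_mem hij h1 h2 h3 h4 ?_ ?_ ?_ ?_ ht0 ht1
    · simp [hne]
    · simp
    · simp [hne]
    · intro m e1 e2; simp [e2]

lemma star_line_ge {y : Fin k → ℝ} {v : Fin k} (h : y ∈ graphRealization G) {t : ℝ}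
    (ht0 : 0 ≤ t) : y v ≤ (y + t • (Pi.single v 1 - y) : Fin k → ℝ) v := by
  have := real_le_one h v
  simp only [Pi.add_apply, Pi.smul_apply, Pi.sub_apply, smul_eq_mul, Pi.single_eq_same]
  nlinarith [mul_nonneg ht0 (sub_nonneg.2 this)]

lemma acyc_star (v : Fin k) : Acyc {y | y ∈ graphRealization G ∧ y v ≠ 0} := by
  refine Acyc.of_star (p := Pi.single v 1) ?_
  rintro y ⟨h1, h2⟩ t ht0 ht1
  refine ⟨star_line h1 h2 ht0 ht1, ?_⟩
  have h3 := star_line_ge (v := v) h1 ht0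
  have h4 := lt_of_le_of_ne (real_nonneg h1 v) h2.symm
  exact (lt_of_lt_of_le h4 h3).ne'

lemma acyc_step {v₀ v : Fin k}
    (hv₀ : ∀ (u : Fin k) (c : G.Walk u u), c.IsCycle → v₀ ∈ c.support)
    {S : Finset (Fin k)} (hS0 : v₀ ∈ S) (hv : v ∉ S) (h : Acyc (GS G (insert v S))) :
    Acyc (GS G S) := by
  have hvv : v ≠ v₀ := fun e => hv (e ▸ hS0)
  have hA : {y | y ∈ graphRealization G ∧ y v ≠ 0} ⊆ GS G S := by
    rintro y ⟨h1, h2⟩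
    exact ⟨h1, fun s hs e => h2 (real_one h1 (fun e' => hv (e' ▸ hs)) e)⟩
  have hB : GS G (insert v S) ⊆ GS G S := fun y hy =>
    ⟨hy.1, fun s hs => hy.2 s (Finset.mem_insert_of_mem hs)⟩
  have hcv : Continuous fun y : Fin k → ℝ => y v := continuous_apply v
  refine acyc_glue (i := ⟨Set.inclusion hA, continuous_inclusion hA⟩)
    (j := ⟨Set.inclusion hB, continuous_inclusion hB⟩)
    (incl_open hA (isOpen_ne hcv 0) ?_) (incl_open hB (isOpen_ne hcv 1) ?_) ?_
    (acyc_star v) h ?_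
  · ext y
    exact ⟨fun h => ⟨hA h, h.2⟩, fun h => ⟨h.1.1, h.2⟩⟩
  · ext y
    refine ⟨fun h => ⟨hB h, h.2 v (Finset.mem_insert_self _ _)⟩, fun h => ⟨h.1.1, fun s hs => ?_⟩⟩
    rcases Finset.mem_insert.1 hs with rfl | hs
    · exact h.2
    · exact h.1.2 s hs
  · intro y
    by_cases hy : y.1 v = 0
    · right
      refine ⟨⟨y.1, y.2.1, fun s hs => ?_⟩, rfl⟩
      rcases Finset.mem_insert.1 hs with rfl | hs
      · rw [hy]; norm_num
      · exact y.2.2 s hs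
    · exact Or.inl ⟨⟨y.1, y.2.1, hy⟩, rfl⟩
  · intro a a' b b' hab hab' hj
    have e1 : a.1 = b.1 := congrArg Subtype.val hab
    have e2 : a'.1 = b'.1 := congrArg Subtype.val hab'
    obtain ⟨w, hw, hw0⟩ := real_other b.2.1 (b.2.2 v (Finset.mem_insert_self _ _))
    obtain ⟨w', hw', hw0'⟩ := real_other b'.2.1 (b'.2.2 v (Finset.mem_insert_self _ _))
    have hbv : b.1 v ≠ 0 := e1 ▸ a.2.2
    have hbv' : b'.1 v ≠ 0 := e2 ▸ a'.2.2
    obtain rfl := same_edge hv₀ (Finset.mem_insert_of_mem hS0) (Finset.mem_insert_self _ _) hvv hj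
      hw hw' hbv hw0 hbv' hw0'
    obtain ⟨p1, p2, p3, p4, p5⟩ := real_edge b.2.1 hw.symm hbv hw0
    obtain ⟨q1, q2, q3, q4, q5⟩ := real_edge b'.2.1 hw.symm hbv' hw0'
    have hmem : ∀ t : I, b.1 + (t : ℝ) • (b'.1 - b.1) ∈ graphRealization G := fun t =>
      line_mem p1 p2.le p3.le p4 p5 q2.le q3.le q4 q5 t.2.1 t.2.2
    have hpv : ∀ t : I, 0 < (b.1 + (t : ℝ) • (b'.1 - b.1)) v := fun t => by
      simp only [Pi.add_apply, Pi.smul_apply, Pi.sub_apply, smul_eq_mul]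
      exact cc_pos p2 q2 t.2.1 t.2.2
    have hpw : ∀ t : I, 0 < (b.1 + (t : ℝ) • (b'.1 - b.1)) w := fun t => by
      simp only [Pi.add_apply, Pi.smul_apply, Pi.sub_apply, smul_eq_mul]
      exact cc_pos p3 q3 t.2.1 t.2.2
    refine ⟨⟨fun t => ⟨b.1 + (t : ℝ) • (b'.1 - b.1), hmem t, (hpv t).ne'⟩, by fun_prop⟩,
      ⟨fun t => ⟨b.1 + (t : ℝ) • (b'.1 - b.1),
        mem_univ_of_edge (hmem t) hw.symm (hpv t).ne' (hpw t).ne' _⟩, by fun_prop⟩, ?_, ?_, ?_⟩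
    · ext t; rfl
    · apply Subtype.ext; simp [e1]
    · apply Subtype.ext; simp [e2]

/-- downward induction on finsets containing `v₀` -/
lemma down_ind {v₀ : Fin k} {P : Finset (Fin k) → Prop} (h0 : P Finset.univ)
    (hs : ∀ S v, v₀ ∈ S → v ∉ S → P (insert v S) → P S) : ∀ S, v₀ ∈ S → P S := by
  suffices H : ∀ n, ∀ S : Finset (Fin k), Sᶜ.card = n → v₀ ∈ S → P S from
    fun S hS => H _ S rfl hS
  intro n
  induction n with
  | zero =>
    intro S hS _
    rw [Finset.card_eq_zero, Finset.compl_eq_empty_iff] at hS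
    rw [hS]; exact h0
  | succ n ih =>
    intro S hS h
    obtain ⟨v, hv⟩ : Sᶜ.Nonempty := by rw [← Finset.card_pos, hS]; omega
    have hv' := Finset.mem_compl.1 hv
    refine hs S v h hv' (ih _ ?_ (Finset.mem_insert_of_mem h))
    rw [Finset.compl_insert, Finset.card_erase_of_mem hv, hS]; rfl

lemma acyc_GS {v₀ : Fin k}
    (hv₀ : ∀ (u : Fin k) (c : G.Walk u u), c.IsCycle → v₀ ∈ c.support)
    (S : Finset (Fin k)) (hS : v₀ ∈ S) : Acyc (GS G S) :=
  down_ind (P := fun S => Acyc (GS G S)) acyc_base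
    (fun _ _ h hv hP => acyc_step hv₀ h hv hP) S hS

end forest

section quot
variable {k : ℕ} {G : SimpleGraph (Fin k)}

/-- ordered pairs of distinct points -/
def DP (G : SimpleGraph (Fin k)) : Set ((Fin k → ℝ) × (Fin k → ℝ)) :=
  {p | p.1 ∈ graphRealization G ∧ p.2 ∈ graphRealization G ∧ p.1 ≠ p.2}

/-- pair to configuration -/
def toConf (p : DP G) : Conf 2 (graphRealization G) :=
  ⟨![⟨p.1.1, p.2.1⟩, ⟨p.1.2, p.2.2.1⟩], by
    have h := p.2.2.2
    intro a b hab
    fin_cases a <;> fin_cases b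
    · rfl
    · exact (h (congrArg Subtype.val hab)).elim
    · exact (h (congrArg Subtype.val hab).symm).elim
    · rfl⟩

/-- configuration to pair -/
def ofConf (f : Conf 2 (graphRealization G)) : DP G :=
  ⟨((f.1 0).1, (f.1 1).1), (f.1 0).2, (f.1 1).2, fun h => by
    have := f.2 (Subtype.ext h); simp at this⟩

def swapDP (p : DP G) : DP G := ⟨p.1.swap, p.2.2.1, p.2.1, p.2.2.2.symm⟩

lemma swap_cont : Continuous (swapDP (G := G)) := by
  unfold swapDP; fun_prop

lemma ofConf_cont : Continuous (ofConf (G := G)) := by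
  unfold ofConf
  refine Continuous.subtype_mk ?_ _
  exact (continuous_subtype_val.comp ((continuous_apply 0).comp continuous_subtype_val)).prodMk
    (continuous_subtype_val.comp ((continuous_apply 1).comp continuous_subtype_val))

lemma toConf_cont : Continuous (toConf (G := G)) := by
  unfold toConf
  refine Continuous.subtype_mk ?_ _
  refine continuous_pi fun n => ?_
  fin_cases n
  · exact Continuous.subtype_mk (by fun_prop) _
  · exact Continuous.subtype_mk (by fun_prop) _

lemma ofConf_toConf (p : DP G) : ofConf (toConf p) = p := rfl

lemma toConf_ofConf (f : Conf 2 (graphRealization G)) : toConf (ofConf f) = f := by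
  apply Subtype.ext
  funext n
  fin_cases n <;> rfl

/-- pair to unordered configuration -/
def mkq (p : DP G) : UConf 2 (graphRealization G) := Quotient.mk _ (toConf p)

lemma mkq_cont : Continuous (mkq (G := G)) := continuous_quotient_mk'.comp toConf_cont

lemma mkq_ofConf (f : Conf 2 (graphRealization G)) : mkq (ofConf f) = Quotient.mk _ f := by
  unfold mkq; rw [toConf_ofConf]

lemma mkq_surj (q : UConf 2 (graphRealization G)) : ∃ p : DP G, mkq p = q := by
  induction q using Quotient.inductionOn with
  | h f => exact ⟨ofConf f, mkq_ofConf f⟩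

lemma mkq_eq {p p' : DP G} : mkq p = mkq p' ↔ p = p' ∨ p = swapDP p' := by
  unfold mkq
  rw [Quotient.eq]
  constructor
  · rintro ⟨s, hs⟩
    have h0 : p.1.1 = ((toConf p').1 (s 0)).1 := congrArg Subtype.val (congrFun hs 0)
    have h1 : p.1.2 = ((toConf p').1 (s 1)).1 := congrArg Subtype.val (congrFun hs 1)
    have hne : s 0 ≠ s 1 := fun h => by have := s.injective h; simp at this
    have hcase : (s 0 = 0 ∧ s 1 = 1) ∨ (s 0 = 1 ∧ s 1 = 0) := by omega
    rcases hcase with ⟨e0, e1⟩ | ⟨e0, e1⟩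
    · left
      rw [e0] at h0; rw [e1] at h1
      exact Subtype.ext (Prod.ext h0 h1)
    · right
      rw [e0] at h0; rw [e1] at h1
      exact Subtype.ext (Prod.ext h0 h1)
  · rintro (rfl | rfl)
    · exact ⟨Equiv.refl _, rfl⟩
    · refine ⟨Equiv.swap 0 1, ?_⟩
      funext n
      fin_cases n <;> simp [toConf, swapDP]

lemma mkq_swap (p : DP G) : mkq (swapDP p) = mkq p := mkq_eq.2 (Or.inr rfl)

lemma mkq_open : IsOpenMap (mkq (G := G)) := by
  intro U hU
  rw [← isQuotientMap_quotient_mk'.isOpen_preimage]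
  have : Quotient.mk (confSetoid 2 (graphRealization G)) ⁻¹' (mkq '' U) =
      ofConf ⁻¹' U ∪ (fun f => swapDP (ofConf f)) ⁻¹' U := by
    ext f
    constructor
    · rintro ⟨p, hp, hpf⟩
      rw [← mkq_ofConf] at hpf
      rcases mkq_eq.1 hpf with rfl | rfl
      · exact Or.inl hp
      · exact Or.inr hp
    · rintro (h | h)
      · exact ⟨_, h, mkq_ofConf f⟩
      · exact ⟨_, h, (mkq_swap _).trans (mkq_ofConf f)⟩
  exact this ▸ (hU.preimage ofConf_cont).union (hU.preimage (swap_cont.comp ofConf_cont))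

/-- configurations avoiding `S` -/
def YS (G : SimpleGraph (Fin k)) (S : Finset (Fin k)) : Set (UConf 2 (graphRealization G)) :=
  mkq '' {p : DP G | ∀ s ∈ S, p.1.1 s ≠ 1 ∧ p.1.2 s ≠ 1}

lemma mkq_mem {S : Finset (Fin k)} {p : DP G} :
    mkq p ∈ YS G S ↔ ∀ s ∈ S, p.1.1 s ≠ 1 ∧ p.1.2 s ≠ 1 := by
  constructor
  · rintro ⟨p', hp', h⟩
    rcases mkq_eq.1 h with rfl | rfl
    · exact hp'
    · exact fun s hs => (hp' s hs).symm
  · exact fun h => ⟨p, h, rfl⟩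

lemma YS_open (S : Finset (Fin k)) : IsOpen (YS G S) := by
  refine mkq_open _ ?_
  have : {p : DP G | ∀ s ∈ S, p.1.1 s ≠ 1 ∧ p.1.2 s ≠ 1} =
      ⋂ s ∈ S, {p : DP G | p.1.1 s ≠ 1 ∧ p.1.2 s ≠ 1} := by ext; simp
  rw [this]
  refine isOpen_biInter_finset fun s _ => ?_
  exact (isOpen_ne (by fun_prop) 1).inter (isOpen_ne (by fun_prop) 1)

/-- the map of a set of ordered pairs to unordered configurations -/
def toY {S : Finset (Fin k)} {D : Set ((Fin k → ℝ) × (Fin k → ℝ))} (hD : D ⊆ DP G)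
    (hS : ∀ p ∈ D, ∀ s ∈ S, p.1 s ≠ 1 ∧ p.2 s ≠ 1) : C(D, YS G S) :=
  ⟨fun p => ⟨mkq ⟨p.1, hD p.2⟩, mkq_mem.2 (hS p.1 p.2)⟩,
    (mkq_cont.comp (by fun_prop)).subtype_mk _⟩

lemma toY_open {S : Finset (Fin k)} {D O : Set ((Fin k → ℝ) × (Fin k → ℝ))} (hD : D ⊆ DP G)
    (hS : ∀ p ∈ D, ∀ s ∈ S, p.1 s ≠ 1 ∧ p.2 s ≠ 1) (hO : IsOpen O) (hDO : D = DP G ∩ O)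
    (hsw : ∀ p ∈ D, p.swap ∉ D) : Topology.IsOpenEmbedding (toY hD hS) := by
  refine Topology.IsOpenEmbedding.of_comp _ (YS_open S).isOpenEmbedding_subtypeVal ?_
  refine Topology.IsOpenEmbedding.of_continuous_injective_isOpenMap
    (continuous_subtype_val.comp (toY hD hS).continuous) ?_ ?_
  · intro p p' h
    have h' : mkq ⟨p.1, hD p.2⟩ = mkq ⟨p'.1, hD p'.2⟩ := h
    rcases mkq_eq.1 h' with e | e
    · exact Subtype.ext (congrArg (fun x : DP G => x.1) e)
    · exfalso
      have e' : p.1 = p'.1.swap := congrArg Subtype.val e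
      exact hsw p'.1 p'.2 (e' ▸ p.2)
  · exact mkq_open.comp (incl_open hD hO hDO).isOpenMap

lemma Proj.of_equiv {Y Z : Type} [TopologicalSpace Y] [TopologicalSpace Z] (h : Proj Z)
    (e : Y ≃ₜ Z) : Proj Y := by
  intro K H _ _ p hp d
  obtain ⟨d', hd'⟩ := h K H p hp (d.pull (e.symm : C(Z, Y)))
  refine ⟨d'.pull (e : C(Y, Z)), fun γ => ?_⟩
  refine (hd' _).trans ?_
  change d.c _ = _
  congr 1
  ext t
  simp

end quot

section final
variable {k : ℕ} {G : SimpleGraph (Fin k)}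

/-- pairs whose first point is the strictly closest one to `v` -/
def SA (G : SimpleGraph (Fin k)) (S : Finset (Fin k)) (v : Fin k) :
    Set ((Fin k → ℝ) × (Fin k → ℝ)) :=
  {p | p.1 ∈ graphRealization G ∧ p.2 ∈ GS G S ∧ p.2 v < p.1 v}

def SC (G : SimpleGraph (Fin k)) (S : Finset (Fin k)) (v : Fin k) :
    Set ((Fin k → ℝ) × (Fin k → ℝ)) :=
  {p | p ∈ SA G S v ∧ p.1 v ≠ 1}

lemma SA_pos {S : Finset (Fin k)} {v : Fin k} {p : (Fin k → ℝ) × (Fin k → ℝ)}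
    (h : p ∈ SA G S v) : 0 < p.1 v :=
  lt_of_le_of_lt (real_nonneg h.2.1.1 v) h.2.2

lemma SA_snd {S : Finset (Fin k)} {v : Fin k} {p : (Fin k → ℝ) × (Fin k → ℝ)}
    (h : p ∈ SA G S v) : p.2 ∈ GS G (insert v S) := by
  refine ⟨h.2.1.1, fun s hs => ?_⟩
  rcases Finset.mem_insert.1 hs with rfl | hs
  · exact (lt_of_lt_of_le h.2.2 (real_le_one h.1 _)).ne
  · exact h.2.1.2 s hs

lemma GS_lt {S : Finset (Fin k)} {v : Fin k} {y : Fin k → ℝ} (h : y ∈ GS G (insert v S)) :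
    y v < 1 := lt_of_le_of_ne (real_le_one h.1 v) (h.2 v (Finset.mem_insert_self _ _))

lemma GS_sub {S : Finset (Fin k)} {v : Fin k} {y : Fin k → ℝ} (h : y ∈ GS G (insert v S)) :
    y ∈ GS G S := ⟨h.1, fun s hs => h.2 s (Finset.mem_insert_of_mem hs)⟩

lemma acyc_SA {S : Finset (Fin k)} {v : Fin k} (h : Acyc (GS G (insert v S))) :
    Acyc (SA G S v) := by
  by_cases hne : ∃ p, p ∈ SA G S v
  · obtain ⟨p, hp⟩ := hne
    have hev : (Pi.single v 1 : Fin k → ℝ) ∈ graphRealization G := by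
      have := star_line hp.1 (SA_pos hp).ne' (t := 1) (by norm_num) le_rfl
      simpa using this
    refine h.of_htpy ⟨fun p => ⟨p.1.2, SA_snd p.2⟩, by fun_prop⟩
      ⟨fun y => ⟨(Pi.single v 1, y.1), hev, GS_sub y.2, by simpa using GS_lt y.2⟩, by fun_prop⟩
      ⟨fun x => ⟨(x.2.1.1 + (x.1 : ℝ) • (Pi.single v 1 - x.2.1.1), x.2.1.2),
        star_line x.2.2.1 (SA_pos x.2.2).ne' x.1.2.1 x.1.2.2, x.2.2.2.1,
        lt_of_lt_of_le x.2.2.2.2 (star_line_ge x.2.2.1 x.1.2.1)⟩, by fun_prop⟩ ?_ ?_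
    · intro y; apply Subtype.ext; simp
    · intro y; apply Subtype.ext; simp
  · exact Acyc.of_empty fun p => hne ⟨p.1, p.2⟩

/-- intermediate point -/
noncomputable def mid (v w : Fin k) (y : Fin k → ℝ) : Fin k → ℝ :=
  Pi.single v ((1 + y v) / 2) + Pi.single w ((1 - y v) / 2)

lemma mid_cont (v w : Fin k) : Continuous (mid v w) := by
  unfold mid
  refine continuous_pi fun m => ?_
  simp only [Pi.add_apply, Pi.single_apply]
  refine Continuous.add ?_ ?_
  · split_ifs <;> fun_prop
  · split_ifs <;> fun_prop

lemma acyc_SC {S : Finset (Fin k)} {v : Fin k} (h : Acyc (GS G (insert v S))) :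
    Acyc (SC G S v) := by
  refine Acyc.of_fib_set (fun p m => p.1 m ≠ 0) ?_ ?_
  · intro γ t
    funext m
    refine propext (supp_const (G := G) (f := fun x : SC G S v => x.1.1) (by fun_prop)
      (fun x => ?_) (joined_path γ t) m)
    obtain ⟨w, hw, hw0⟩ := real_other x.2.1.1 x.2.2
    exact mem_univ_of_edge x.2.1.1 hw.symm (SA_pos x.2.1).ne' hw0 _
  · intro κ
    by_cases hne : ∃ p : (Fin k → ℝ) × (Fin k → ℝ), p ∈ SC G S v ∧ (fun m => p.1 m ≠ 0) = κ
    · obtain ⟨p, hp, rfl⟩ := hne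
      obtain ⟨w, hw, hw0⟩ := real_other hp.1.1 hp.2
      obtain ⟨p1, p2, p3, p4, p5⟩ := real_edge hp.1.1 hw.symm (SA_pos hp.1).ne' hw0
      have mv : ∀ y, mid v w y v = (1 + y v) / 2 := fun y => by simp [mid, hw.symm]
      have mw : ∀ y, mid v w y w = (1 - y v) / 2 := fun y => by simp [mid, hw]
      have mm : ∀ y m, m ≠ v → m ≠ w → mid v w y m = 0 := fun y m h1 h2 => by
        simp [mid, h1, h2]
      -- the criterion
      have crit : ∀ x y : Fin k → ℝ, x ∈ graphRealization G → y ∈ GS G S → y v < x v →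
          0 < x w → (x, y) ∈ {q : (Fin k → ℝ) × (Fin k → ℝ) | q ∈ SC G S v ∧
            (fun m => q.1 m ≠ 0) = fun m => p.1 m ≠ 0} := by
        intro x y h1 h2 h3 h4
        have h0 : 0 < x v := lt_of_le_of_lt (real_nonneg h2.1 v) h3
        obtain ⟨_, _, _, _, x5⟩ := real_edge h1 hw.symm h0.ne' h4.ne'
        refine ⟨⟨⟨h1, h2, h3⟩, fun e => h4.ne' (real_one h1 hw.symm e)⟩, ?_⟩
        funext m
        by_cases e1 : m = v
        · subst e1; simp only [eq_iff_iff]; exact ⟨fun _ => p2.ne', fun _ => h0.ne'⟩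
        · by_cases e2 : m = w
          · subst e2; simp only [eq_iff_iff]; exact ⟨fun _ => hw0, fun _ => h4.ne'⟩
          · change (x m ≠ 0) = (p.1 m ≠ 0)
            rw [x5 m e1 e2, p5 m e1 e2]
      refine h.of_htpy ⟨fun q => ⟨q.1.2, SA_snd q.2.1.1⟩, by fun_prop⟩
        ⟨fun y => ⟨(mid v w y.1, y.1), ?_⟩, ?_⟩
        ⟨fun x => ⟨(x.2.1.1 + (x.1 : ℝ) • (mid v w x.2.1.2 - x.2.1.1), x.2.1.2), ?_⟩, ?_⟩ ?_ ?_
      · have y1 := GS_lt y.2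
        have y0 := real_nonneg y.2.1 v
        refine crit _ _ (mem_of_edge p1 ?_ ?_ ?_ (mm _)) (GS_sub y.2) ?_ ?_
        · rw [mv]; linarith
        · rw [mw]; linarith
        · rw [mv, mw]; ring
        · rw [mv]; linarith
        · rw [mw]; linarith
      · have := mid_cont v w
        fun_prop
      · obtain ⟨t, ⟨⟨x, y⟩, hx, hxk⟩⟩ := x
        have xv : 0 < x v := SA_pos hx.1
        have xw : x w ≠ 0 := (congrFun hxk w).mpr hw0
        have y1 := GS_lt (SA_snd hx.1)
        have y0 := real_nonneg hx.1.2.1.1 v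
        have yx : y v < x v := hx.1.2.2
        change y v < 1 at y1
        change 0 ≤ y v at y0
        obtain ⟨_, x2, x3, x4, x5⟩ := real_edge hx.1.1 hw.symm xv.ne' xw
        refine crit _ _ (line_mem p1 x2.le x3.le x4 x5 ?_ ?_ ?_ (mm _) t.2.1 t.2.2) hx.1.2.1 ?_ ?_
        · rw [mv]; linarith
        · rw [mw]; linarith
        · rw [mv, mw]; ring
        · simp only [Pi.add_apply, Pi.smul_apply, Pi.sub_apply, smul_eq_mul, mv]
          have := cc_pos (a := x v - y v) (b := (1 + y v) / 2 - y v) (t := t) (by linarith)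
            (by linarith) t.2.1 t.2.2
          linarith
        · simp only [Pi.add_apply, Pi.smul_apply, Pi.sub_apply, smul_eq_mul, mw]
          exact cc_pos x3 (by linarith) t.2.1 t.2.2
      · have := mid_cont v w
        fun_prop
      · intro y; apply Subtype.ext; simp
      · intro y; apply Subtype.ext; simp
    · exact Acyc.of_empty fun y => hne ⟨y.1, y.2⟩

lemma eq_of_one {x y : Fin k → ℝ} (hx : x ∈ graphRealization G) (hy : y ∈ graphRealization G)
    {v : Fin k} (h1 : x v = 1) (h2 : y v = 1) : x = y := by
  funext m
  by_cases e : m = v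
  · rw [e, h1, h2]
  · rw [real_one hx (Ne.symm e) h1, real_one hy (Ne.symm e) h2]

lemma proj_step {S : Finset (Fin k)} {v : Fin k} (hv : v ∉ S) (h : Acyc (GS G (insert v S)))
    (hP : Proj (YS G (insert v S))) : Proj (YS G S) := by
  have hA : SA G S v ⊆ DP G := fun p hp => ⟨hp.1, hp.2.1.1, fun e => by
    have := hp.2.2; rw [e] at this; exact lt_irrefl _ this⟩
  have hAS : ∀ p ∈ SA G S v, ∀ s ∈ S, p.1 s ≠ 1 ∧ p.2 s ≠ 1 := fun p hp s hs =>
    ⟨fun e => (SA_pos hp).ne' (real_one hp.1 (fun e' => hv (e' ▸ hs)) e), hp.2.1.2 s hs⟩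
  have hCA : SC G S v ⊆ SA G S v := fun p hp => hp.1
  have hCS : ∀ p ∈ SC G S v, ∀ s ∈ insert v S, p.1 s ≠ 1 ∧ p.2 s ≠ 1 := fun p hp s hs => by
    refine ⟨?_, (SA_snd hp.1).2 s hs⟩
    rcases Finset.mem_insert.1 hs with rfl | hs
    · exact hp.2
    · exact (hAS p hp.1 s hs).1
  have hY : YS G (insert v S) ⊆ YS G S := by
    rintro _ ⟨p, hp, rfl⟩
    exact ⟨p, fun s hs => hp s (Finset.mem_insert_of_mem hs), rfl⟩
  have hO : IsOpen {p : (Fin k → ℝ) × (Fin k → ℝ) | (∀ s ∈ S, p.2 s ≠ 1) ∧ p.2 v < p.1 v} := by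
    refine IsOpen.inter (s := {p : (Fin k → ℝ) × (Fin k → ℝ) | ∀ s ∈ S, p.2 s ≠ 1})
      (t := {p : (Fin k → ℝ) × (Fin k → ℝ) | p.2 v < p.1 v}) ?_
      (isOpen_lt (by fun_prop) (by fun_prop))
    have : {p : (Fin k → ℝ) × (Fin k → ℝ) | ∀ s ∈ S, p.2 s ≠ 1} =
      ⋂ s ∈ S, {p : (Fin k → ℝ) × (Fin k → ℝ) | p.2 s ≠ 1} := by ext; simp
    rw [this]
    exact isOpen_biInter_finset fun s _ => isOpen_ne (by fun_prop) 1
  refine proj_glue (i := toY hA hAS) (j := ⟨Set.inclusion hY, continuous_inclusion hY⟩)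
    (toY_open hA hAS hO ?_ ?_)
    (incl_open hY (YS_open _) (Set.inter_eq_self_of_subset_right hY).symm) ?_
    (l := ⟨Set.inclusion hCA, continuous_inclusion hCA⟩) (m := toY (hCA.trans hA) hCS)
    (Topology.IsEmbedding.inclusion hCA) (fun _ => rfl) ?_ (acyc_SA h).proj hP (acyc_SC h)
  · ext p
    exact ⟨fun hp => ⟨hA hp, hp.2.1.2, hp.2.2⟩, fun hp => ⟨hp.1.1, ⟨hp.1.2.1, hp.2.1⟩, hp.2.2⟩⟩
  · exact fun p hp hp' => lt_asymm hp.2.2 hp'.2.2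
  · rintro ⟨q, hq⟩
    obtain ⟨p, rfl⟩ := mkq_surj q
    have hp := mkq_mem.1 hq
    by_cases h1 : p.1.1 v = 1
    · left
      refine ⟨⟨p.1, p.2.1, ⟨p.2.2.1, fun s hs => (hp s hs).2⟩, ?_⟩, rfl⟩
      rw [h1]
      exact lt_of_le_of_ne (real_le_one p.2.2.1 v)
        (fun h2 => p.2.2.2 (eq_of_one p.2.1 p.2.2.1 h1 h2))
    · by_cases h2 : p.1.2 v = 1
      · left
        refine ⟨⟨(swapDP p).1, p.2.2.1, ⟨p.2.1, fun s hs => (hp s hs).1⟩, ?_⟩,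
          Subtype.ext (mkq_swap p)⟩
        change p.1.1 v < p.1.2 v
        rw [h2]
        exact lt_of_le_of_ne (real_le_one p.2.1 v) h1
      · right
        refine ⟨⟨mkq p, mkq_mem.2 fun s hs => ?_⟩, rfl⟩
        rcases Finset.mem_insert.1 hs with rfl | hs
        · exact ⟨h1, h2⟩
        · exact hp s hs
  · rintro ⟨p, hp⟩ ⟨q, hq⟩ hpq
    have e : mkq ⟨p, hA hp⟩ = q := congrArg Subtype.val hpq
    rw [← e] at hq
    exact ⟨⟨p, hp, (mkq_mem.1 hq v (Finset.mem_insert_self _ _)).1⟩, rfl⟩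

/-- being inside the edge `e` -/
def EE (e : Fin k × Fin k) (x : Fin k → ℝ) : Prop := e.1 < e.2 ∧ x e.1 ≠ 0 ∧ x e.2 ≠ 0

lemma EE_ex {x : Fin k → ℝ} (h : x ∈ GS G Finset.univ) : ∃ e, EE e x := by
  obtain ⟨i, hi⟩ := real_nz h.1
  obtain ⟨j, hji, hj⟩ := real_other h.1 (h.2 i (Finset.mem_univ _))
  rcases lt_or_gt_of_ne hji with hl | hl
  · exact ⟨(j, i), hl, hj, hi⟩
  · exact ⟨(i, j), hl, hi, hj⟩

lemma EE_supp {x : Fin k → ℝ} (h : x ∈ graphRealization G) {e : Fin k × Fin k} (he : EE e x)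
    (m : Fin k) : x m ≠ 0 ↔ m = e.1 ∨ m = e.2 := by
  have := (real_edge h he.1.ne he.2.1 he.2.2).2.2.2.2 m
  constructor
  · intro hm
    by_contra hc
    push Not at hc
    exact hm (this hc.1 hc.2)
  · rintro (rfl | rfl)
    · exact he.2.1
    · exact he.2.2

lemma EE_unique {x : Fin k → ℝ} (h : x ∈ graphRealization G) {e e' : Fin k × Fin k}
    (he : EE e x) (he' : EE e' x) : e = e' := by
  have h1 := (EE_supp h he e'.1).1 he'.2.1
  have h2 := (EE_supp h he e'.2).1 he'.2.2
  have l1 := he.1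
  have l2 := he'.1
  rcases h1 with h1 | h1 <;> rcases h2 with h2 | h2
  · rw [h1, h2] at l2; exact (lt_irrefl _ l2).elim
  · exact Prod.ext h1.symm h2.symm
  · rw [h1, h2] at l2; exact (lt_asymm l1 l2).elim
  · rw [h1, h2] at l2; exact (lt_irrefl _ l2).elim

lemma EE_eq {x y : Fin k → ℝ} (hx : x ∈ graphRealization G) (hy : y ∈ graphRealization G)
    {e : Fin k × Fin k} (he : EE e x) (he' : EE e y) (h : x e.1 = y e.1) : x = y := by
  obtain ⟨_, _, _, x4, x5⟩ := real_edge hx he.1.ne he.2.1 he.2.2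
  obtain ⟨_, _, _, y4, y5⟩ := real_edge hy he.1.ne he'.2.1 he'.2.2
  funext m
  by_cases e1 : m = e.1
  · rw [e1, h]
  · by_cases e2 : m = e.2
    · rw [e2]; linarith
    · rw [x5 m e1 e2, y5 m e1 e2]

lemma EE_line {x y : Fin k → ℝ} (hx : x ∈ graphRealization G) (hy : y ∈ graphRealization G)
    {e : Fin k × Fin k} (he : EE e x) (he' : EE e y) {t : ℝ} (h0 : 0 ≤ t) (h1 : t ≤ 1) :
    x + t • (y - x) ∈ graphRealization G ∧ EE e (x + t • (y - x)) := by
  obtain ⟨x1, x2, x3, x4, x5⟩ := real_edge hx he.1.ne he.2.1 he.2.2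
  obtain ⟨_, y2, y3, y4, y5⟩ := real_edge hy he.1.ne he'.2.1 he'.2.2
  refine ⟨line_mem x1 x2.le x3.le x4 x5 y2.le y3.le y4 y5 h0 h1, he.1, ?_, ?_⟩
  · exact (cc_pos x2 y2 h0 h1).ne'
  · exact (cc_pos x3 y3 h0 h1).ne'

/-- order on pairs of points in open edges -/
def LO (k : ℕ) (e e' : Fin k × Fin k) (p : (Fin k → ℝ) × (Fin k → ℝ)) : Prop :=
  EE e p.1 ∧ EE e' p.2 ∧ (finProdFinEquiv e < finProdFinEquiv e' ∨ e = e' ∧ p.1 e.1 < p.2 e.1)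

def LL (G : SimpleGraph (Fin k)) : Set ((Fin k → ℝ) × (Fin k → ℝ)) :=
  {p | p.1 ∈ graphRealization G ∧ p.2 ∈ graphRealization G ∧ ∃ e e', LO k e e' p}

lemma LO_open (e e' : Fin k × Fin k) : IsOpen {p | LO k e e' p} := by
  have hE : ∀ e : Fin k × Fin k, ∀ f : (Fin k → ℝ) × (Fin k → ℝ) → Fin k → ℝ, Continuous f →
      IsOpen {p | EE e (f p)} := fun e f hf =>
    isOpen_const.inter ((isOpen_ne ((continuous_apply _).comp hf) 0).inter
      (isOpen_ne ((continuous_apply _).comp hf) 0))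
  refine (hE e _ continuous_fst).inter ((hE e' _ continuous_snd).inter ?_)
  exact isOpen_const.union (isOpen_const.inter (isOpen_lt
    ((continuous_apply e.1).comp continuous_fst) ((continuous_apply e.1).comp continuous_snd)))

lemma EE_GS {x : Fin k → ℝ} (h : x ∈ graphRealization G) {e : Fin k × Fin k} (he : EE e x) :
    x ∈ GS G Finset.univ := mem_univ_of_edge h he.1.ne he.2.1 he.2.2 _

lemma acyc_LL : Acyc (LL G) := by
  refine Acyc.of_fib_set (fun p => ((fun m => p.1 m ≠ 0), (fun m => p.2 m ≠ 0))) ?_ ?_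
  · intro γ t
    refine Prod.ext ?_ ?_
    · funext m
      refine propext (supp_const (G := G) (f := fun x : LL G => x.1.1) (by fun_prop)
        (fun x => ?_) (joined_path γ t) m)
      obtain ⟨h1, h2, e, e', h3, h4, h5⟩ := x.2
      exact EE_GS h1 h3
    · funext m
      refine propext (supp_const (G := G) (f := fun x : LL G => x.1.2) (by fun_prop)
        (fun x => ?_) (joined_path γ t) m)
      obtain ⟨h1, h2, e, e', h3, h4, h5⟩ := x.2
      exact EE_GS h2 h4
  · intro κ
    by_cases hne : ∃ p : (Fin k → ℝ) × (Fin k → ℝ), p ∈ LL G ∧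
        ((fun m => p.1 m ≠ 0), (fun m => p.2 m ≠ 0)) = κ
    · obtain ⟨p, hp, rfl⟩ := hne
      obtain ⟨h1, h2, e, e', h3, h4, h5⟩ := hp
      refine Acyc.of_star (p := p) ?_
      rintro q ⟨⟨g1, g2, d, d', g3, g4, g5⟩, hq⟩ t ht0 ht1
      have k1 : EE e q.1 := ⟨h3.1, (congrFun (congrArg Prod.fst hq) e.1).mpr h3.2.1,
        (congrFun (congrArg Prod.fst hq) e.2).mpr h3.2.2⟩
      have k2 : EE e' q.2 := ⟨h4.1, (congrFun (congrArg Prod.snd hq) e'.1).mpr h4.2.1,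
        (congrFun (congrArg Prod.snd hq) e'.2).mpr h4.2.2⟩
      obtain rfl := EE_unique g1 k1 g3
      obtain rfl := EE_unique g2 k2 g4
      obtain ⟨m1, n1⟩ := EE_line g1 h1 k1 h3 ht0 ht1
      obtain ⟨m2, n2⟩ := EE_line g2 h2 k2 h4 ht0 ht1
      refine ⟨⟨m1, m2, e, e', n1, n2, ?_⟩, ?_⟩
      · rcases h5 with h5 | ⟨h5, h6⟩
        · exact Or.inl h5
        · rcases g5 with g5 | ⟨_, g6⟩
          · exact Or.inl g5
          · refine Or.inr ⟨h5, ?_⟩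
            have := cc_pos (sub_pos.2 g6) (sub_pos.2 h6) ht0 ht1
            simp only [Prod.fst_add, Prod.smul_fst, Prod.fst_sub, Prod.snd_add, Prod.smul_snd,
              Prod.snd_sub, Pi.add_apply, Pi.smul_apply, Pi.sub_apply, smul_eq_mul]
            linarith
      · refine Prod.ext ?_ ?_
        · funext m
          exact propext ((EE_supp m1 n1 m).trans (EE_supp h1 h3 m).symm)
        · funext m
          exact propext ((EE_supp m2 n2 m).trans (EE_supp h2 h4 m).symm)
    · exact Acyc.of_empty fun y => hne ⟨y.1, y.2⟩

lemma acyc_YS_univ : Acyc (YS G Finset.univ) := by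
  have hD : LL G ⊆ DP G := by
    rintro p ⟨h1, h2, e, e', h3, h4, h5⟩
    refine ⟨h1, h2, fun h => ?_⟩
    rw [← h] at h4 h5
    obtain rfl := EE_unique h1 h3 h4
    rcases h5 with h5 | h5
    · exact lt_irrefl _ h5
    · exact lt_irrefl _ h5.2
  have hS : ∀ p ∈ LL G, ∀ s ∈ Finset.univ, p.1 s ≠ 1 ∧ p.2 s ≠ 1 := by
    rintro p ⟨h1, h2, e, e', h3, h4, h5⟩ s hs
    exact ⟨(EE_GS h1 h3).2 s hs, (EE_GS h2 h4).2 s hs⟩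
  have hemb : Topology.IsOpenEmbedding (toY hD hS) := by
    refine toY_open hD hS (O := ⋃ e, ⋃ e', {p | LO k e e' p})
      (isOpen_iUnion fun e => isOpen_iUnion fun e' => LO_open e e') ?_ ?_
    · ext p
      simp only [Set.mem_inter_iff, Set.mem_iUnion]
      exact ⟨fun h => ⟨hD h, h.2.2⟩, fun h => ⟨h.1.1, h.1.2.1, h.2⟩⟩
    · rintro p ⟨h1, h2, e, e', h3, h4, h5⟩ ⟨-, -, d, d', g3, g4, g5⟩
      obtain rfl := EE_unique h1 h3 g4
      obtain rfl := EE_unique h2 h4 g3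
      rcases h5 with h5 | ⟨h5, h6⟩ <;> rcases g5 with g5 | ⟨g5, g6⟩
      · exact lt_asymm h5 g5
      · rw [g5] at h5; exact lt_irrefl _ h5
      · rw [h5] at g5; exact lt_irrefl _ g5
      · subst h5; exact lt_asymm h6 g6
  have hsurj : Function.Surjective (toY hD hS) := by
    rintro ⟨q, hq⟩
    obtain ⟨p, rfl⟩ := mkq_surj q
    have hp := mkq_mem.1 hq
    obtain ⟨e, he⟩ := EE_ex (G := G) ⟨p.2.1, fun s hs => (hp s hs).1⟩
    obtain ⟨e', he'⟩ := EE_ex (G := G) ⟨p.2.2.1, fun s hs => (hp s hs).2⟩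
    have hcase : LO k e e' p.1 ∨ LO k e' e p.1.swap := by
      rcases lt_trichotomy (finProdFinEquiv e) (finProdFinEquiv e') with hl | hl | hl
      · exact Or.inl ⟨he, he', Or.inl hl⟩
      · obtain rfl := finProdFinEquiv.injective hl
        rcases lt_trichotomy (p.1.1 e.1) (p.1.2 e.1) with hm | hm | hm
        · exact Or.inl ⟨he, he', Or.inr ⟨rfl, hm⟩⟩
        · exact (p.2.2.2 (EE_eq p.2.1 p.2.2.1 he he' hm)).elim
        · exact Or.inr ⟨he', he, Or.inr ⟨rfl, hm⟩⟩
      · exact Or.inr ⟨he', he, Or.inl hl⟩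
    rcases hcase with h | h
    · exact ⟨⟨p.1, p.2.1, p.2.2.1, e, e', h⟩, rfl⟩
    · exact ⟨⟨p.1.swap, p.2.2.1, p.2.1, e', e, h⟩, Subtype.ext (mkq_swap p)⟩
  exact acyc_LL.of_equiv (hemb.isEmbedding.toHomeomorphOfSurjective hsurj).symm

theorem main {v₀ : Fin k}
    (hv₀ : ∀ (u : Fin k) (c : G.Walk u u), c.IsCycle → v₀ ∈ c.support) :
    Proj (UConf 2 (graphRealization G)) := by
  have h1 : ∀ S, v₀ ∈ S → Proj (YS G S) :=
    down_ind (P := fun S => Proj (YS G S)) acyc_YS_univ.proj fun S v h hv hP =>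
      proj_step hv (acyc_GS hv₀ _ (Finset.mem_insert_of_mem h)) hP
  have h2 : Proj (YS G ∅) := proj_step (v := v₀) (Finset.notMem_empty _)
    (acyc_GS hv₀ _ (Finset.mem_insert_self _ _)) (h1 _ (Finset.mem_insert_self _ _))
  have h3 : YS G ∅ = Set.univ := by
    ext q
    obtain ⟨p, rfl⟩ := mkq_surj q
    simp [mkq_mem]
  rw [h3] at h2
  exact h2.of_equiv (Homeomorph.Set.univ _).symm

end final

end all
end GB

/-- If some vertex `v₀` of a finite connected graph `G` (with at least one edge) lies on
every simple loop of `G`, then the 2-strand graph braid group `B₂(|G|)` is free. -/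
theorem braid_group_two_free_of_vertex_on_every_cycle {k : ℕ}
    (G : SimpleGraph (Fin k)) (hconn : G.Connected) (hedge : G.edgeSet.Nonempty)
    (v₀ : Fin k) (hv₀ : ∀ (u : Fin k) (c : G.Walk u u), c.IsCycle → v₀ ∈ c.support)
    (x : UConf 2 (graphRealization G)) :
    IsFreeGroup (FundamentalGroup (UConf 2 (graphRealization G)) x) := by
  exact GB.isFree_of_proj (GB.main hv₀) x
end
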